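/- arXiv:2211.11023 — 2 statements merged into one kernel-verified Lean document; each statement's English description precedes it below -/
import Mathlib

section
/- For every ε > 0 there exists C > 0 such that for every prime power q and all integers n ≥ m ≥ (2+ε)·(log n)/(log q), writing u = n/m, one has | log p_{n,m,q} − log ρ( n/m − n/(2m²) ) | ≤ C·( u·(log(u+1))²/m² + 1/u ). -/
open Real

noncomputable section

/-- Predicate characterizing the Dickman function `ρ : [0,∞) → (0,∞)`:
continuous on `[0,∞)`, positive, equal to `1` on `[0,1]`, and satisfying the
delay differential equation `t·ρ'(t) + ρ(t-1) = 0` for `t > 1`. -/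
def IsDickman (ρ : ℝ → ℝ) : Prop :=
  ContinuousOn ρ (Set.Ici 0) ∧
  (∀ t : ℝ, 0 ≤ t → 0 < ρ t) ∧
  (∀ t ∈ Set.Icc (0:ℝ) 1, ρ t = 1) ∧
  (∀ t : ℝ, 1 < t → HasDerivAt ρ (-(ρ (t - 1)) / t) t)

/-- `ξ(u)`: for `u > 1`, the unique positive solution of `e^ξ = 1 + u·ξ`; otherwise `0`. -/
def xi (u : ℝ) : ℝ :=
  open Classical in
  if h : ∃ x : ℝ, 0 < x ∧ Real.exp x = 1 + u * x then h.choose else 0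

/-- `p_{n,m}`: probability that a uniformly random permutation of `{1,…,n}` is `m`-friable,
i.e. has no cycle of length greater than `m`. -/
def permProb (n m : ℕ) : ℝ :=
  (Nat.card {σ : Equiv.Perm (Fin n) // ∀ c ∈ σ.cycleType, c ≤ m} : ℝ) /
    (Nat.factorial n : ℝ)

/-- `p_{n,m,q}`: proportion of monic polynomials of degree `n` over a finite field `F`
(of cardinality `q`) that are `m`-friable, i.e. all of whose monic irreducible factors
have degree at most `m`. -/
def polyProb (F : Type) [Field F] [Fintype F] (n m : ℕ) : ℝ :=
  (Nat.card {f : Polynomial F // f.Monic ∧ f.natDegree = n ∧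
      ∀ p : Polynomial F, p.Monic → Irreducible p → p ∣ f → p.natDegree ≤ m} : ℝ) /
    (Fintype.card F : ℝ) ^ n

/-- `F_q(z) = ∏_{deg P ≤ m} (1 - (z/q)^{deg P})⁻¹`, the product over monic irreducible
polynomials `P` over `F` of degree at most `m`. -/
def FqFun (F : Type) [Field F] [Fintype F] (m : ℕ) (z : ℝ) : ℝ :=
  ∏ᶠ p ∈ {p : Polynomial F | p.Monic ∧ Irreducible p ∧ p.natDegree ≤ m},
    (1 - (z / (Fintype.card F : ℝ)) ^ p.natDegree)⁻¹

/-- `G_q(z) = F_q(z) · exp(-∑_{i=1}^m z^i/i)`. -/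
def Gq (F : Type) [Field F] [Fintype F] (m : ℕ) (z : ℝ) : ℝ :=
  FqFun F m z * Real.exp (-(∑ i ∈ Finset.Icc 1 m, z ^ i / (i : ℝ)))

/-- The coefficients `d_{m,i}`. -/
def dcoef (m i : ℕ) : ℝ :=
  if i = m then -(1 / (m : ℝ)) * ∑ j ∈ Finset.Icc 2 m, (1 : ℝ) / (j : ℝ)
  else Real.Gamma ((i : ℝ) + (i : ℝ) / (m : ℝ)) /
    (((m : ℝ) - (i : ℝ)) * (Nat.factorial i : ℝ) * Real.Gamma (1 + (i : ℝ) / (m : ℝ)))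

/-- `T(s) = ∫₀^s ((e^t - 1)/t)·((t/m)/(1 - e^{-t/m}) - 1) dt`, integrand extended by `0` at `t = 0`. -/
def Tfun (m : ℕ) (s : ℝ) : ℝ :=
  ∫ t in (0:ℝ)..s,
    if t = 0 then 0 else
      ((Real.exp t - 1) / t) * ((t / (m : ℝ)) / (1 - Real.exp (-t / (m : ℝ))) - 1)

end

/-! ### Part 1: counting friable polynomials -/

section PolyCount

open Polynomial Classical

variable {F : Type} [Field F] [Fintype F]

theorem monicSet_finite (n : ℕ) : {f : F[X] | f.Monic ∧ f.natDegree = n}.Finite := by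
  have e := (monicEquivDegreeLT (R := F) n).trans (degreeLTEquiv F n).toEquiv
  refine Set.finite_coe_iff.1 (Finite.of_injective
    (fun x : {f : F[X] | f.Monic ∧ f.natDegree = n} => e ⟨x.1, x.2⟩) ?_)
  intro x y h
  have := congrArg Subtype.val (e.injective h)
  exact Subtype.ext this

theorem monicSet_card (n : ℕ) :
    Nat.card {f : F[X] // f.Monic ∧ f.natDegree = n} = Fintype.card F ^ n := by
  have e := (monicEquivDegreeLT (R := F) n).trans (degreeLTEquiv F n).toEquiv
  rw [Nat.card_congr e]
  simp

/-- The finset of monic polynomials of degree `n`, all of whose irreducible factors have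
degree at most `m`. -/
noncomputable def friFin (F : Type) [Field F] [Fintype F] (n m : ℕ) : Finset F[X] :=
  (monicSet_finite (F := F) n).toFinset.filter
    (fun f => ∀ p : F[X], p.Monic → Irreducible p → p ∣ f → p.natDegree ≤ m)

theorem mem_friFin {n m : ℕ} {f : F[X]} : f ∈ friFin F n m ↔
    f.Monic ∧ f.natDegree = n ∧
      ∀ p : F[X], p.Monic → Irreducible p → p ∣ f → p.natDegree ≤ m := by
  simp [friFin, and_assoc]

theorem irrSet_finite (m : ℕ) :
    {f : F[X] | f.Monic ∧ Irreducible f ∧ f.natDegree ≤ m}.Finite := by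
  have : {f : F[X] | f.Monic ∧ Irreducible f ∧ f.natDegree ≤ m} ⊆
      ⋃ n ∈ Finset.range (m + 1), {f : F[X] | f.Monic ∧ f.natDegree = n} := by
    rintro f ⟨h1, h2, h3⟩
    simp only [Set.mem_iUnion]
    exact ⟨f.natDegree, by simp; omega, h1, rfl⟩
  refine Set.Finite.subset ?_ this
  exact Set.Finite.biUnion (Finset.finite_toSet _) (fun n _ => monicSet_finite n)

/-- The finset of monic irreducible polynomials of degree at most `m`. -/
noncomputable def irrFin (F : Type) [Field F] [Fintype F] (m : ℕ) : Finset F[X] :=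
  (irrSet_finite (F := F) m).toFinset

theorem mem_irrFin {m : ℕ} {f : F[X]} : f ∈ irrFin F m ↔
    f.Monic ∧ Irreducible f ∧ f.natDegree ≤ m := by
  simp [irrFin]

theorem polyProb_eq (n m : ℕ) :
    polyProb F n m = ((friFin F n m).card : ℝ) / (Fintype.card F : ℝ) ^ n := by
  unfold polyProb
  congr 2
  exact_mod_cast Nat.subtype_card (friFin F n m) (fun f => mem_friFin)

theorem natDegree_eq_sum_irr {n m : ℕ} {f : F[X]} (hf : f ∈ friFin F n m) :
    n = ∑ P ∈ irrFin F m, ∑ k ∈ Finset.Icc 1 n, if P ^ k ∣ f then P.natDegree else 0 := by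
  obtain ⟨h1, h2, h3⟩ := mem_friFin.1 hf
  have hf0 : f ≠ 0 := h1.ne_zero
  set s := UniqueFactorizationMonoid.normalizedFactors f with hs
  have hmon : ∀ p ∈ s, p.Monic := fun p hp => by
    have := UniqueFactorizationMonoid.normalize_normalized_factor p hp
    rw [← this]
    exact monic_normalize (UniqueFactorizationMonoid.irreducible_of_normalized_factor p hp).ne_zero
  have e1 : n = ∑ P ∈ s.toFinset, s.count P * P.natDegree := by
    rw [← h2, ← h1.normalize_eq_self, ← UniqueFactorizationMonoid.prod_normalizedFactors_eq hf0,
      natDegree_multiset_prod_of_monic _ hmon, Finset.sum_multiset_map_count]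
    simp [hs]
  have hsub : s.toFinset ⊆ irrFin F m := by
    intro p hp
    rw [Multiset.mem_toFinset] at hp
    have hi := UniqueFactorizationMonoid.irreducible_of_normalized_factor p hp
    exact mem_irrFin.2 ⟨hmon p hp, hi,
      h3 p (hmon p hp) hi (UniqueFactorizationMonoid.dvd_of_mem_normalizedFactors hp)⟩
  have e2 : n = ∑ P ∈ irrFin F m, s.count P * P.natDegree := by
    rw [← Finset.sum_subset hsub]
    · exact e1
    · intro p _ hp
      rw [Multiset.mem_toFinset] at hp
      rw [Multiset.count_eq_zero_of_notMem hp, zero_mul]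
  conv_lhs => rw [e2]
  refine Finset.sum_congr rfl fun P hP => ?_
  obtain ⟨hP1, hP2, hP3⟩ := mem_irrFin.1 hP
  have hdvd : ∀ k, P ^ k ∣ f ↔ k ≤ s.count P := by
    intro k
    rw [pow_dvd_iff_le_emultiplicity,
      UniqueFactorizationMonoid.emultiplicity_eq_count_normalizedFactors hP2 hf0,
      hP1.normalize_eq_self]
    exact Nat.cast_le
  have hle : s.count P ≤ n := by
    have := natDegree_le_of_dvd ((hdvd _).2 le_rfl) hf0
    rw [natDegree_pow, h2] at this
    have h0 := hP2.natDegree_pos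
    nlinarith
  simp only [hdvd]
  rw [← Finset.sum_filter, Finset.sum_const, smul_eq_mul]
  congr 1
  have : (Finset.Icc 1 n).filter (fun k => k ≤ s.count P) = Finset.Icc 1 (s.count P) := by
    ext k; simp; omega
  rw [this]; simp

theorem card_filter_pow_dvd {n m k : ℕ} {P : F[X]} (hP : P ∈ irrFin F m) :
    ((friFin F n m).filter (fun f => P ^ k ∣ f)).card =
      if k * P.natDegree ≤ n then (friFin F (n - k * P.natDegree) m).card else 0 := by
  obtain ⟨hP1, hP2, hP3⟩ := mem_irrFin.1 hP
  have hPk : (P ^ k).Monic := hP1.pow k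
  split_ifs with h
  · have : (friFin F n m).filter (fun f => P ^ k ∣ f) =
        (friFin F (n - k * P.natDegree) m).image (fun g => P ^ k * g) := by
      ext f
      simp only [Finset.mem_filter, Finset.mem_image, mem_friFin]
      constructor
      · rintro ⟨⟨h1, h2, h3⟩, g, rfl⟩
        have hg : g.Monic := hPk.of_mul_monic_left h1
        refine ⟨g, ⟨hg, ?_, fun p a b c => h3 p a b (c.mul_left _)⟩, rfl⟩
        rw [hPk.natDegree_mul hg, natDegree_pow] at h2
        omega
      · rintro ⟨g, ⟨h1, h2, h3⟩, rfl⟩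
        refine ⟨⟨hPk.mul h1, ?_, ?_⟩, dvd_mul_right _ _⟩
        · rw [hPk.natDegree_mul h1, natDegree_pow]; omega
        · intro p a b c
          rcases b.prime.dvd_or_dvd c with c | c
          · exact (natDegree_le_of_dvd (b.prime.dvd_of_dvd_pow c) hP2.ne_zero).trans hP3
          · exact h3 p a b c
    rw [this, Finset.card_image_of_injective]
    intro a b hab
    exact mul_left_cancel₀ hPk.ne_zero hab
  · rw [Finset.card_eq_zero, Finset.filter_eq_empty_iff]
    intro f hf hd
    obtain ⟨h1, h2, h3⟩ := mem_friFin.1 hf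
    have := natDegree_le_of_dvd hd h1.ne_zero
    rw [natDegree_pow] at this
    omega

/-- Weighted count of prime powers of degree `j`. -/
noncomputable def Ccoef (F : Type) [Field F] [Fintype F] (m j : ℕ) : ℕ :=
  ∑ P ∈ irrFin F m, if P.natDegree ∣ j then P.natDegree else 0

theorem sum_multiples (a : ℕ → ℕ) (n d : ℕ) (hd : 0 < d) :
    ∑ k ∈ Finset.Icc 1 n, (if k * d ≤ n then a (n - k * d) else 0) =
      ∑ j ∈ Finset.Icc 1 n, (if d ∣ j then a (n - j) else 0) := by
  rw [← Finset.sum_filter, ← Finset.sum_filter]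
  refine Finset.sum_bij (fun k _ => k * d) ?_ ?_ ?_ ?_
  · intro k hk
    simp only [Finset.mem_filter, Finset.mem_Icc] at hk ⊢
    exact ⟨⟨by nlinarith, hk.2⟩, dvd_mul_left _ _⟩
  · intro k _ l _ h
    exact Nat.eq_of_mul_eq_mul_right hd h
  · intro j hj
    simp only [Finset.mem_filter, Finset.mem_Icc] at hj
    obtain ⟨⟨h1, h2⟩, k, rfl⟩ := hj
    refine ⟨k, ?_, by ring⟩
    simp only [Finset.mem_filter, Finset.mem_Icc]
    have : 1 ≤ k := by
      rcases Nat.eq_zero_or_pos k with rfl | h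
      · simp at h1
      · exact h
    exact ⟨⟨this, by nlinarith⟩, by linarith⟩
  · intro k _; rfl

theorem friFin_rec (n m : ℕ) : n * (friFin F n m).card =
    ∑ j ∈ Finset.Icc 1 n, Ccoef F m j * (friFin F (n - j) m).card := by
  have h1 : n * (friFin F n m).card = ∑ f ∈ friFin F n m, n := by
    rw [Finset.sum_const, smul_eq_mul, mul_comm]
  rw [h1, Finset.sum_congr rfl (fun f hf => natDegree_eq_sum_irr hf), Finset.sum_comm]
  simp only [Ccoef, Finset.sum_mul]
  rw [Finset.sum_comm (s := Finset.Icc 1 n)]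
  refine Finset.sum_congr rfl fun P hP => ?_
  rw [Finset.sum_comm]
  have hd := (mem_irrFin.1 hP).2.1.natDegree_pos
  have := sum_multiples (fun i => P.natDegree * (friFin F i m).card) n P.natDegree hd
  simp only [ite_mul, zero_mul]
  rw [← this]
  refine Finset.sum_congr rfl fun k _ => ?_
  rw [← Finset.sum_filter, Finset.sum_const, card_filter_pow_dvd hP, smul_eq_mul]
  split_ifs
  · ring
  · simp

theorem friFin_card_small {n m : ℕ} (h : n ≤ m) :
    (friFin F n m).card = Fintype.card F ^ n := by
  rw [← monicSet_card (F := F) n,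
    Nat.subtype_card (monicSet_finite (F := F) n).toFinset (fun f => by simp)]
  congr 1
  ext f
  simp only [mem_friFin, Set.Finite.mem_toFinset, Set.mem_setOf_eq]
  constructor
  · rintro ⟨a, b, _⟩; exact ⟨a, b⟩
  · rintro ⟨a, b⟩
    exact ⟨a, b, fun p _ _ hp => (natDegree_le_of_dvd hp a.ne_zero).trans (b ▸ h)⟩

theorem friFin_card_le (n m : ℕ) :
    (friFin F n m).card ≤ Fintype.card F ^ n := by
  rw [← monicSet_card (F := F) n,
    Nat.subtype_card (monicSet_finite (F := F) n).toFinset (fun f => by simp)]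
  refine Finset.card_le_card ?_
  intro f
  simp only [mem_friFin, Set.Finite.mem_toFinset, Set.mem_setOf_eq]
  rintro ⟨a, b, _⟩; exact ⟨a, b⟩

theorem Ccoef_small {m j : ℕ} (hj : 1 ≤ j) (h : j ≤ m) : Ccoef F m j = Fintype.card F ^ j := by
  set q := Fintype.card F with hq
  have key : ∀ n, n ≤ m → n * q ^ n = ∑ i ∈ Finset.Icc 1 n, Ccoef F m i * q ^ (n - i) := by
    intro n hn
    have := friFin_rec (F := F) n m
    rw [friFin_card_small hn] at this
    rw [this]
    exact Finset.sum_congr rfl fun i hi => by rw [friFin_card_small (by omega)]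
  obtain ⟨n, rfl⟩ : ∃ n, j = n + 1 := ⟨j - 1, by omega⟩
  have k1 := key (n + 1) h
  have k0 := key n (by omega)
  rw [Finset.sum_Icc_succ_top (by omega)] at k1
  have : ∑ i ∈ Finset.Icc 1 n, Ccoef F m i * q ^ (n + 1 - i) = q * (n * q ^ n) := by
    rw [k0, Finset.mul_sum]
    refine Finset.sum_congr rfl fun i hi => ?_
    have : n + 1 - i = (n - i) + 1 := by simp at hi; omega
    rw [this]; ring
  rw [this] at k1
  simp at k1
  have : (n + 1) * q ^ (n + 1) = q * (n * q ^ n) + q ^ (n + 1) := by ring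
  omega

theorem sum_pow_le (q N : ℕ) (hq : 2 ≤ q) : ∑ d ∈ Finset.Icc 1 N, q ^ d + 2 ≤ 2 * q ^ N := by
  induction N with
  | zero => simp
  | succ N ih =>
    rw [Finset.sum_Icc_succ_top (by omega), pow_succ]
    have : q ^ N * 2 ≤ q ^ N * q := Nat.mul_le_mul_left _ hq
    omega

theorem Ccoef_large {m j : ℕ} (h : m < j) : Ccoef F m j ≤ 2 * Fintype.card F ^ (j / 2) := by
  set q := Fintype.card F with hq
  have hq2 : 2 ≤ q := Fintype.one_lt_card
  have h1 : Ccoef F m j ≤ ∑ d ∈ Finset.Icc 1 (j / 2),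
      ∑ P ∈ (irrFin F m).filter (fun P => P.natDegree = d), d := by
    have e : ∑ P ∈ (irrFin F m).filter (fun P => P.natDegree ∣ j), P.natDegree =
        ∑ d ∈ Finset.Icc 1 (j / 2), ∑ P ∈ ((irrFin F m).filter (fun P => P.natDegree ∣ j)).filter
          (fun P => P.natDegree = d), P.natDegree := by
      refine (Finset.sum_fiberwise_of_maps_to ?_ _).symm
      intro P hP
      rw [Finset.mem_filter, mem_irrFin] at hP
      obtain ⟨⟨_, hi, hm⟩, k, hk⟩ := hP
      have := hi.natDegree_pos
      rw [Finset.mem_Icc]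
      refine ⟨this, ?_⟩
      have : 2 ≤ k := by
        by_contra hlt
        have : k = 0 ∨ k = 1 := by omega
        rcases this with rfl | rfl <;> omega
      rw [Nat.le_div_iff_mul_le (by norm_num)]
      nlinarith
    unfold Ccoef
    rw [← Finset.sum_filter, e]
    refine Finset.sum_le_sum fun d _ => ?_
    rw [Finset.sum_congr rfl (fun P hP => (Finset.mem_filter.1 hP).2)]
    refine Finset.sum_le_sum_of_subset ?_
    intro P hP
    simp only [Finset.mem_filter] at hP ⊢
    exact ⟨hP.1.1, hP.2⟩
  have h2 : ∀ d ∈ Finset.Icc 1 (j / 2),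
      ∑ P ∈ (irrFin F m).filter (fun P => P.natDegree = d), d ≤ q ^ d := by
    intro d hd
    rw [Finset.mem_Icc] at hd
    rw [← Ccoef_small (F := F) (m := d) hd.1 le_rfl]
    unfold Ccoef
    rw [← Finset.sum_filter]
    have : ∑ P ∈ (irrFin F m).filter (fun P => P.natDegree = d), d =
        ∑ P ∈ (irrFin F m).filter (fun P => P.natDegree = d), P.natDegree :=
      Finset.sum_congr rfl (fun P hP => (Finset.mem_filter.1 hP).2.symm)
    rw [this]
    refine Finset.sum_le_sum_of_subset ?_
    intro P hP
    simp only [Finset.mem_filter, mem_irrFin] at hP ⊢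
    exact ⟨⟨hP.1.1, hP.1.2.1, hP.2.le⟩, hP.2 ▸ dvd_rfl⟩
  have := sum_pow_le q (j / 2) hq2
  have := Finset.sum_le_sum h2
  omega

theorem polyProb_le_one (n m : ℕ) : polyProb F n m ≤ 1 := by
  rw [polyProb_eq]
  have : (0 : ℝ) < (Fintype.card F : ℝ) ^ n := by
    have : 0 < Fintype.card F := Fintype.card_pos
    positivity
  rw [div_le_one this]
  exact_mod_cast friFin_card_le n m

theorem polyProb_zero (m : ℕ) : polyProb F 0 m = 1 := by
  rw [polyProb_eq, friFin_card_small (Nat.zero_le _)]; simp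

/-- The recurrence satisfied by `polyProb`. -/
theorem polyProb_rec (m : ℕ) : ∃ c : ℕ → ℝ,
    (∀ j, 1 ≤ j → j ≤ m → c j = 1) ∧ (∀ j, 0 ≤ c j) ∧
    (∀ j, m < j → c j ≤ 2 * (√(Fintype.card F : ℝ))⁻¹ ^ j) ∧
    (∀ n : ℕ, (n : ℝ) * polyProb F n m = ∑ j ∈ Finset.Icc 1 n, c j * polyProb F (n - j) m) := by
  set q := Fintype.card F with hq
  have hq2 : 2 ≤ q := Fintype.one_lt_card
  have hqR : (1 : ℝ) ≤ q := by exact_mod_cast (by omega : 1 ≤ q)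
  have hq0 : (0 : ℝ) < q := by linarith
  refine ⟨fun j => (Ccoef F m j : ℝ) / (q : ℝ) ^ j, ?_, ?_, ?_, ?_⟩
  · intro j h1 h2
    simp only [Ccoef_small h1 h2]
    push_cast
    exact div_self (by positivity)
  · intro j; positivity
  · intro j hj
    have h1 : (Ccoef F m j : ℝ) ≤ 2 * (q : ℝ) ^ (j / 2) := by exact_mod_cast Ccoef_large hj
    have hs : √(q : ℝ) ^ 2 = q := Real.sq_sqrt hq0.le
    have hs1 : 1 ≤ √(q : ℝ) := by rw [Real.one_le_sqrt]; exact hqR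
    have h2 : (q : ℝ) ^ (j / 2) ≤ √(q : ℝ) ^ j := by
      conv_lhs => rw [← hs]
      rw [← pow_mul]
      exact pow_le_pow_right₀ hs1 (Nat.mul_div_le j 2)
    rw [div_le_iff₀ (by positivity)]
    have : (√(q : ℝ))⁻¹ ^ j * (q : ℝ) ^ j = √(q : ℝ) ^ j := by
      rw [← mul_pow]; congr 1
      field_simp
      exact hs.symm
    rw [mul_assoc, this]
    linarith
  · intro n
    have h := friFin_rec (F := F) n m
    have h' : (n : ℝ) * ((friFin F n m).card : ℝ) =
      ∑ j ∈ Finset.Icc 1 n, (Ccoef F m j : ℝ) * ((friFin F (n - j) m).card : ℝ) := by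
      exact_mod_cast h
    rw [polyProb_eq, ← mul_div_assoc, h', Finset.sum_div]
    refine Finset.sum_congr rfl fun j hj => ?_
    rw [polyProb_eq, div_mul_div_comm, ← pow_add]
    congr 2
    simp at hj; omega

end PolyCount
/-! ### Part 2: the Dickman function -/

/-- Extension of the Dickman function by `1` to the negative reals. -/
structure IsD (R : ℝ → ℝ) : Prop where
  cont : Continuous R
  pos : ∀ t, 0 < R t
  one : ∀ t, t ≤ 1 → R t = 1
  der : ∀ t, 1 < t → HasDerivAt R (-(R (t - 1)) / t) t

theorem IsDickman.isD {ρ : ℝ → ℝ} (h : IsDickman ρ) : IsD (fun t => ρ (max t 0)) := by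
  obtain ⟨h1, h2, h3, h4⟩ := h
  refine ⟨?_, fun t => h2 _ (le_max_right _ _), ?_, ?_⟩
  · exact h1.comp_continuous (by fun_prop) (fun x => Set.mem_Ici.2 (le_max_right _ _))
  · intro t ht
    exact h3 _ ⟨le_max_right _ _, max_le ht zero_le_one⟩
  · intro t ht
    have e : max (t - 1) 0 = t - 1 := max_eq_left (by linarith)
    simp only [e]
    refine (h4 t ht).congr_of_eventuallyEq ?_
    filter_upwards [lt_mem_nhds (show (0:ℝ) < t by linarith)] with s hs
    rw [max_eq_left hs.le]

namespace IsD

variable {R : ℝ → ℝ}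

theorem antiOn (h : IsD R) : StrictAntiOn R (Set.Ici 1) := by
  refine strictAntiOn_of_deriv_neg (convex_Ici 1) h.cont.continuousOn ?_
  intro x hx
  rw [interior_Ici, Set.mem_Ioi] at hx
  rw [(h.der x hx).deriv]
  have := h.pos (x - 1)
  exact div_neg_of_neg_of_pos (by linarith) (by linarith)

theorem anti (h : IsD R) : Antitone R := by
  intro a b hab
  rcases le_total b 1 with hb | hb
  · rw [h.one a (hab.trans hb), h.one b hb]
  · rcases le_total a 1 with ha | ha
    · rw [h.one a ha, ← h.one 1 le_rfl]
      exact h.antiOn.antitoneOn (by simp) (by simpa using hb) hb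
    · exact h.antiOn.antitoneOn (by simpa using ha) (by simpa using hb) hab

theorem le_one (h : IsD R) (t : ℝ) : R t ≤ 1 := by
  rcases le_total t 1 with ht | ht
  · exact (h.one t ht).le
  · rw [← h.one 1 le_rfl]; exact h.anti ht

theorem lt_one (h : IsD R) {t : ℝ} (ht : 1 < t) : R t < 1 := by
  rw [← h.one 1 le_rfl]; exact h.antiOn (by simp) (by simpa using ht.le) ht

theorem eq_of_deriv_zero {g : ℝ → ℝ} (a : ℝ) (hc : ContinuousOn g (Set.Ici a))
    (hd : ∀ t, a < t → HasDerivAt g 0 t) {t : ℝ} (ht : a ≤ t) : g t = g a := by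
  apply le_antisymm
  · refine antitoneOn_of_deriv_nonpos (convex_Ici a) hc ?_ ?_ (by simp) (by simpa using ht) ht
    · intro x hx
      rw [interior_Ici] at hx
      exact (hd x hx).differentiableAt.differentiableWithinAt
    · intro x hx
      rw [interior_Ici] at hx
      rw [(hd x hx).deriv]
  · refine monotoneOn_of_deriv_nonneg (convex_Ici a) hc ?_ ?_ (by simp) (by simpa using ht) ht
    · intro x hx
      rw [interior_Ici] at hx
      exact (hd x hx).differentiableAt.differentiableWithinAt
    · intro x hx
      rw [interior_Ici] at hx
      rw [(hd x hx).deriv]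

theorem integral_eq (h : IsD R) {t : ℝ} (ht : 1 ≤ t) : t * R t = ∫ s in (t - 1)..t, R s := by
  set I : ℝ → ℝ := fun x => ∫ s in (0:ℝ)..x, R s with hI
  have hII : ∀ a b, IntervalIntegrable R MeasureTheory.volume a b :=
    fun a b => h.cont.intervalIntegrable a b
  have hId : ∀ x, HasDerivAt I (R x) x := fun x =>
    intervalIntegral.integral_hasDerivAt_right (hII _ _)
      h.cont.stronglyMeasurable.stronglyMeasurableAtFilter h.cont.continuousAt
  have hIc : Continuous I := continuous_iff_continuousAt.2 fun x => (hId x).continuousAt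
  have e : ∀ t, ∫ s in (t - 1)..t, R s = I t - I (t - 1) := fun t =>
    (intervalIntegral.integral_interval_sub_left (hII _ _) (hII _ _)).symm
  set g : ℝ → ℝ := fun t => t * R t - (I t - I (t - 1)) with hg
  have hRc := h.cont
  have gc : Continuous g := by fun_prop
  have gd : ∀ t, 1 < t → HasDerivAt g 0 t := by
    intro t ht
    have h1 := ((hasDerivAt_id t).mul (h.der t ht)).sub
      ((hId t).sub ((hId (t - 1)).comp_sub_const t 1))
    refine h1.congr_deriv ?_
    have : t ≠ 0 := by linarith
    simp only [id]
    field_simp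
    ring
  have := eq_of_deriv_zero 1 gc.continuousOn gd ht
  have g1 : g 1 = 0 := by
    simp only [hg, hI]
    have : ∫ s in (0:ℝ)..1, R s = ∫ s in (0:ℝ)..1, (1:ℝ) := by
      refine intervalIntegral.integral_congr fun s hs => ?_
      rw [Set.uIcc_of_le zero_le_one] at hs
      exact h.one s hs.2
    rw [this]
    simp [h.one 1 le_rfl]
  rw [e]
  rw [g1] at this
  simp only [hg] at this
  linarith

theorem log_eq (h : IsD R) {t : ℝ} (h1 : 1 ≤ t) (h2 : t ≤ 2) : R t = 1 - Real.log t := by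
  -- differentiate on the interval
  have hc : ContinuousOn (fun s => R s + Real.log s) (Set.Icc 1 2) := by
    refine h.cont.continuousOn.add (Real.continuousOn_log.mono ?_)
    intro x hx
    simp only [Set.mem_compl_iff, Set.mem_singleton_iff]
    have := hx.1
    linarith
  have hd : ∀ x ∈ interior (Set.Icc (1:ℝ) 2), HasDerivAt (fun s => R s + Real.log s) 0 x := by
    intro x hx
    rw [interior_Icc] at hx
    have := (h.der x hx.1).add (Real.hasDerivAt_log (by linarith [hx.1] : x ≠ 0))
    refine this.congr_deriv ?_
    rw [h.one (x - 1) (by linarith [hx.2])]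
    field_simp
    ring
  have hdd : DifferentiableOn ℝ (fun s => R s + Real.log s) (interior (Set.Icc 1 2)) :=
    fun x hx => (hd x hx).differentiableAt.differentiableWithinAt
  have a1 := antitoneOn_of_deriv_nonpos (convex_Icc 1 2) hc hdd
    (fun x hx => (hd x hx).deriv.le) ⟨le_rfl, by norm_num⟩ ⟨h1, h2⟩ h1
  have a2 := monotoneOn_of_deriv_nonneg (convex_Icc 1 2) hc hdd
    (fun x hx => (hd x hx).deriv.ge) ⟨le_rfl, by norm_num⟩ ⟨h1, h2⟩ h1
  simp only [Real.log_one, add_zero, h.one 1 le_rfl] at a1 a2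
  linarith

theorem convexOn (h : IsD R) : ConvexOn ℝ (Set.Ici 1) R := by
  refine MonotoneOn.convexOn_of_deriv (convex_Ici 1) h.cont.continuousOn ?_ ?_
  · intro x hx
    rw [interior_Ici] at hx
    exact (h.der x hx).differentiableAt.differentiableWithinAt
  · rw [interior_Ici]
    intro x hx y hy hxy
    rw [(h.der x hx).deriv, (h.der y hy).deriv, neg_div, neg_div, neg_le_neg_iff]
    rw [Set.mem_Ioi] at hx hy
    exact div_le_div₀ (h.pos _).le (h.anti (by linarith)) (by linarith) hxy

/-- The logarithmic derivative `-ρ'/ρ`. -/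
noncomputable def kk (R : ℝ → ℝ) (x : ℝ) : ℝ := R (x - 1) / (x * R x)

theorem kk_pos (h : IsD R) {x : ℝ} (hx : 1 ≤ x) : 0 < kk R x := by
  have := h.pos x
  have := h.pos (x - 1)
  unfold kk
  positivity

theorem kk_cont (h : IsD R) : ContinuousOn (kk R) (Set.Ici 1) := by
  have := h.cont
  unfold kk
  refine ContinuousOn.div (by fun_prop) (by fun_prop) ?_
  intro x hx
  have := h.pos x
  have : (0:ℝ) < x := lt_of_lt_of_le one_pos hx
  positivity

theorem kk_mono12 (h : IsD R) : StrictMonoOn (kk R) (Set.Icc 1 2) := by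
  have hanti : StrictAntiOn (fun x => x * R x) (Set.Icc 1 2) := by
    have := h.cont
    refine strictAntiOn_of_deriv_neg (convex_Icc 1 2) (by fun_prop) ?_
    intro x hx
    rw [interior_Icc] at hx
    have hd := (hasDerivAt_id x).mul (h.der x hx.1)
    have e : deriv (fun x => x * R x) x = 1 * R x + id x * (-R (x - 1) / x) := hd.deriv
    rw [e, h.one (x - 1) (by linarith [hx.2])]
    have := h.lt_one hx.1
    have h0 : x ≠ 0 := by linarith [hx.1]
    simp only [id]
    field_simp
    linarith
  intro x hx y hy hxy
  unfold kk
  rw [h.one (x - 1) (by linarith [hx.2]), h.one (y - 1) (by linarith [hy.2])]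
  have := hanti hx hy hxy
  have := h.pos y
  have : 0 < y := by linarith [hy.1]
  exact one_div_lt_one_div_of_lt (by positivity) (by assumption)

theorem kk_deriv (h : IsD R) {v : ℝ} (hv : 2 < v) :
    HasDerivAt (kk R) (kk R v * (kk R v - kk R (v - 1) - 1 / v)) v := by
  have h1 := (h.der (v - 1) (by linarith)).comp_sub_const v 1
  have h2 := (hasDerivAt_id v).mul (h.der v (by linarith))
  have hR := h.pos v
  have hR1 := h.pos (v - 1)
  have hR2 := h.pos (v - 1 - 1)
  have hv0 : 0 < v := by linarith
  have hv1 : 0 < v - 1 := by linarith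
  have h3 := h1.div h2 (by simp only [id, Pi.mul_apply]; positivity)
  refine h3.congr_deriv ?_
  simp only [id, Pi.mul_apply, kk]
  field_simp
  ring

theorem kk_gap_aux (h : IsD R) {v : ℝ} (hv : 2 < v) (hm : StrictMonoOn (kk R) (Set.Icc 1 v)) :
    0 < kk R v - kk R (v - 1) - 1 / v := by
  have hder : ∀ x ∈ Set.uIcc (v - 1) v, HasDerivAt R (-(kk R x * R x)) x := by
    intro x hx
    rw [Set.uIcc_of_le (by linarith)] at hx
    have hx1 : 1 < x := by linarith [hx.1]
    refine (h.der x hx1).congr_deriv ?_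
    have := h.pos x
    have : 0 < x := by linarith
    unfold kk
    field_simp
  have hkc : ContinuousOn (fun x => kk R x * R x) (Set.Icc (v - 1) v) := by
    refine ContinuousOn.mul (h.kk_cont.mono ?_) h.cont.continuousOn
    intro x hx
    simp only [Set.mem_Ici]
    linarith [hx.1]
  have hintg := intervalIntegral.integral_eq_sub_of_hasDerivAt hder (by
    refine ContinuousOn.intervalIntegrable ?_
    rw [Set.uIcc_of_le (by linarith)]
    exact hkc.neg)
  rw [intervalIntegral.integral_neg] at hintg
  have hlt : ∫ x in (v - 1)..v, kk R (v - 1) * R x < ∫ x in (v - 1)..v, kk R x * R x := by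
    have := h.cont
    refine intervalIntegral.integral_lt_integral_of_continuousOn_of_le_of_exists_lt (by linarith)
      (by fun_prop) hkc ?_ ⟨v, ⟨by linarith, le_rfl⟩, ?_⟩
    · intro x hx
      refine mul_le_mul_of_nonneg_right ?_ (h.pos x).le
      exact (hm.monotoneOn) ⟨by linarith, by linarith⟩ ⟨by linarith [hx.1], hx.2⟩ hx.1.le
    · refine mul_lt_mul_of_pos_right ?_ (h.pos v)
      exact hm ⟨by linarith, by linarith⟩ ⟨by linarith, le_rfl⟩ (by linarith)
  rw [intervalIntegral.integral_const_mul, ← h.integral_eq (by linarith)] at hlt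
  have hR := h.pos v
  have hv0 : 0 < v := by linarith
  have e : kk R v - 1 / v = (R (v - 1) - R v) / (v * R v) := by
    unfold kk; field_simp
  have : kk R (v - 1) < (R (v - 1) - R v) / (v * R v) := by
    rw [lt_div_iff₀ (by positivity)]
    linarith
  linarith

theorem kk_gap (h : IsD R) {v : ℝ} (hv : 2 ≤ v) : 0 < kk R v - kk R (v - 1) - 1 / v := by
  by_contra hneg
  push Not at hneg
  set y : ℝ → ℝ := fun v => kk R v - kk R (v - 1) - 1 / v with hy
  have yc : ContinuousOn y (Set.Ici 2) := by
    refine ContinuousOn.sub (ContinuousOn.sub (h.kk_cont.mono ?_) ?_) ?_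
    · exact Set.Ici_subset_Ici.2 (by norm_num)
    · refine h.kk_cont.comp (by fun_prop) ?_
      intro x hx
      simp only [Set.mem_Ici] at hx ⊢
      linarith
    · refine ContinuousOn.div (by fun_prop) (by fun_prop) ?_
      intro x hx
      simp only [Set.mem_Ici] at hx
      linarith
  set S : Set ℝ := Set.Ici 2 ∩ y ⁻¹' (Set.Iic 0) with hS
  have Sc : IsClosed S := yc.preimage_isClosed_of_isClosed isClosed_Ici isClosed_Iic
  have Sne : S.Nonempty := ⟨v, hv, hneg⟩
  have Sb : BddBelow S := ⟨2, fun x hx => hx.1⟩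
  have hmem := Sc.csInf_mem Sne Sb
  set v0 := sInf S with hv0
  have y2 : 0 < y 2 := by
    have e1 : kk R 2 = 1 / (2 * (1 - Real.log 2)) := by
      unfold kk
      rw [h.one (2 - 1) (by norm_num), h.log_eq (by norm_num) le_rfl]
    have e2 : kk R (2 - 1) = 1 := by
      unfold kk
      rw [h.one _ (by norm_num), h.one _ (by norm_num)]; norm_num
    simp only [hy, e1, e2]
    have l1 := Real.log_two_gt_d9
    have l2 := Real.log_two_lt_d9
    have : 3 / 2 < 1 / (2 * (1 - Real.log 2)) := by
      rw [lt_div_iff₀ (by linarith)]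
      linarith
    linarith
  have h2lt : 2 < v0 := by
    rcases lt_or_eq_of_le (show (2:ℝ) ≤ v0 from hmem.1) with h' | h'
    · exact h'
    · have := hmem.2
      rw [← h'] at this
      simp only [Set.mem_preimage, Set.mem_Iic] at this
      linarith
  have hpos : ∀ w, 2 ≤ w → w < v0 → 0 < y w := by
    intro w hw hlt
    by_contra hc
    push Not at hc
    have : v0 ≤ w := csInf_le Sb ⟨hw, hc⟩
    linarith
  have m2 : StrictMonoOn (kk R) (Set.Icc 2 v0) := by
    refine strictMonoOn_of_deriv_pos (convex_Icc _ _) (h.kk_cont.mono ?_) ?_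
    · intro x hx
      simp only [Set.mem_Ici]
      linarith [hx.1]
    · intro x hx
      rw [interior_Icc] at hx
      rw [(h.kk_deriv hx.1).deriv]
      exact mul_pos (h.kk_pos (by linarith [hx.1])) (hpos x hx.1.le hx.2)
  have m : StrictMonoOn (kk R) (Set.Icc 1 v0) := by
    have := h.kk_mono12.union m2 (c := 2) ⟨⟨by norm_num, le_rfl⟩, fun x hx => hx.2⟩
      ⟨⟨le_rfl, h2lt.le⟩, fun x hx => hx.1⟩
    rwa [Set.Icc_union_Icc_eq_Icc (by norm_num) h2lt.le] at this
  have := h.kk_gap_aux h2lt m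
  have h0 : y v0 ≤ 0 := hmem.2
  simp only [hy] at h0
  linarith

theorem kk_mono (h : IsD R) : MonotoneOn (kk R) (Set.Ici 1) := by
  have m2 : MonotoneOn (kk R) (Set.Ici 2) := by
    refine (strictMonoOn_of_deriv_pos (convex_Ici _) (h.kk_cont.mono ?_) ?_).monotoneOn
    · exact Set.Ici_subset_Ici.2 (by norm_num)
    · intro x hx
      rw [interior_Ici] at hx
      rw [(h.kk_deriv hx).deriv]
      exact mul_pos (h.kk_pos (by linarith [Set.mem_Ioi.1 hx])) (h.kk_gap (Set.mem_Ioi.1 hx).le)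
  intro x hx y hy hxy
  rw [Set.mem_Ici] at hx hy
  rcases le_total y 2 with hy2 | hy2
  · exact h.kk_mono12.monotoneOn ⟨hx, hxy.trans hy2⟩ ⟨hy, hy2⟩ hxy
  · rcases le_total x 2 with hx2 | hx2
    · exact (h.kk_mono12.monotoneOn ⟨hx, hx2⟩ ⟨by norm_num, le_rfl⟩ hx2).trans
        (m2 (by simp) (by simpa using hy2) hy2)
    · exact m2 (by simpa using hx2) (by simpa using hy2) hxy

/-- Log-concavity: tangent line inequality for `log ρ`. -/
theorem exp_bound (h : IsD R) {x : ℝ} (hx : 1 ≤ x) (s : ℝ) :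
    R s ≤ R x * Real.exp (-(kk R x) * (s - x)) := by
  set φ : ℝ → ℝ := fun s => R s * Real.exp (kk R x * (s - x)) with hφ
  have hc := h.cont
  have φc : Continuous φ := by fun_prop
  have φd : ∀ t, 1 < t → HasDerivAt φ (Real.exp (kk R x * (t - x)) * R t * (kk R x - kk R t)) t := by
    intro t ht
    have h1 : HasDerivAt (fun s => kk R x * (s - x)) (kk R x) t := by
      simpa using ((hasDerivAt_id t).sub_const x).const_mul (kk R x)
    have := (h.der t ht).mul h1.exp
    refine this.congr_deriv ?_
    have hR := h.pos t
    have : 0 < t := by linarith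
    have e : R (t - 1) / t = kk R t * R t := by unfold kk; field_simp
    rw [neg_div, e]
    ring
  have key : φ s ≤ φ x := by
    have part2 : ∀ s, 1 ≤ s → s ≤ x → φ s ≤ φ x := by
      intro s hs1 hsx
      refine monotoneOn_of_deriv_nonneg (convex_Icc 1 x) φc.continuousOn ?_ ?_
        ⟨hs1, hsx⟩ ⟨hx, le_rfl⟩ hsx
      · intro t ht
        rw [interior_Icc] at ht
        exact (φd t ht.1).differentiableAt.differentiableWithinAt
      · intro t ht
        rw [interior_Icc] at ht
        rw [(φd t ht.1).deriv]
        have := h.kk_mono (Set.mem_Ici.2 ht.1.le) (Set.mem_Ici.2 hx) ht.2.le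
        have := h.pos t
        have := Real.exp_pos (kk R x * (t - x))
        exact mul_nonneg (by positivity) (by linarith)
    rcases le_total x s with hs | hs
    · refine antitoneOn_of_deriv_nonpos (convex_Ici x) φc.continuousOn ?_ ?_
        (by simp) (by simpa using hs) hs
      · intro t ht
        rw [interior_Ici, Set.mem_Ioi] at ht
        exact (φd t (by linarith)).differentiableAt.differentiableWithinAt
      · intro t ht
        rw [interior_Ici, Set.mem_Ioi] at ht
        rw [(φd t (by linarith)).deriv]
        have := h.kk_mono (Set.mem_Ici.2 hx) (Set.mem_Ici.2 (by linarith)) ht.le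
        have := h.pos t
        have := Real.exp_pos (kk R x * (t - x))
        exact mul_nonpos_of_nonneg_of_nonpos (by positivity) (by linarith)
    · rcases le_total 1 s with hs1 | hs1
      · exact part2 s hs1 hs
      · refine le_trans ?_ (part2 1 le_rfl hx)
        simp only [hφ, h.one s hs1, h.one 1 le_rfl, one_mul]
        have := h.kk_pos hx
        gcongr
  have e1 : φ x = R x := by simp [hφ]
  rw [e1] at key
  have e2 : R s = φ s * Real.exp (-(kk R x) * (s - x)) := by
    simp only [hφ]
    rw [mul_assoc, ← Real.exp_add]
    simp
  rw [e2]
  exact mul_le_mul_of_nonneg_right key (Real.exp_pos _).le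

theorem kk_bound (h : IsD R) {x θ : ℝ} (hx : 1 ≤ x) (h0 : 0 < θ) (h1 : θ < 1) :
    Real.exp (θ * kk R x) ≤ (x + θ) / (1 - θ) := by
  have i1 := h.integral_eq (t := x + θ) (by linarith)
  have hII : ∀ a b, IntervalIntegrable R MeasureTheory.volume a b :=
    fun a b => h.cont.intervalIntegrable a b
  have i2 : (1 - θ) * R x ≤ ∫ s in (x + θ - 1)..(x + θ), R s := by
    rw [← intervalIntegral.integral_add_adjacent_intervals (hII _ x) (hII x _)]
    have a : ∫ s in (x + θ - 1)..x, R x ≤ ∫ s in (x + θ - 1)..x, R s := by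
      refine intervalIntegral.integral_mono_on (by linarith) (by simp) (hII _ _) ?_
      intro s hs
      exact h.anti hs.2
    have b : 0 ≤ ∫ s in x..(x + θ), R s :=
      intervalIntegral.integral_nonneg (by linarith) (fun s _ => (h.pos s).le)
    rw [intervalIntegral.integral_const, smul_eq_mul] at a
    linarith
  have i3 := h.exp_bound hx (x + θ)
  have e : -(kk R x) * (x + θ - x) = -(θ * kk R x) := by ring
  rw [e, Real.exp_neg] at i3
  have hE := Real.exp_pos (θ * kk R x)
  have hR := h.pos x
  have i4 : (1 - θ) * R x ≤ (x + θ) * (R x * (Real.exp (θ * kk R x))⁻¹) := by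
    rw [← i1] at i2
    have : (x + θ) * R (x + θ) ≤ (x + θ) * (R x * (Real.exp (θ * kk R x))⁻¹) := by
      gcongr
    linarith
  rw [le_div_iff₀ (by linarith)]
  have : (x + θ) * (R x * (Real.exp (θ * kk R x))⁻¹) = (x + θ) * R x / Real.exp (θ * kk R x) := by
    field_simp
  rw [this, le_div_iff₀ hE] at i4
  have : (Real.exp (θ * kk R x) * (1 - θ)) * R x ≤ (x + θ) * R x := by linarith
  exact le_of_mul_le_mul_right this hR

/-- Symmetrised integral over a cell. -/
theorem cell_eq (h : IsD R) (x δ : ℝ) :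
    ∫ s in (x - δ)..(x + δ), R s = ∫ s in (0:ℝ)..δ, (R (x + s) + R (x - s)) := by
  have hc := h.cont
  have hII : ∀ a b, IntervalIntegrable R MeasureTheory.volume a b :=
    fun a b => h.cont.intervalIntegrable a b
  rw [intervalIntegral.integral_add (by apply Continuous.intervalIntegrable; fun_prop)
    (by apply Continuous.intervalIntegrable; fun_prop),
    intervalIntegral.integral_comp_add_left (fun s => R s),
    intervalIntegral.integral_comp_sub_left (fun s => R s), add_zero, sub_zero, add_comm (∫ s in x..(x + δ), R s),
    intervalIntegral.integral_add_adjacent_intervals (hII _ _) (hII _ _)]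

theorem cell_lower (h : IsD R) {x δ : ℝ} (hδ : 0 ≤ δ) (hx : 1 ≤ x - δ) :
    2 * δ * R x ≤ ∫ s in (x - δ)..(x + δ), R s := by
  have hc := h.cont
  rw [h.cell_eq]
  have : ∫ s in (0:ℝ)..δ, 2 * R x ≤ ∫ s in (0:ℝ)..δ, (R (x + s) + R (x - s)) := by
    refine intervalIntegral.integral_mono_on hδ (by simp)
      (by apply Continuous.intervalIntegrable; fun_prop) ?_
    intro s hs
    have hcv := h.convexOn.2
    have := hcv (show x + s ∈ Set.Ici (1:ℝ) by simp only [Set.mem_Ici]; linarith [hs.1])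
      (show x - s ∈ Set.Ici (1:ℝ) by simp only [Set.mem_Ici]; linarith [hs.2])
      (show (0:ℝ) ≤ 1 / 2 by norm_num) (show (0:ℝ) ≤ 1 / 2 by norm_num) (by norm_num)
    simp only [smul_eq_mul] at this
    rw [show 1 / 2 * (x + s) + 1 / 2 * (x - s) = x by ring] at this
    linarith
  rw [intervalIntegral.integral_const, smul_eq_mul] at this
  linarith

theorem cell_upper (h : IsD R) {x δ K : ℝ} (hδ : 0 ≤ δ) (hK0 : 0 ≤ K) (hK : 1 ≤ x → kk R x ≤ K) :
    ∫ s in (x - δ)..(x + δ), R s ≤ 2 * δ * (R x * Real.exp ((K * δ) ^ 2 / 2)) := by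
  have hc := h.cont
  rw [h.cell_eq]
  have : ∫ s in (0:ℝ)..δ, (R (x + s) + R (x - s)) ≤
      ∫ s in (0:ℝ)..δ, 2 * (R x * Real.exp ((K * δ) ^ 2 / 2)) := by
    refine intervalIntegral.integral_mono_on hδ
      (by apply Continuous.intervalIntegrable; fun_prop) (by simp) ?_
    intro s hs
    rcases le_total 1 x with hx | hx
    · have b1 := h.exp_bound hx (x + s)
      have b2 := h.exp_bound hx (x - s)
      have hk := h.kk_pos hx
      rw [show -(kk R x) * (x + s - x) = -(kk R x * s) by ring] at b1
      rw [show -(kk R x) * (x - s - x) = kk R x * s by ring] at b2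
      have c1 := Real.cosh_le_exp_half_sq (kk R x * s)
      rw [Real.cosh_eq] at c1
      have c2 : Real.exp ((kk R x * s) ^ 2 / 2) ≤ Real.exp ((K * δ) ^ 2 / 2) := by
        have := hK hx
        have := hs.1
        have := hs.2
        gcongr
      have hR := h.pos x
      calc R (x + s) + R (x - s) ≤ R x * Real.exp (-(kk R x * s)) + R x * Real.exp (kk R x * s) :=
            add_le_add b1 b2
        _ = 2 * (R x * ((Real.exp (kk R x * s) + Real.exp (-(kk R x * s))) / 2)) := by ring
        _ ≤ 2 * (R x * Real.exp ((K * δ) ^ 2 / 2)) := by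
          gcongr
          linarith
    · rw [h.one x hx]
      have := h.le_one (x + s)
      have := h.le_one (x - s)
      have : 1 ≤ Real.exp ((K * δ) ^ 2 / 2) := Real.one_le_exp (by positivity)
      linarith
  rw [intervalIntegral.integral_const, smul_eq_mul] at this
  linarith

end IsD
/-! ### Part 3: discrete comparison with the Dickman function -/

/-- The grid points `w n = (2n+1)/(2m+1)`. -/
noncomputable def wgrid (m n : ℕ) : ℝ := (2 * (n : ℝ) + 1) / (2 * (m : ℝ) + 1)

namespace IsD

variable {R : ℝ → ℝ}

theorem wgrid_ge_one {m n : ℕ} (h : m ≤ n) : 1 ≤ wgrid m n := by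
  unfold wgrid
  rw [le_div_iff₀ (by positivity)]
  have : (m : ℝ) ≤ n := by exact_mod_cast h
  linarith

theorem wgrid_le_one {m n : ℕ} (h : n ≤ m) : wgrid m n ≤ 1 := by
  unfold wgrid
  rw [div_le_iff₀ (by positivity)]
  have : (n : ℝ) ≤ m := by exact_mod_cast h
  linarith

theorem wgrid_mono (m : ℕ) : Monotone (wgrid m) := by
  intro a b h
  unfold wgrid
  have : (a : ℝ) ≤ b := by exact_mod_cast h
  gcongr

theorem wgrid_le_div {m n : ℕ} (hm : 1 ≤ m) (h : m ≤ n) : wgrid m n ≤ (n : ℝ) / m := by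
  unfold wgrid
  have h1 : (m : ℝ) ≤ n := by exact_mod_cast h
  have h2 : (1 : ℝ) ≤ m := by exact_mod_cast hm
  rw [div_le_div_iff₀ (by positivity) (by positivity)]
  linarith

theorem sum_cells (h : IsD R) {m n : ℕ} (hmn : m ≤ n) :
    ∑ k ∈ Finset.range m, ∫ s in (wgrid m (n - m + k) - 1 / (2 * (m : ℝ) + 1))..
      (wgrid m (n - m + k) + 1 / (2 * (m : ℝ) + 1)), R s =
    ∫ s in (wgrid m n - 1)..(wgrid m n - 1 / (2 * (m : ℝ) + 1)), R s := by
  have h1 := intervalIntegral.sum_integral_adjacent_intervals (f := R) (μ := MeasureTheory.volume)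
    (a := fun k : ℕ => 2 * (((n - m : ℕ) : ℝ) + k) / (2 * (m : ℝ) + 1)) (n := m)
    (fun k _ => h.cont.intervalIntegrable _ _)
  have e0 : 2 * (((n - m : ℕ) : ℝ) + (0 : ℕ)) / (2 * (m : ℝ) + 1) = wgrid m n - 1 := by
    unfold wgrid
    push_cast [hmn]
    field_simp
    ring
  have em : 2 * (((n - m : ℕ) : ℝ) + (m : ℕ)) / (2 * (m : ℝ) + 1) =
      wgrid m n - 1 / (2 * (m : ℝ) + 1) := by
    unfold wgrid
    push_cast [hmn]
    field_simp
    ring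
  rw [e0, em] at h1
  rw [← h1]
  refine Finset.sum_congr rfl fun k _ => ?_
  congr 1
  · unfold wgrid
    push_cast
    field_simp
    ring
  · unfold wgrid
    push_cast
    field_simp
    ring

theorem integral_window (h : IsD R) {m n : ℕ} (hmn : m ≤ n) :
    (wgrid m n) * R (wgrid m n) =
    (∫ s in (wgrid m n - 1)..(wgrid m n - 1 / (2 * (m : ℝ) + 1)), R s) +
    ∫ s in (wgrid m n - 1 / (2 * (m : ℝ) + 1))..(wgrid m n), R s := by
  rw [h.integral_eq (wgrid_ge_one hmn)]
  exact (intervalIntegral.integral_add_adjacent_intervals (h.cont.intervalIntegrable _ _)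
    (h.cont.intervalIntegrable _ _)).symm

theorem sum_upper (h : IsD R) {m n : ℕ} (hmn : 2 * m + 1 ≤ n) :
    ∑ k ∈ Finset.range m, R (wgrid m (n - m + k)) ≤ n * R (wgrid m n) := by
  have hmn' : m ≤ n := by omega
  set δ : ℝ := 1 / (2 * (m : ℝ) + 1) with hδ
  have hδ0 : 0 < δ := by positivity
  have hw : wgrid m n = (2 * n + 1) * δ := by unfold wgrid; rw [hδ]; ring
  have h1 : 2 * δ * ∑ k ∈ Finset.range m, R (wgrid m (n - m + k)) ≤
      ∫ s in (wgrid m n - 1)..(wgrid m n - δ), R s := by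
    rw [← h.sum_cells hmn', Finset.mul_sum]
    refine Finset.sum_le_sum fun k _ => h.cell_lower hδ0.le ?_
    unfold wgrid
    rw [hδ, ← sub_div, le_div_iff₀ (by positivity)]
    push_cast [hmn']
    have : (2 * (m : ℝ) + 1) ≤ n := by exact_mod_cast hmn
    have : (0 : ℝ) ≤ k := by positivity
    linarith
  have h2 := h.integral_window hmn'
  have h3 : δ * R (wgrid m n) ≤ ∫ s in (wgrid m n - δ)..(wgrid m n), R s := by
    have : ∫ s in (wgrid m n - δ)..(wgrid m n), R (wgrid m n) ≤
        ∫ s in (wgrid m n - δ)..(wgrid m n), R s := by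
      refine intervalIntegral.integral_mono_on (by linarith) (by simp)
        (h.cont.intervalIntegrable _ _) ?_
      intro s hs
      exact h.anti hs.2
    rw [intervalIntegral.integral_const, smul_eq_mul] at this
    linarith
  rw [← hδ] at h2
  have h4 : 2 * δ * ∑ k ∈ Finset.range m, R (wgrid m (n - m + k)) ≤
      2 * δ * (n * R (wgrid m n)) := by
    have : wgrid m n * R (wgrid m n) = 2 * δ * (n * R (wgrid m n)) + δ * R (wgrid m n) := by
      linear_combination (R (wgrid m n)) * hw
    linarith
  exact le_of_mul_le_mul_left h4 (by positivity)

theorem kk_le_log (h : IsD R) {x u : ℝ} (hx : 1 ≤ x) (hu : x ≤ u) :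
    kk R x ≤ 4 * Real.log (u + 1) := by
  have h1 := h.kk_bound hx (θ := 1 / 2) (by norm_num) (by norm_num)
  have h2 : Real.exp (1 / 2 * kk R x) ≤ (u + 1) ^ 2 := by
    refine h1.trans ?_
    rw [div_le_iff₀ (by norm_num)]
    nlinarith
  have h3 := Real.log_le_log (Real.exp_pos _) h2
  rw [Real.log_exp, Real.log_pow] at h3
  push_cast at h3
  linarith

theorem exp_arith {x n K δ m : ℝ} (hm : 2 ≤ m) (hn : m ≤ n) (hK : 1 ≤ K) (hδ : δ = 1 / (2 * m + 1))
    (hx : x = K * δ) (hxn : Real.exp x ≤ n + 1) :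
    n * Real.exp (-(9 * x ^ 2)) ≤ n - (Real.exp x - 1) / 2 := by
  have hδ0 : 0 < δ := by rw [hδ]; positivity
  have hx0 : 0 < x := by rw [hx]; positivity
  rcases le_total x (1 / 3) with h | h
  · have h1 : Real.exp x - 1 ≤ 2 * x := by
      have := Real.abs_exp_sub_one_le (x := x) (by rw [abs_of_pos hx0]; linarith)
      rw [abs_of_pos hx0] at this
      exact (le_abs_self _).trans this
    have h2 : x ≤ 3 * x ^ 2 * n := by
      -- 1 ≤ 3 x n
      have : 1 ≤ 3 * x * n := by
        have a : 1 / (2 * m + 1) ≤ x := by rw [hx, ← hδ]; nlinarith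
        have b : 1 ≤ 3 * (1 / (2 * m + 1)) * m := by
          rw [mul_one_div, div_mul_eq_mul_div, le_div_iff₀ (by positivity)]; linarith
        have c : 3 * (1 / (2 * m + 1)) * m ≤ 3 * x * n := by
          gcongr
        linarith
      nlinarith
    have h3 : Real.exp (-(9 * x ^ 2)) ≤ 1 - 3 * x ^ 2 := by
      have e1 := Real.add_one_le_exp (9 * x ^ 2)
      rw [Real.exp_neg]
      have e2 : (Real.exp (9 * x ^ 2))⁻¹ ≤ (9 * x ^ 2 + 1)⁻¹ :=
        inv_anti₀ (by positivity) e1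
      refine e2.trans ?_
      rw [inv_le_iff_one_le_mul₀ (by positivity)]
      have : x ^ 2 ≤ 1 / 9 := by nlinarith
      nlinarith [sq_nonneg x]
    have : n * Real.exp (-(9 * x ^ 2)) ≤ n * (1 - 3 * x ^ 2) := by
      gcongr
      linarith
    linarith
  · have h3 : Real.exp (-(9 * x ^ 2)) ≤ 1 / 2 := by
      have e1 := Real.add_one_le_exp (9 * x ^ 2)
      rw [Real.exp_neg, one_div]
      refine inv_anti₀ (by norm_num) ?_
      nlinarith
    have : n * Real.exp (-(9 * x ^ 2)) ≤ n * (1 / 2) := by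
      gcongr
      linarith
    linarith

theorem sum_lower (h : IsD R) {m n : ℕ} (hm : 2 ≤ m) (hmn : m ≤ n) :
    n * R (wgrid m n) * Real.exp (-(10 * (4 * Real.log ((n : ℝ) / m + 1) / (2 * m + 1)) ^ 2)) ≤
    ∑ k ∈ Finset.range m, R (wgrid m (n - m + k)) := by
  set δ : ℝ := 1 / (2 * (m : ℝ) + 1) with hδ
  have hδ0 : 0 < δ := by positivity
  have hmR : (2 : ℝ) ≤ m := by exact_mod_cast hm
  have hnR : (m : ℝ) ≤ n := by exact_mod_cast hmn
  have hu1 : 1 ≤ (n : ℝ) / m := by rw [le_div_iff₀ (by positivity)]; linarith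
  set K : ℝ := 4 * Real.log ((n : ℝ) / m + 1) with hK
  have hL : 1 / 2 ≤ Real.log ((n : ℝ) / m + 1) := by
    have := Real.log_two_gt_d9
    have := Real.log_le_log (by norm_num : (0:ℝ) < 2) (by linarith : (2:ℝ) ≤ (n : ℝ) / m + 1)
    linarith
  have hK1 : 1 ≤ K := by rw [hK]; linarith
  set x : ℝ := K * δ with hx
  have hx0 : 0 < x := by positivity
  have hxe : 4 * Real.log ((n : ℝ) / m + 1) / (2 * m + 1) = x := by rw [hx, hδ, hK]; ring
  have hw : wgrid m n = (2 * n + 1) * δ := by unfold wgrid; rw [hδ]; ring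
  have hkw : kk R (wgrid m n) ≤ K := h.kk_le_log (wgrid_ge_one hmn) (wgrid_le_div (by omega) hmn)
  have h1 : ∫ s in (wgrid m n - 1)..(wgrid m n - δ), R s ≤
      2 * δ * Real.exp (x ^ 2 / 2) * ∑ k ∈ Finset.range m, R (wgrid m (n - m + k)) := by
    rw [← h.sum_cells hmn, Finset.mul_sum]
    refine Finset.sum_le_sum fun k hk => ?_
    have := h.cell_upper (x := wgrid m (n - m + k)) (K := K) hδ0.le (by linarith) (by
      intro h1
      refine le_trans (h.kk_mono (Set.mem_Ici.2 h1) (Set.mem_Ici.2 (wgrid_ge_one hmn)) ?_) hkw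
      apply wgrid_mono
      rw [Finset.mem_range] at hk
      omega)
    refine this.trans (le_of_eq ?_)
    ring
  have h2 := h.integral_window hmn
  rw [← hδ] at h2
  have h3 : ∫ s in (wgrid m n - δ)..(wgrid m n), R s ≤ δ * (R (wgrid m n) * Real.exp x) := by
    have : ∫ s in (wgrid m n - δ)..(wgrid m n), R s ≤
      ∫ s in (wgrid m n - δ)..(wgrid m n), R (wgrid m n) * Real.exp x := by
      refine intervalIntegral.integral_mono_on (by linarith)
        (h.cont.intervalIntegrable _ _) (by simp) ?_
      intro s hs
      refine (h.exp_bound (wgrid_ge_one hmn) s).trans ?_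
      have := h.pos (wgrid m n)
      gcongr
      have a1 : wgrid m n - s ≤ δ := by linarith [hs.1]
      have a2 : 0 ≤ wgrid m n - s := by linarith [hs.2]
      have := h.kk_pos (wgrid_ge_one hmn)
      calc -kk R (wgrid m n) * (s - wgrid m n) = kk R (wgrid m n) * (wgrid m n - s) := by ring
        _ ≤ K * δ := by gcongr
    rw [intervalIntegral.integral_const, smul_eq_mul] at this
    linarith
  have hR := h.pos (wgrid m n)
  have h4 : 2 * δ * (R (wgrid m n) * (n - (Real.exp x - 1) / 2)) ≤
      2 * δ * (Real.exp (x ^ 2 / 2) * ∑ k ∈ Finset.range m, R (wgrid m (n - m + k))) := by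
    have : wgrid m n * R (wgrid m n) = 2 * δ * (n * R (wgrid m n)) + δ * R (wgrid m n) := by
      linear_combination (R (wgrid m n)) * hw
    nlinarith
  have h5 := le_of_mul_le_mul_left h4 (by positivity)
  have hxn : Real.exp x ≤ n + 1 := by
    rw [← Real.le_log_iff_exp_le (by positivity)]
    have a : Real.log ((n : ℝ) / m + 1) ≤ Real.log (n + 1) := by
      apply Real.log_le_log (by positivity)
      have : (n : ℝ) / m ≤ n := div_le_self (by positivity) (by linarith)
      linarith
    have b : x ≤ Real.log ((n : ℝ) / m + 1) := by
      rw [← hxe, div_le_iff₀ (by positivity)]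
      nlinarith
    linarith
  have h6 := exp_arith hmR hnR hK1 hδ hx hxn
  have h7 : R (wgrid m n) * (n * Real.exp (-(9 * x ^ 2))) ≤
      Real.exp (x ^ 2 / 2) * ∑ k ∈ Finset.range m, R (wgrid m (n - m + k)) := by
    refine le_trans ?_ h5
    gcongr
  rw [hxe]
  set S := ∑ k ∈ Finset.range m, R (wgrid m (n - m + k)) with hS
  have h8 : Real.exp (-(x ^ 2 / 2)) * (R (wgrid m n) * (n * Real.exp (-(9 * x ^ 2)))) ≤ S := by
    have := mul_le_mul_of_nonneg_left h7 (Real.exp_pos (-(x ^ 2 / 2))).le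
    rw [← mul_assoc, ← mul_assoc (Real.exp (-(x ^ 2 / 2))), ← Real.exp_add] at this
    simp only [neg_add_cancel, Real.exp_zero, one_mul] at this
    rw [mul_assoc] at this
    exact this
  refine le_trans ?_ h8
  have : Real.exp (-(x ^ 2 / 2)) * (R (wgrid m n) * (n * Real.exp (-(9 * x ^ 2)))) =
      n * R (wgrid m n) * Real.exp (-(x ^ 2 / 2) + -(9 * x ^ 2)) := by
    rw [Real.exp_add]; ring
  rw [this]
  gcongr
  nlinarith [sq_nonneg x]

/-- Upper bound for the discrete sequence. -/
theorem p_upper (h : IsD R) {m : ℕ} (hm : 1 ≤ m) {p : ℕ → ℝ} (hp1 : ∀ n, n ≤ m → p n = 1)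
    (hp : ∀ n : ℕ, m ≤ n → (n : ℝ) * p n = ∑ k ∈ Finset.range m, p (n - m + k)) (n : ℕ) :
    p n ≤ (1 + 4 / (2 * m + 1)) * R (wgrid m n) := by
  have hmR : (1 : ℝ) ≤ m := by exact_mod_cast hm
  have hstep : ∀ n, m ≤ n → n ≤ 2 * m → p n ≤ 1 - Real.log (((n : ℝ) + 1) / (m + 1)) := by
    intro n hn
    induction n, hn using Nat.le_induction with
    | base =>
      intro _
      rw [hp1 m le_rfl, div_self (by positivity)]
      simp
    | succ n hn ih =>
      intro hn2
      have ih := ih (by omega)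
      have e1 := hp n hn
      have e2 := hp (n + 1) (by omega)
      have e3 : ∑ k ∈ Finset.range m, p (n + 1 - m + k) + p (n - m) =
          ∑ k ∈ Finset.range m, p (n - m + k) + p n := by
        have a := Finset.sum_range_succ (fun k => p (n - m + k)) m
        have b := Finset.sum_range_succ' (fun k => p (n - m + k)) m
        simp only [add_zero] at b
        rw [show n - m + m = n by omega] at a
        rw [← a, b]
        congr 1
        refine Finset.sum_congr rfl fun k _ => ?_
        congr 1
        omega
      rw [hp1 (n - m) (by omega)] at e3
      push_cast at e2 ⊢
      have hn0 : (0 : ℝ) < n := by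
        have : 0 < n := by omega
        exact_mod_cast this
      have e4 : p (n + 1) = p n - 1 / (n + 1) := by
        field_simp
        linarith
      have hlog : Real.log (((n : ℝ) + 1 + 1) / (m + 1)) ≤
          Real.log (((n : ℝ) + 1) / (m + 1)) + 1 / (n + 1) := by
        have e5 : ((n : ℝ) + 1 + 1) / (m + 1) = (((n : ℝ) + 1) / (m + 1)) * (1 + 1 / (n + 1)) := by
          field_simp
        rw [e5, Real.log_mul (by positivity) (by positivity)]
        have := Real.log_le_sub_one_of_pos (show (0:ℝ) < 1 + 1 / (n + 1) by positivity)
        linarith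
      linarith
  induction n using Nat.strong_induction_on with
  | _ n ih =>
    rcases le_total n m with h1 | h1
    · rw [hp1 n h1, h.one _ (wgrid_le_one h1)]
      have : (0:ℝ) ≤ 4 / (2 * (m : ℝ) + 1) := by positivity
      linarith
    · rcases Nat.lt_or_ge n (2 * m + 1) with h2 | h2
      · have a := hstep n h1 (by omega)
        have hw1 := wgrid_ge_one h1
        have hw2 : wgrid m n ≤ 2 := by
          unfold wgrid
          rw [div_le_iff₀ (by positivity)]
          have : (n : ℝ) ≤ 2 * m := by exact_mod_cast (by omega : n ≤ 2 * m)
          linarith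
        have b := h.log_eq hw1 hw2
        have c : 1 / 4 ≤ R (wgrid m n) := by
          rw [b]
          have := Real.log_le_log (by linarith) hw2
          have := Real.log_two_lt_d9
          linarith
        have d : Real.log (wgrid m n) ≤ Real.log (((n : ℝ) + 1) / (m + 1)) + 1 / (2 * m + 1) := by
          have e : wgrid m n ≤ (((n : ℝ) + 1) / (m + 1)) * (1 + 1 / (2 * m + 1)) := by
            unfold wgrid
            have : ((n : ℝ) + 1) / (m + 1) * (1 + 1 / (2 * m + 1)) =
              (2 * n + 2) / (2 * m + 1) := by field_simp; ring
            rw [this]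
            gcongr
            norm_num
          have f := Real.log_le_log (by linarith) e
          rw [Real.log_mul (by positivity) (by positivity)] at f
          have := Real.log_le_sub_one_of_pos (show (0:ℝ) < 1 + 1 / (2 * m + 1) by positivity)
          linarith
        have g : 1 / (2 * (m : ℝ) + 1) ≤ 4 / (2 * m + 1) * R (wgrid m n) := by
          rw [div_mul_eq_mul_div]
          gcongr
          linarith
        linarith
      · have e := hp n h1
        have hn0 : (0 : ℝ) < n := by
          have : 0 < n := by omega
          exact_mod_cast this
        have s1 : ∑ k ∈ Finset.range m, p (n - m + k) ≤
            ∑ k ∈ Finset.range m, (1 + 4 / (2 * (m : ℝ) + 1)) * R (wgrid m (n - m + k)) := by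
          refine Finset.sum_le_sum fun k hk => ih _ ?_
          rw [Finset.mem_range] at hk
          omega
        rw [← Finset.mul_sum] at s1
        have s2 := h.sum_upper h2
        have s3 : (n : ℝ) * p n ≤ n * ((1 + 4 / (2 * m + 1)) * R (wgrid m n)) := by
          rw [e]
          refine s1.trans ?_
          have : (0:ℝ) ≤ 1 + 4 / (2 * (m : ℝ) + 1) := by positivity
          calc _ ≤ (1 + 4 / (2 * (m : ℝ) + 1)) * (n * R (wgrid m n)) := by gcongr
            _ = _ := by ring
        exact le_of_mul_le_mul_left s3 hn0

theorem sum_weight (R' : ℕ → ℝ) (m : ℕ) (hR : Antitone R') :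
    ((m : ℝ) + 1) / 2 * ∑ k ∈ Finset.range m, R' k ≤
      ∑ k ∈ Finset.range m, R' k * ((m : ℝ) - k) := by
  rcases Nat.eq_zero_or_pos m with rfl | hm
  · simp
  have hmono : MonovaryOn R' (fun k : ℕ => (m : ℝ) - k) (Finset.range m) := by
    intro i _ j _ hij
    simp only [sub_lt_sub_iff_left, Nat.cast_lt] at hij
    exact hR hij.le
  have h1 := hmono.sum_mul_sum_le_card_mul_sum
  have h2 : ∑ k ∈ Finset.range m, ((m : ℝ) - k) = m * (m + 1) / 2 := by
    rw [Finset.sum_sub_distrib]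
    have : ∑ k ∈ Finset.range m, (k : ℝ) = m * (m - 1) / 2 := by
      clear h1 hmono hm
      induction m with
      | zero => simp
      | succ m ih => rw [Finset.sum_range_succ, ih]; push_cast; ring
    rw [this]
    simp
    ring
  rw [h2, Finset.card_range] at h1
  have hm0 : (0 : ℝ) < m := by exact_mod_cast hm
  refine le_of_mul_le_mul_left ?_ hm0
  calc _ = (∑ k ∈ Finset.range m, R' k) * (m * (m + 1) / 2) := by ring
    _ ≤ _ := h1

/-- Lower bound for the discrete sequence. -/
theorem p_lower (h : IsD R) {m N : ℕ} (hm : 2 ≤ m) {p : ℕ → ℝ} (hp1 : ∀ n, n ≤ m → p n = 1)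
    (hp : ∀ n : ℕ, m ≤ n → (n : ℝ) * p n = ∑ k ∈ Finset.range m, p (n - m + k)) (n : ℕ)
    (hn : n ≤ N) :
    R (wgrid m n) *
      Real.exp (-(20 * (4 * Real.log ((N : ℝ) / m + 1) / (2 * m + 1)) ^ 2 / m * n)) ≤ p n := by
  have hmR : (2 : ℝ) ≤ m := by exact_mod_cast hm
  set x : ℝ := 4 * Real.log ((N : ℝ) / m + 1) / (2 * m + 1) with hx
  set α : ℝ := 20 * x ^ 2 / m with hα
  have hα0 : 0 ≤ α := by positivity
  induction n using Nat.strong_induction_on with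
  | _ n ih =>
    rcases le_total n m with h1 | h1
    · rw [hp1 n h1, h.one _ (wgrid_le_one h1), one_mul]
      refine Real.exp_le_one_iff.2 ?_
      have : 0 ≤ α * n := by positivity
      linarith
    · have hn0 : (0 : ℝ) < n := by
        have : 0 < n := by omega
        exact_mod_cast this
      have hnm : (m : ℝ) ≤ n := by exact_mod_cast h1
      refine le_of_mul_le_mul_left ?_ hn0
      rw [hp n h1]
      have s1 : ∑ k ∈ Finset.range m,
          R (wgrid m (n - m + k)) * Real.exp (-(α * ((n - m + k : ℕ) : ℝ))) ≤
          ∑ k ∈ Finset.range m, p (n - m + k) := by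
        refine Finset.sum_le_sum fun k hk => ?_
        rw [Finset.mem_range] at hk
        exact ih _ (by omega) (by omega)
      refine le_trans ?_ s1
      set S := ∑ k ∈ Finset.range m, R (wgrid m (n - m + k)) with hS
      have s2 : Real.exp (-(α * n)) * Real.exp (α * m / 2) * S ≤ ∑ k ∈ Finset.range m,
          R (wgrid m (n - m + k)) * Real.exp (-(α * ((n - m + k : ℕ) : ℝ))) := by
        have t1 : ∀ k ∈ Finset.range m, Real.exp (-(α * n)) * Real.exp (α * (m + 1) / 2) *
            (R (wgrid m (n - m + k)) * (1 + α * ((m : ℝ) - k - (m + 1) / 2))) ≤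
            R (wgrid m (n - m + k)) * Real.exp (-(α * ((n - m + k : ℕ) : ℝ))) := by
          intro k hk
          have e : Real.exp (-(α * ((n - m + k : ℕ) : ℝ))) =
              Real.exp (-(α * n)) * Real.exp (α * (m + 1) / 2) *
                Real.exp (α * ((m : ℝ) - k - (m + 1) / 2)) := by
            rw [← Real.exp_add, ← Real.exp_add]
            congr 1
            push_cast [h1]
            ring
          rw [e]
          have := Real.add_one_le_exp (α * ((m : ℝ) - k - (m + 1) / 2))
          have hR := h.pos (wgrid m (n - m + k))
          calc _ ≤ Real.exp (-(α * n)) * Real.exp (α * (m + 1) / 2) *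
            (R (wgrid m (n - m + k)) * Real.exp (α * ((m : ℝ) - k - (m + 1) / 2))) := by
                gcongr
                linarith
            _ = _ := by ring
        refine le_trans ?_ (Finset.sum_le_sum t1)
        rw [← Finset.mul_sum]
        have hw := sum_weight (fun k => R (wgrid m (n - m + k))) m (by
          intro a b hab
          exact h.anti (wgrid_mono m (by omega)))
        have t2 : S ≤ ∑ k ∈ Finset.range m,
            (R (wgrid m (n - m + k)) * (1 + α * ((m : ℝ) - k - (m + 1) / 2))) := by
          have : ∑ k ∈ Finset.range m,
            (R (wgrid m (n - m + k)) * (1 + α * ((m : ℝ) - k - (m + 1) / 2))) =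
            S + α * (∑ k ∈ Finset.range m, R (wgrid m (n - m + k)) * ((m : ℝ) - k)
              - ((m : ℝ) + 1) / 2 * S) := by
            rw [hS, Finset.mul_sum, ← Finset.sum_sub_distrib, Finset.mul_sum,
              ← Finset.sum_add_distrib]
            refine Finset.sum_congr rfl fun k _ => ?_
            ring
          rw [this]
          have : 0 ≤ α * (∑ k ∈ Finset.range m, R (wgrid m (n - m + k)) * ((m : ℝ) - k)
              - ((m : ℝ) + 1) / 2 * S) := mul_nonneg hα0 (by linarith)
          linarith
        have hS0 : 0 ≤ S := Finset.sum_nonneg fun k _ => (h.pos _).le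
        gcongr
        linarith
      refine le_trans ?_ s2
      have s3 := h.sum_lower hm h1
      set y : ℝ := 4 * Real.log ((n : ℝ) / m + 1) / (2 * m + 1) with hy
      have hyx : y ^ 2 ≤ x ^ 2 := by
        have hl : 0 ≤ Real.log ((n : ℝ) / m + 1) := by
          apply Real.log_nonneg
          have : 0 ≤ (n : ℝ) / m := by positivity
          linarith
        have hy0 : 0 ≤ y := by positivity
        have : y ≤ x := by
          rw [hy, hx]
          gcongr
        gcongr
      have s4 : n * R (wgrid m n) * Real.exp (-(10 * x ^ 2)) ≤ S := by
        refine le_trans ?_ s3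
        have := h.pos (wgrid m n)
        gcongr
      have hαm : α * m / 2 = 10 * x ^ 2 := by
        rw [hα]; field_simp; ring
      rw [hαm]
      calc (n : ℝ) * (R (wgrid m n) * Real.exp (-(α * n))) =
          Real.exp (-(α * n)) * Real.exp (10 * x ^ 2) *
            (n * R (wgrid m n) * Real.exp (-(10 * x ^ 2))) := by
            rw [Real.exp_neg (10 * x ^ 2)]
            have := Real.exp_pos (10 * x ^ 2)
            field_simp
        _ ≤ _ := by gcongr

/-- Crude lower bound for the discrete sequence. -/
theorem p_crude {m N : ℕ} (hm : 1 ≤ m) {p : ℕ → ℝ} (hp1 : ∀ n, n ≤ m → p n = 1)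
    (hp0 : ∀ n, 0 ≤ p n)
    (hp : ∀ n : ℕ, m ≤ n → (n : ℝ) * p n = ∑ k ∈ Finset.range m, p (n - m + k)) (n : ℕ)
    (hn : n ≤ N) : Real.exp (-((n : ℝ) / m * Real.log N)) ≤ p n := by
  have hmR : (1 : ℝ) ≤ m := by exact_mod_cast hm
  induction n using Nat.strong_induction_on with
  | _ n ih =>
    have hlog : 0 ≤ Real.log N := Real.log_natCast_nonneg N
    rcases le_total n m with h1 | h1
    · rw [hp1 n h1]
      refine Real.exp_le_one_iff.2 ?_
      have : 0 ≤ (n : ℝ) / m * Real.log N := by positivity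
      linarith
    · have hn0 : (0 : ℝ) < n := by
        have : 0 < n := by omega
        exact_mod_cast this
      have hN0 : (n : ℝ) ≤ N := by exact_mod_cast hn
      refine le_of_mul_le_mul_left ?_ hn0
      rw [hp n h1]
      have s1 : p (n - m + 0) ≤ ∑ k ∈ Finset.range m, p (n - m + k) :=
        Finset.single_le_sum (f := fun k => p (n - m + k)) (fun k _ => hp0 _) (by simp; omega)
      refine le_trans ?_ s1
      refine le_trans ?_ (ih _ (by omega) (by omega))
      have e : -(((n - m + 0 : ℕ) : ℝ) / m * Real.log N) = -((n : ℝ) / m * Real.log N) + Real.log N := by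
        push_cast [h1]
        field_simp
        ring
      rw [e, Real.exp_add, Real.exp_log (by linarith), mul_comm]
      gcongr

end IsD

/-! ### Sequences defined by logarithmic-derivative recurrences -/

/-- The solution of `n f n = ∑ c j f (n-j)`, `f 0 = 1`. -/
noncomputable def sol (c : ℕ → ℝ) : ℕ → ℝ
  | 0 => 1
  | n + 1 => (∑ j : Fin (n + 1), c (n + 1 - j) * sol c j) / ((n : ℝ) + 1)
decreasing_by exact j.2

namespace Sol

/-- the recurrence -/
def Rec (c f : ℕ → ℝ) : Prop :=
  f 0 = 1 ∧ ∀ n : ℕ, (n : ℝ) * f n = ∑ x ∈ Finset.HasAntidiagonal.antidiagonal n, c x.1 * f x.2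

theorem sum_split (c f : ℕ → ℝ) (hc : c 0 = 0) (n : ℕ) :
    ∑ x ∈ Finset.HasAntidiagonal.antidiagonal n, c x.1 * f x.2 = ∑ j ∈ Finset.range n, c (n - j) * f j := by
  rw [Finset.Nat.sum_antidiagonal_eq_sum_range_succ_mk, ← Finset.sum_range_reflect,
    Finset.sum_range_succ]
  simp only [Nat.succ_eq_add_one, Nat.add_sub_cancel, Nat.sub_self, hc, zero_mul, add_zero]
  refine Finset.sum_congr rfl fun j hj => ?_
  rw [Nat.sub_sub_self (Finset.mem_range.1 hj).le]

theorem rec_sol (c : ℕ → ℝ) (hc : c 0 = 0) : Rec c (sol c) := by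
  refine ⟨by simp [sol], fun n => ?_⟩
  rw [sum_split _ _ hc]
  cases n with
  | zero => simp
  | succ n =>
    rw [sol, Finset.sum_range]
    push_cast
    field_simp

theorem rec_unique {c f g : ℕ → ℝ} (hc : c 0 = 0) (hf : Rec c f) (hg : Rec c g) (n : ℕ) :
    f n = g n := by
  induction n using Nat.strong_induction_on with
  | _ n ih =>
    rcases Nat.eq_zero_or_pos n with rfl | hn
    · rw [hf.1, hg.1]
    · have h1 := hf.2 n
      have h2 := hg.2 n
      rw [sum_split _ _ hc] at h1 h2
      have h3 : (n : ℝ) * f n = n * g n := by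
        rw [h1, h2]
        exact Finset.sum_congr rfl fun j hj => by rw [ih j (Finset.mem_range.1 hj)]
      exact mul_left_cancel₀ (by positivity) h3

theorem rec_nonneg {c f : ℕ → ℝ} (h0 : ∀ j, 0 ≤ c j) (hc : c 0 = 0) (hf : Rec c f) (n : ℕ) :
    0 ≤ f n := by
  induction n using Nat.strong_induction_on with
  | _ n ih =>
    rcases Nat.eq_zero_or_pos n with rfl | hn
    · rw [hf.1]; norm_num
    · have h1 := hf.2 n
      rw [sum_split _ _ hc] at h1
      have h3 : 0 ≤ (n : ℝ) * f n := by
        rw [h1]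
        exact Finset.sum_nonneg fun j hj => mul_nonneg (h0 _) (ih j (Finset.mem_range.1 hj))
      exact nonneg_of_mul_nonneg_right h3 (by positivity)

open PowerSeries in
theorem rec_iff (c f : ℕ → ℝ) : (∀ n : ℕ, (n : ℝ) * f n = ∑ x ∈ Finset.HasAntidiagonal.antidiagonal n, c x.1 * f x.2)
    ↔ (X : PowerSeries ℝ) * (PowerSeries.derivative ℝ) (PowerSeries.mk f) = PowerSeries.mk c * PowerSeries.mk f := by
  rw [PowerSeries.ext_iff]
  refine forall_congr' fun n => ?_
  rw [PowerSeries.coeff_mul (φ := PowerSeries.mk c)]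
  simp only [PowerSeries.coeff_mk]
  cases n with
  | zero => simp
  | succ n =>
    rw [PowerSeries.coeff_succ_X_mul, PowerSeries.coeff_derivative, PowerSeries.coeff_mk]
    push_cast
    rw [mul_comm (f (n+1))]

theorem rec_conv {a b f g : ℕ → ℝ} (hf : Rec a f) (hg : Rec b g) :
    Rec (fun j => a j + b j) (fun n => ∑ x ∈ Finset.HasAntidiagonal.antidiagonal n, f x.1 * g x.2) := by
  refine ⟨by simp [hf.1, hg.1], ?_⟩
  refine (rec_iff (fun j => a j + b j)
    (fun n => ∑ x ∈ Finset.HasAntidiagonal.antidiagonal n, f x.1 * g x.2)).2 ?_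
  have h1 := (rec_iff a f).1 hf.2
  have h2 := (rec_iff b g).1 hg.2
  have e1 : PowerSeries.mk (fun n => ∑ x ∈ Finset.HasAntidiagonal.antidiagonal n, f x.1 * g x.2) =
      PowerSeries.mk f * PowerSeries.mk g := by
    ext n; rw [PowerSeries.coeff_mul]; simp
  have e2 : PowerSeries.mk (fun j => a j + b j) = PowerSeries.mk a + PowerSeries.mk b := by
    ext n; simp
  rw [e1, e2, Derivation.leibniz, smul_eq_mul, smul_eq_mul]
  linear_combination (PowerSeries.mk g) * h1 + (PowerSeries.mk f) * h2

theorem sum_bound {b g : ℕ → ℝ} (h0 : ∀ j, 0 ≤ b j) (hb : b 0 = 0) (hg : Rec b g) {r : ℝ}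
    (hr : 0 ≤ r) (n : ℕ) :
    ∑ k ∈ Finset.range (n + 1), g k * r ^ k ≤
      1 + (∑ i ∈ Finset.range (n + 1), b i * r ^ i / i) * ∑ k ∈ Finset.range (n + 1), g k * r ^ k := by
  have gn := rec_nonneg h0 hb hg
  set f : ℕ × ℕ → ℝ := fun x => (b x.1 * r ^ x.1 / x.1) * (g x.2 * r ^ x.2) with hfdef
  have f0 : ∀ x, 0 ≤ f x := fun x => by
    have := h0 x.1
    have := gn x.2
    simp only [hfdef]; positivity
  have key : ∀ k, g k * r ^ k ≤ (if k = 0 then 1 else 0) + ∑ x ∈ Finset.HasAntidiagonal.antidiagonal k, f x := by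
    intro k
    have hs : 0 ≤ ∑ x ∈ Finset.HasAntidiagonal.antidiagonal k, f x := Finset.sum_nonneg fun x _ => f0 x
    rcases Nat.eq_zero_or_pos k with rfl | hk
    · rw [hg.1]; simpa using f0 (0, 0)
    · rw [if_neg hk.ne', zero_add]
      have hk' : (0:ℝ) < k := by exact_mod_cast hk
      have e : g k = (∑ x ∈ Finset.HasAntidiagonal.antidiagonal k, b x.1 * g x.2) / k := by
        rw [← hg.2 k]; field_simp
      rw [e, div_mul_eq_mul_div, Finset.sum_mul, Finset.sum_div]
      refine Finset.sum_le_sum fun x hx => ?_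
      rw [Finset.HasAntidiagonal.mem_antidiagonal] at hx
      simp only [hfdef]
      rcases Nat.eq_zero_or_pos x.1 with h | h
      · rw [h, hb]; simp
      · have hx1 : (0:ℝ) < x.1 := by exact_mod_cast h
        have hle : (x.1 : ℝ) ≤ k := by exact_mod_cast (by omega)
        have := h0 x.1
        have := gn x.2
        calc b x.1 * g x.2 * r ^ k / k ≤ b x.1 * g x.2 * r ^ k / x.1 := by gcongr
          _ = _ := by rw [← hx, pow_add]; ring
  calc ∑ k ∈ Finset.range (n + 1), g k * r ^ k
      ≤ ∑ k ∈ Finset.range (n + 1), ((if k = 0 then 1 else 0) + ∑ x ∈ Finset.HasAntidiagonal.antidiagonal k, f x) :=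
        Finset.sum_le_sum fun k _ => key k
    _ = 1 + ∑ k ∈ Finset.range (n + 1), ∑ x ∈ Finset.HasAntidiagonal.antidiagonal k, f x := by
        rw [Finset.sum_add_distrib]; simp
    _ ≤ 1 + ∑ x ∈ Finset.range (n + 1) ×ˢ Finset.range (n + 1), f x := by
        gcongr
        have : ∀ k ∈ Finset.range (n + 1), ∑ x ∈ Finset.HasAntidiagonal.antidiagonal k, f x =
            ∑ x ∈ Finset.range (n + 1) ×ˢ Finset.range (n + 1) with x.1 + x.2 = k, f x := by
          intro k hk
          congr 1
          ext x
          simp only [Finset.HasAntidiagonal.mem_antidiagonal, Finset.mem_filter, Finset.mem_product,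
            Finset.mem_range] at hk ⊢
          omega
        rw [Finset.sum_congr rfl this]
        exact Finset.sum_fiberwise_le_sum_of_sum_fiber_nonneg
          fun y _ => Finset.sum_nonneg fun x _ => f0 x
    _ = _ := by
        rw [Finset.sum_mul_sum, Finset.sum_product]

/-- The permutation sequence. -/
def ca (m : ℕ) (j : ℕ) : ℝ := if 1 ≤ j ∧ j ≤ m then 1 else 0

theorem perm_one {m : ℕ} : ∀ n, n ≤ m → sol (ca m) n = 1 := by
  intro n
  have hr := rec_sol (ca m) (by simp [ca])
  induction n using Nat.strong_induction_on with
  | _ n ih =>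
    intro hn
    rcases Nat.eq_zero_or_pos n with rfl | hn0
    · exact hr.1
    · have h1 := hr.2 n
      rw [sum_split _ _ (by simp [ca])] at h1
      have : ∑ j ∈ Finset.range n, ca m (n - j) * sol (ca m) j = ∑ j ∈ Finset.range n, (1:ℝ) := by
        refine Finset.sum_congr rfl fun j hj => ?_
        have hj := Finset.mem_range.1 hj
        rw [ih j hj (by omega), ca, if_pos (by omega), mul_one]
      rw [this] at h1
      simp only [Finset.sum_const, Finset.card_range, nsmul_eq_mul] at h1
      exact mul_left_cancel₀ (by positivity) h1

theorem perm_rec {m : ℕ} : ∀ n : ℕ, m ≤ n →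
    (n : ℝ) * sol (ca m) n = ∑ k ∈ Finset.range m, sol (ca m) (n - m + k) := by
  intro n hn
  have h1 := (rec_sol (ca m) (by simp [ca])).2 n
  rw [sum_split _ _ (by simp [ca])] at h1
  rw [h1]
  have e : n = (n - m) + m := by omega
  conv_lhs => rw [show Finset.range n = Finset.range ((n - m) + m) by rw [← e]]
  rw [Finset.sum_range_add]
  have z : ∑ x ∈ Finset.range (n - m), ca m (n - x) * sol (ca m) x = 0 := by
    refine Finset.sum_eq_zero fun x hx => ?_
    have := Finset.mem_range.1 hx
    rw [ca, if_neg (by omega), zero_mul]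
  rw [z, zero_add]
  refine Finset.sum_congr rfl fun x hx => ?_
  have := Finset.mem_range.1 hx
  rw [ca, if_pos (by omega), one_mul]

/-- The convolution structure of polynomial probabilities. -/
theorem polyProb_conv (F : Type) [Field F] [Fintype F] (m : ℕ) :
    ∃ b g : ℕ → ℝ, (∀ j, 0 ≤ b j) ∧ (∀ j, j ≤ m → b j = 0) ∧
      (∀ j, m < j → b j ≤ 2 * (√(Fintype.card F : ℝ))⁻¹ ^ j) ∧ Rec b g ∧
      ∀ n, polyProb F n m = ∑ x ∈ Finset.HasAntidiagonal.antidiagonal n, sol (ca m) x.1 * g x.2 := by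
  obtain ⟨c, c1, c0, c2, hc⟩ := polyProb_rec (F := F) m
  set b : ℕ → ℝ := fun j => if m < j then c j else 0 with hb
  have b0 : b 0 = 0 := by simp [hb]
  refine ⟨b, sol b, ?_, ?_, ?_, rec_sol b b0, ?_⟩
  · intro j; simp only [hb]; split_ifs; exacts [c0 j, le_rfl]
  · intro j hj; simp only [hb]; rw [if_neg (by omega)]
  · intro j hj; simp only [hb]; rw [if_pos hj]; exact c2 j hj
  · intro n
    have h1 := rec_conv (rec_sol (ca m) (by simp [ca])) (rec_sol b b0)
    refine rec_unique (c := fun j => ca m j + b j) (f := fun n => polyProb F n m)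
      (by simp [b0, ca]) ⟨polyProb_zero m, ?_⟩ h1 n
    intro n
    refine (hc n).trans (Eq.trans ?_
      (sum_split (fun j => ca m j + b j) (fun n => polyProb F n m) (by simp [b0, ca]) n).symm)
    refine Finset.sum_bij' (fun j _ => n - j) (fun j _ => n - j) ?_ ?_ ?_ ?_ ?_
    · intro j hj; simp at hj ⊢; omega
    · intro j hj; simp at hj ⊢; omega
    · intro j hj; simp at hj ⊢; omega
    · intro j hj; simp at hj ⊢; omega
    · intro j hj
      have hj := Finset.mem_Icc.1 hj
      rw [Nat.sub_sub_self hj.2]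
      congr 1
      simp only [ca, hb]
      by_cases h : j ≤ m
      · rw [if_pos ⟨hj.1, h⟩, if_neg (by omega), c1 j hj.1 h, add_zero]
      · rw [if_neg (by omega), if_pos (by omega), zero_add]

end Sol

/-! ### Final assembly -/

namespace Fin8

theorem ge_perm (F : Type) [Field F] [Fintype F] (n m : ℕ) :
    sol (Sol.ca m) n ≤ polyProb F n m := by
  obtain ⟨b, g, b0, bz, _, hg, hP⟩ := Sol.polyProb_conv F m
  have g0 := Sol.rec_nonneg b0 (bz 0 (Nat.zero_le _)) hg
  have p0 := Sol.rec_nonneg (c := Sol.ca m) (fun j => by unfold Sol.ca; split_ifs <;> norm_num)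
    (by simp [Sol.ca]) (Sol.rec_sol _ (by simp [Sol.ca]))
  rw [hP n]
  have := Finset.single_le_sum (s := Finset.HasAntidiagonal.antidiagonal n)
    (f := fun x : ℕ × ℕ => sol (Sol.ca m) x.1 * g x.2) (a := (n, 0))
    (fun x _ => mul_nonneg (p0 _) (g0 _)) (by simp)
  simpa [hg.1] using this

theorem tail_bound {b : ℕ → ℝ} {m n : ℕ} (hm : 1 ≤ m) (hmn : m ≤ n)
    (bz : ∀ j, j ≤ m → b j = 0) {t r X : ℝ} (ht : 0 ≤ t) (hr : 0 ≤ r)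
    (hb : ∀ j, m < j → b j ≤ 2 * t ^ j) (hX : (r * t) ^ m ≤ X) (hX2 : X ≤ 1 / 2) :
    ∑ i ∈ Finset.range (n + 1), b i * r ^ i / i ≤ 4 * X := by
  have hm' : (1:ℝ) ≤ m := by exact_mod_cast hm
  set y := r * t with hy
  have y0 : 0 ≤ y := by positivity
  have bern := one_add_mul_le_pow (a := y - 1) (by linarith) m
  have e : n + 1 = m + (n + 1 - m) := by omega
  rw [e, Finset.sum_range_add]
  have z : ∑ x ∈ Finset.range m, b x * r ^ x / x = 0 :=
    Finset.sum_eq_zero fun x hx => by rw [bz x (Finset.mem_range.1 hx).le]; simp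
  rw [z, zero_add]
  set N := n + 1 - m
  have h1 : ∑ x ∈ Finset.range N, b (m + x) * r ^ (m + x) / ((m + x : ℕ) : ℝ) ≤
      ∑ x ∈ Finset.range N, (2 / m * X) * y ^ x := by
    refine Finset.sum_le_sum fun x _ => ?_
    have hX0 : 0 ≤ X := le_trans (by positivity) hX
    rcases Nat.eq_zero_or_pos x with rfl | hx
    · rw [bz (m + 0) (by omega)]; simp; positivity
    · have h2 := hb (m + x) (by omega)
      calc b (m + x) * r ^ (m + x) / ((m + x : ℕ) : ℝ)
          ≤ 2 * t ^ (m + x) * r ^ (m + x) / (m : ℝ) := by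
            gcongr; omega
        _ = 2 / m * y ^ m * y ^ x := by rw [hy, mul_pow, mul_pow, pow_add, pow_add]; ring
        _ ≤ 2 / m * X * y ^ x := by gcongr
  refine h1.trans ?_
  rw [← Finset.mul_sum]
  have h3 := mul_neg_geom_sum y N
  have hyN : 0 ≤ y ^ N := by positivity
  have h4 : 1 / 2 ≤ m * (1 - y) := by
    have : (1 + (y - 1)) ^ m = y ^ m := by congr 1; ring
    rw [this] at bern
    linarith
  set G := ∑ i ∈ Finset.range N, y ^ i with hG
  have G0 : 0 ≤ G := Finset.sum_nonneg fun i _ => by positivity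
  have h5 : G ≤ 2 * m := by nlinarith
  have hX0 : 0 ≤ X := le_trans (by positivity) hX
  calc 2 / m * X * G ≤ 2 / m * X * (2 * m) := by gcongr
    _ = 4 * X := by field_simp; ring

theorem upper {R : ℝ → ℝ} (h : IsD R) (F : Type) [Field F] [Fintype F] {n m : ℕ}
    (hm : 1 ≤ m) (hmn : m ≤ n) {X : ℝ}
    (hX : Real.exp (IsD.kk R (wgrid m n)) * (√(Fintype.card F : ℝ))⁻¹ ^ m ≤ X) (hX8 : X ≤ 1 / 8) :
    polyProb F n m ≤ (1 + 4 / (2 * m + 1)) * R (wgrid m n) * (1 + 8 * X) := by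
  obtain ⟨b, g, b0, bz, hb, hg, hP⟩ := Sol.polyProb_conv F m
  have g0 := Sol.rec_nonneg b0 (bz 0 (Nat.zero_le _)) hg
  have hw := IsD.wgrid_ge_one hmn
  have hk := h.kk_pos hw
  set κ := IsD.kk R (wgrid m n) with hκ
  set r := Real.exp (κ * (2 / (2 * m + 1))) with hr
  have hm' : (1:ℝ) ≤ m := by exact_mod_cast hm
  have hRw := h.pos (wgrid m n)
  have hX0 : 0 ≤ X := le_trans (by positivity) hX
  have hy : (r * (√(Fintype.card F : ℝ))⁻¹) ^ m ≤ X := by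
    refine le_trans ?_ hX
    rw [mul_pow]
    gcongr
    rw [hr, ← Real.exp_nat_mul]
    apply Real.exp_le_exp.2
    have : (m : ℝ) * (2 / (2 * m + 1)) ≤ 1 := by
      rw [mul_div_assoc', div_le_one (by positivity)]; linarith
    nlinarith
  have hY := tail_bound (r := r) hm hmn bz (by positivity) (by positivity) hb hy (by linarith)
  have hS := Sol.sum_bound b0 (bz 0 (Nat.zero_le _)) hg (r := r) (by positivity) n
  set S := ∑ k ∈ Finset.range (n + 1), g k * r ^ k with hSd
  set Y := ∑ i ∈ Finset.range (n + 1), b i * r ^ i / i with hYd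
  have S0 : 0 ≤ S := Finset.sum_nonneg fun k _ => mul_nonneg (g0 k) (by positivity)
  have hS2 : S ≤ 1 + 8 * X := by nlinarith
  have key : polyProb F n m ≤ (1 + 4 / (2 * m + 1)) * R (wgrid m n) * S := by
    rw [hP n, hSd, Finset.mul_sum]
    have e : ∑ k ∈ Finset.range (n + 1), (1 + 4 / (2 * (m:ℝ) + 1)) * R (wgrid m n) * (g k * r ^ k) =
        ∑ x ∈ Finset.HasAntidiagonal.antidiagonal n,
          (1 + 4 / (2 * (m:ℝ) + 1)) * R (wgrid m n) * (g x.2 * r ^ x.2) := by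
      rw [← Finset.Nat.sum_antidiagonal_swap, Finset.Nat.sum_antidiagonal_eq_sum_range_succ_mk]
      rfl
    rw [e]
    refine Finset.sum_le_sum fun x hx => ?_
    rw [Finset.HasAntidiagonal.mem_antidiagonal] at hx
    have h1 := IsD.p_upper h hm Sol.perm_one Sol.perm_rec x.1
    have h2 := h.exp_bound hw (wgrid m x.1)
    have e2 : Real.exp (-κ * (wgrid m x.1 - wgrid m n)) = r ^ x.2 := by
      rw [hr, ← Real.exp_nat_mul]
      congr 1
      rw [← hx]; unfold wgrid; push_cast; field_simp; ring
    rw [e2] at h2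
    have := g0 x.2
    calc sol (Sol.ca m) x.1 * g x.2
        ≤ ((1 + 4 / (2 * m + 1)) * (R (wgrid m n) * r ^ x.2)) * g x.2 := by
          gcongr
          exact h1.trans (by gcongr)
      _ = _ := by ring
  refine key.trans ?_
  gcongr

theorem X_bound {R : ℝ → ℝ} (h : IsD R) {ε : ℝ} (hε : 0 < ε) (F : Type) [Field F] [Fintype F]
    {n m : ℕ} (hm : 1 ≤ m) (hmn : m ≤ n)
    (hyp : (2 + ε) * Real.log n / Real.log (Fintype.card F) ≤ (m : ℝ)) :
    Real.exp (IsD.kk R (wgrid m n)) * (√(Fintype.card F : ℝ))⁻¹ ^ m ≤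
      Real.exp ((1 + ε / 2) * Real.log (2 * (2 + ε) / ε)) / m := by
  have hw := IsD.wgrid_ge_one hmn
  have hwu := IsD.wgrid_le_div hm hmn
  have hm' : (1:ℝ) ≤ m := by exact_mod_cast hm
  have hn' : (1:ℝ) ≤ n := by exact_mod_cast hm.trans hmn
  have hq : (1:ℝ) < (Fintype.card F : ℝ) := by exact_mod_cast Fintype.one_lt_card
  have hlq := Real.log_pos hq
  rw [div_le_iff₀ hlq] at hyp
  set q := (Fintype.card F : ℝ)
  set κ := IsD.kk R (wgrid m n) with hκ
  have hθ0 : 0 < 2 / (2 + ε) := by positivity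
  have hθ1 : 2 / (2 + ε) < 1 := by rw [div_lt_one (by positivity)]; linarith
  have h1 := h.kk_bound hw hθ0 hθ1
  have h2 : (wgrid m n + 2 / (2 + ε)) / (1 - 2 / (2 + ε)) ≤ 2 * (2 + ε) / ε * (n / m) := by
    have e : 1 - 2 / (2 + ε) = ε / (2 + ε) := by field_simp; ring
    rw [e]
    calc (wgrid m n + 2 / (2 + ε)) / (ε / (2 + ε)) ≤ (n / m + n / m) / (ε / (2 + ε)) := by
          refine div_le_div_of_nonneg_right ?_ (by positivity)
          linarith
      _ = _ := by field_simp; ring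
  have h3 : 2 / (2 + ε) * κ ≤ Real.log (2 * (2 + ε) / ε) + (Real.log n - Real.log m) := by
    rw [← Real.log_div (by positivity) (by positivity), ← Real.log_mul (by positivity) (by positivity),
      Real.le_log_iff_exp_le (by positivity)]
    exact h1.trans h2
  have h4 : κ ≤ (1 + ε / 2) * (Real.log (2 * (2 + ε) / ε) + (Real.log n - Real.log m)) := by
    calc κ = (1 + ε / 2) * (2 / (2 + ε) * κ) := by field_simp
      _ ≤ _ := by gcongr
  have e5 : (√q)⁻¹ ^ m = Real.exp (-(m * Real.log q / 2)) := by
    rw [Real.exp_neg, inv_pow]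
    congr 1
    rw [← Real.exp_log (show 0 < √q ^ m by positivity), Real.log_pow, Real.log_sqrt (by positivity)]
    ring_nf
  have hlm : 0 ≤ Real.log m := Real.log_nonneg hm'
  rw [e5, ← Real.exp_add]
  calc Real.exp (κ + -(m * Real.log q / 2)) ≤
      Real.exp ((1 + ε / 2) * Real.log (2 * (2 + ε) / ε) - Real.log m) := by
        apply Real.exp_le_exp.2
        nlinarith
    _ = _ := by rw [Real.exp_sub, Real.exp_log (by positivity)]

set_option maxHeartbeats 1000000 in
theorem stmt_aux {R : ℝ → ℝ} (h : IsD R) {ε : ℝ} (hε : 0 < ε) (F : Type) [Field F] [Fintype F]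
    {n m : ℕ} (hm : 1 ≤ m) (hmn : m ≤ n)
    (hyp : (2 + ε) * Real.log n / Real.log (Fintype.card F) ≤ (m : ℝ)) {u C₁ m₀ : ℝ}
    (hu : u = (n : ℝ) / m) (hC : C₁ = Real.exp ((1 + ε / 2) * Real.log (2 * (2 + ε) / ε)))
    (hm0 : m₀ = 8 * C₁ + 2) :
    |Real.log (polyProb F n m) -
      Real.log (R ((n : ℝ) / (m : ℝ) - (n : ℝ) / (2 * (m : ℝ) ^ 2)))| ≤
    (85 + 8 * C₁ + (10 + 4 * m₀) * m₀ ^ 2) *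
      (u * (Real.log (u + 1)) ^ 2 / (m : ℝ) ^ 2 + 1 / u) := by
  have hm' : (1:ℝ) ≤ m := by exact_mod_cast hm
  have hmn' : (m:ℝ) ≤ n := by exact_mod_cast hmn
  have hu1 : 1 ≤ u := by rw [hu, one_le_div (by positivity)]; exact hmn'
  have hC0 : 0 < C₁ := by rw [hC]; positivity
  set L := Real.log (u + 1) with hL
  have hL2 : 1 / 2 ≤ L := by
    have h1 : Real.log 2 ≤ L := Real.log_le_log (by norm_num) (by linarith)
    have := Real.log_two_gt_d9
    linarith
  set Q := u * L ^ 2 / (m : ℝ) ^ 2 + 1 / u with hQ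
  have Q1 : 2 * L / m ≤ Q := by
    have : Q - 2 * L / m = u * (L / m - 1 / u) ^ 2 := by rw [hQ]; field_simp; ring
    have h2 : 0 ≤ u * (L / m - 1 / u) ^ 2 := by positivity
    linarith
  have Q2 : 1 / m ≤ Q := le_trans (by gcongr; linarith) Q1
  have Q3 : u * L ^ 2 / m ^ 2 ≤ Q := by
    have : 0 ≤ 1 / u := by positivity
    linarith
  have Q4 : u * L / m ^ 2 ≤ 2 * Q := by
    refine le_trans ?_ (mul_le_mul_of_nonneg_left Q3 zero_le_two)
    rw [← mul_div_assoc]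
    have : u * L ≤ 2 * (u * L ^ 2) := by
      have : 0 ≤ u * L * (2 * L - 1) := mul_nonneg (by positivity) (by linarith)
      linarith
    exact div_le_div_of_nonneg_right this (by positivity)
  have Q0 : 0 < Q := by positivity
  have hw := IsD.wgrid_ge_one hmn
  have hwu : wgrid m n ≤ u := by rw [hu]; exact IsD.wgrid_le_div hm hmn
  have hk0 := h.kk_pos hw
  have hk : IsD.kk R (wgrid m n) ≤ 4 * L := IsD.kk_le_log h hw hwu
  set w := wgrid m n with hwd
  set κ := IsD.kk R w
  set v := (n : ℝ) / (m : ℝ) - (n : ℝ) / (2 * (m : ℝ) ^ 2) with hv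
  have hRw := h.pos w
  have hRv := h.pos v
  have ewv : w - v = (2 * m ^ 2 + n) / (2 * m ^ 2 * (2 * m + 1)) := by
    rw [hwd, hv]; unfold wgrid; field_simp; ring
  have wv0 : 0 ≤ w - v := by rw [ewv]; positivity
  have wv1 : w - v ≤ 1 / (2 * m) + u / (4 * m ^ 2) := by
    have e : 1 / (2 * m) + u / (4 * m ^ 2) = (2 * m ^ 2 + n) / (2 * m ^ 2 * (2 * m)) := by
      rw [hu]; field_simp; ring
    rw [ewv, e]
    gcongr
    linarith
  have lv1 : Real.log (R w) ≤ Real.log (R v) := Real.log_le_log hRw (h.anti (by linarith))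
  have lv2 : Real.log (R v) ≤ Real.log (R w) + 3 * Q := by
    have h1 := Real.log_le_log hRv (h.exp_bound hw v)
    rw [Real.log_mul hRw.ne' (Real.exp_pos _).ne', Real.log_exp] at h1
    have h2 : -κ * (v - w) ≤ 4 * L * (1 / (2 * m) + u / (4 * m ^ 2)) := by
      calc -κ * (v - w) = κ * (w - v) := by ring
        _ ≤ _ := by gcongr
    have e : 4 * L * (1 / (2 * m) + u / (4 * m ^ 2)) = 2 * L / m + u * L / m ^ 2 := by
      field_simp; ring
    linarith
  have hPp := ge_perm F n m
  have p0 := Sol.rec_nonneg (c := Sol.ca m) (fun j => by unfold Sol.ca; split_ifs <;> norm_num)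
    (by simp [Sol.ca]) (Sol.rec_sol _ (by simp [Sol.ca]))
  have hcr := IsD.p_crude (N := n) hm Sol.perm_one p0 Sol.perm_rec n le_rfl
  have hpos : 0 < sol (Sol.ca m) n := lt_of_lt_of_le (Real.exp_pos _) hcr
  have hPpos : 0 < polyProb F n m := lt_of_lt_of_le hpos hPp
  have hlP := Real.log_le_log hpos hPp
  have hmm : 0 ≤ (10 + 4 * m₀) * m₀ ^ 2 := by rw [hm0]; positivity
  have eR : (85 + 8 * C₁ + (10 + 4 * m₀) * m₀ ^ 2) * Q =
      85 * Q + 8 * C₁ * Q + (10 + 4 * m₀) * m₀ ^ 2 * Q := by ring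
  by_cases hbig : m₀ ≤ m
  · have hm2 : 2 ≤ m := by
      have : (2:ℝ) ≤ m := by linarith
      exact_mod_cast this
    have lo := IsD.p_lower h hm2 Sol.perm_one Sol.perm_rec n (le_refl n)
    have lo2 := Real.log_le_log (by positivity) lo
    rw [Real.log_mul hRw.ne' (Real.exp_pos _).ne', Real.log_exp, ← hu] at lo2
    have lo3 : 20 * (4 * L / (2 * m + 1)) ^ 2 / m * n ≤ 80 * Q := by
      calc 20 * (4 * L / (2 * m + 1)) ^ 2 / m * n
          ≤ 20 * (4 * L / (2 * m)) ^ 2 / m * n := by gcongr; linarith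
        _ = 80 * (u * L ^ 2 / m ^ 2) := by rw [hu]; field_simp; ring
        _ ≤ _ := by linarith
    have hX := X_bound h hε F hm hmn hyp
    rw [← hC] at hX
    have hX8 : C₁ / m ≤ 1 / 8 := by
      rw [div_le_div_iff₀ (by positivity) (by positivity)]; linarith
    have up := upper h F hm hmn hX hX8
    have up2 := Real.log_le_log hPpos up
    rw [Real.log_mul (by positivity) (by positivity), Real.log_mul (by positivity) (by positivity)] at up2
    have l1 : Real.log (1 + 4 / (2 * m + 1)) ≤ 2 / m := by
      have h1 := Real.log_le_sub_one_of_pos (show (0:ℝ) < 1 + 4 / (2 * m + 1) by positivity)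
      have h2 : (4:ℝ) / (2 * m + 1) ≤ 4 / (2 * m) := by gcongr; linarith
      have h3 : (4:ℝ) / (2 * m) = 2 / m := by field_simp; norm_num
      linarith
    have l2 : Real.log (1 + 8 * (C₁ / m)) ≤ 8 * C₁ * (1 / m) := by
      have h1 := Real.log_le_sub_one_of_pos (show (0:ℝ) < 1 + 8 * (C₁ / m) by positivity)
      have : 8 * (C₁ / m) = 8 * C₁ * (1 / m) := by ring
      linarith
    have l3 : 8 * C₁ * (1 / m) ≤ 8 * C₁ * Q := by gcongr
    have l4 : (2:ℝ) / m = 2 * (1 / m) := by ring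
    have hz : 0 ≤ (10 + 4 * m₀) * m₀ ^ 2 * Q := by positivity
    have hz2 : 0 ≤ 8 * C₁ * Q := by positivity
    rw [abs_le, eR]
    constructor <;> linarith
  · push Not at hbig
    have hm01 : 1 ≤ m₀ := by linarith
    have a1 : Real.log (polyProb F n m) ≤ 0 := Real.log_nonpos hPpos.le (polyProb_le_one n m)
    have a2 : -(u * Real.log n) ≤ Real.log (polyProb F n m) := by
      have := Real.log_le_log (Real.exp_pos _) hcr
      rw [Real.log_exp, ← hu] at this
      linarith
    have a3 : Real.log n ≤ L + m₀ := by
      have e : (n:ℝ) = u * m := by rw [hu]; field_simp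
      rw [e, Real.log_mul (by positivity) (by positivity)]
      have h1 : Real.log u ≤ L := Real.log_le_log (by positivity) (by linarith)
      have h2 := Real.log_le_sub_one_of_pos (show (0:ℝ) < m by positivity)
      linarith
    have b1 : Real.log (R v) ≤ 0 := Real.log_nonpos hRv.le (h.le_one v)
    have b2 : -(4 * L * u) ≤ Real.log (R v) := by
      have h0 := h.exp_bound hw 0
      rw [h.one 0 (by norm_num)] at h0
      have h1 := Real.log_le_log one_pos h0
      rw [Real.log_one, Real.log_mul hRw.ne' (Real.exp_pos _).ne', Real.log_exp] at h1
      have h2 : κ * w ≤ 4 * L * u := by gcongr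
      have h3 : -κ * (0 - w) = κ * w := by ring
      linarith
    have c1 : u * L ≤ 2 * m₀ ^ 2 * Q := by
      have : u * L = (u * L / m ^ 2) * m ^ 2 := by field_simp
      rw [this]
      calc (u * L / m ^ 2) * m ^ 2 ≤ (2 * Q) * m₀ ^ 2 := by gcongr
        _ = _ := by ring
    have c2 : u * Real.log n ≤ (1 + 2 * m₀) * (u * L) := by
      calc u * Real.log n ≤ u * (L + m₀) := by gcongr
        _ ≤ u * (L + m₀ * (2 * L)) := by gcongr; nlinarith
        _ = _ := by ring
    have c3 : (5 + 2 * m₀) * (u * L) ≤ (5 + 2 * m₀) * (2 * m₀ ^ 2 * Q) := by gcongr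
    have c4 : 0 ≤ (85 + 8 * C₁) * Q := by positivity
    have c5 : 0 ≤ u * L := by positivity
    have c6 : 0 ≤ m₀ * (u * L) := by positivity
    have c7 : 0 ≤ (1 + 2 * m₀) * (u * L) := by positivity
    have e1 : (5 + 2 * m₀) * (2 * m₀ ^ 2 * Q) = (10 + 4 * m₀) * m₀ ^ 2 * Q := by ring
    have e2 : (5 + 2 * m₀) * (u * L) = (1 + 2 * m₀) * (u * L) + 4 * L * u := by ring
    have e3 : (85 + 8 * C₁) * Q = 85 * Q + 8 * C₁ * Q := by ring
    have e4 : 4 * L * u = 4 * (u * L) := by ring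
    rw [abs_le, eR]
    constructor <;> linarith

end Fin8

/-- For every `ε > 0` there exists `C > 0` such that for every prime power
`q` (the cardinality of a finite field `F`) and all integers `n ≥ m ≥ (2+ε)·log_q n`,
writing `u = n/m`, one has
`|log p_{n,m,q} − log ρ(n/m − n/(2m²))| ≤ C·(u·(log(u+1))²/m² + 1/u)`. -/
theorem stmt8 :
    ∀ ε : ℝ, 0 < ε → ∃ C : ℝ, 0 < C ∧
      ∀ (F : Type) [Field F] [Fintype F], ∀ n m : ℕ, 1 ≤ m → m ≤ n →
      (2 + ε) * Real.log n / Real.log (Fintype.card F) ≤ (m : ℝ) →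
      ∀ ρ : ℝ → ℝ, IsDickman ρ → ∀ u : ℝ, u = (n : ℝ) / (m : ℝ) →
      |Real.log (polyProb F n m) -
          Real.log (ρ ((n : ℝ) / (m : ℝ) - (n : ℝ) / (2 * (m : ℝ) ^ 2)))| ≤
        C * (u * (Real.log (u + 1)) ^ 2 / (m : ℝ) ^ 2 + 1 / u) := by
  intro ε hε
  set C₁ := Real.exp ((1 + ε / 2) * Real.log (2 * (2 + ε) / ε)) with hC
  have hC0 : 0 < C₁ := Real.exp_pos _
  refine ⟨85 + 8 * C₁ + (10 + 4 * (8 * C₁ + 2)) * (8 * C₁ + 2) ^ 2, by positivity, ?_⟩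
  intro F _ _ n m hm hmn hyp ρ hρ u hu
  have h := Fin8.stmt_aux hρ.isD hε F hm hmn hyp hu hC rfl
  have hv : 0 ≤ (n : ℝ) / (m : ℝ) - (n : ℝ) / (2 * (m : ℝ) ^ 2) := by
    have hm' : (1:ℝ) ≤ m := by exact_mod_cast hm
    have e : (n : ℝ) / (m : ℝ) - (n : ℝ) / (2 * (m : ℝ) ^ 2) =
        n * (2 * m - 1) / (2 * (m : ℝ) ^ 2) := by field_simp
    rw [e]
    have : 0 ≤ 2 * (m : ℝ) - 1 := by linarith
    positivity
  simp only [max_eq_left hv] at h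
  exact h
end

section
/- For every ε > 0 and every A > 0 there exists C > 0 such that for every prime power q and all integers n ≥ m ≥ 1 satisfying m ≥ (2+ε)·(log n)/(log q) and √(n·log n) ≤ A·m, writing u = n/m, one has | p_{n,m,q} / ρ( n/m − n/(2m²) ) − 1 | ≤ C·log(u+1)/m. -/
open Real

namespace DK

open Set intervalIntegral

variable {ρ : ℝ → ℝ}

lemma mvt (h : IsDickman ρ) {x y : ℝ} (hx : 1 ≤ x) (hxy : x < y) :
    ∃ c ∈ Ioo x y, ρ x - ρ y = ρ (c - 1) / c * (y - x) := by
  obtain ⟨hc, hp, h1, hd⟩ := h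
  obtain ⟨c, hc1, hc2⟩ := exists_hasDerivAt_eq_slope ρ (fun t => -(ρ (t - 1)) / t) hxy
    (hc.mono (fun z hz => by simp only [mem_Icc] at hz; simp only [mem_Ici]; linarith))
    (fun z hz => hd z (by linarith [hz.1]))
  refine ⟨c, hc1, ?_⟩
  have : y - x ≠ 0 := by linarith
  have h3 : -(ρ (c - 1)) / c * (y - x) = ρ y - ρ x := by
    rw [hc2]; field_simp
  rw [neg_div] at h3
  linarith

lemma anti (h : IsDickman ρ) {x y : ℝ} (hx : 0 ≤ x) (hxy : x ≤ y) : ρ y ≤ ρ x := by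
  have key : ∀ x y : ℝ, 1 ≤ x → x ≤ y → ρ y ≤ ρ x := by
    intro x y hx hxy
    rcases hxy.eq_or_lt with rfl | hlt
    · exact le_rfl
    obtain ⟨c, hc, he⟩ := mvt h hx hlt
    have h1 : 0 < ρ (c - 1) := h.2.1 _ (by linarith [hc.1])
    have h2 : 0 < c := by linarith [hc.1]
    have : 0 ≤ ρ (c - 1) / c * (y - x) := by
      apply mul_nonneg (by positivity) (by linarith)
    linarith
  rcases le_total 1 x with h1 | h1
  · exact key x y h1 hxy
  · rw [h.2.2.1 x ⟨hx, h1⟩]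
    rcases le_total 1 y with h2 | h2
    · have := key 1 y le_rfl h2
      rwa [h.2.2.1 1 ⟨by norm_num, le_rfl⟩] at this
    · rw [h.2.2.1 y ⟨by linarith, h2⟩]

lemma D_anti (h : IsDickman ρ) {x y : ℝ} (hx : 1 ≤ x) (hxy : x ≤ y) :
    ρ (y - 1) / y ≤ ρ (x - 1) / x := by
  have h1 : ρ (y - 1) ≤ ρ (x - 1) := anti h (by linarith) (by linarith)
  have h2 : 0 < ρ (y - 1) := h.2.1 _ (by linarith)
  have h3 : 0 < ρ (x - 1) := h.2.1 _ (by linarith)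
  exact div_le_div₀ h3.le h1 (by linarith) hxy

lemma slope_le (h : IsDickman ρ) {x y : ℝ} (hx : 1 ≤ x) (hxy : x ≤ y) :
    ρ x - ρ y ≤ ρ (x - 1) / x * (y - x) := by
  rcases hxy.eq_or_lt with rfl | hlt
  · simp
  obtain ⟨c, hc, he⟩ := mvt h hx hlt
  rw [he]
  exact mul_le_mul_of_nonneg_right (D_anti h hx hc.1.le) (by linarith)

lemma le_slope (h : IsDickman ρ) {x y : ℝ} (hx : 1 ≤ x) (hxy : x ≤ y) :
    ρ (y - 1) / y * (y - x) ≤ ρ x - ρ y := by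
  rcases hxy.eq_or_lt with rfl | hlt
  · simp
  obtain ⟨c, hc, he⟩ := mvt h hx hlt
  rw [he]
  exact mul_le_mul_of_nonneg_right (D_anti h (by linarith [hc.1]) hc.2.le) (by linarith)

lemma integral_eq (h : IsDickman ρ) (hcont : Continuous ρ) {t : ℝ} (ht : 1 ≤ t) :
    t * ρ t = ∫ s in (t-1)..t, ρ s := by
  have hP : ∀ t, HasDerivAt (fun t => ∫ s in (0:ℝ)..t, ρ s) (ρ t) t := fun t =>
    integral_hasDerivAt_right (hcont.intervalIntegrable _ _)
      (hcont.stronglyMeasurableAtFilter _ _) hcont.continuousAt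
  set P := fun t => ∫ s in (0:ℝ)..t, ρ s with hPdef
  have hPc : Continuous P := continuous_iff_continuousAt.2 fun t => (hP t).continuousAt
  have e1 : ∀ t, ∫ s in (t-1)..t, ρ s = P t - P (t - 1) := by
    intro t
    rw [hPdef]
    simp only
    rw [integral_interval_sub_left (hcont.intervalIntegrable _ _) (hcont.intervalIntegrable _ _)]
  have base : P 1 - P 0 = 1 := by
    have : ∫ s in (0:ℝ)..1, ρ s = ∫ s in (0:ℝ)..1, (1:ℝ) := by
      apply integral_congr
      intro s hs
      rw [uIcc_of_le (by norm_num)] at hs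
      exact h.2.2.1 s hs
    simp [hPdef, this]
  rw [e1]
  rcases ht.eq_or_lt with rfl | hlt
  · rw [h.2.2.1 1 ⟨by norm_num, le_rfl⟩]; norm_num; linarith
  have hd : ∀ z ∈ Ioo 1 t, HasDerivAt (fun t => t * ρ t - (P t - P (t-1)))
      (0:ℝ) z := by
    intro z hz
    have a1 := (hasDerivAt_id z).mul (h.2.2.2 z hz.1)
    have a2 : HasDerivAt (fun t => P (t - 1)) (ρ (z - 1)) z := by
      exact (hP (z-1)).comp_sub_const z 1
    have a3 := a1.sub ((hP z).sub a2)
    refine a3.congr_deriv ?_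
    have : z ≠ 0 := by linarith [hz.1]
    simp only [id]
    field_simp
    ring
  obtain ⟨c, hc1, hc2⟩ := exists_hasDerivAt_eq_slope (fun t => t * ρ t - (P t - P (t-1)))
    (fun _ => 0) hlt (by
      apply Continuous.continuousOn
      exact (continuous_id.mul hcont).sub (hPc.sub (hPc.comp (continuous_id.sub continuous_const))))
    hd
  have hne : t - 1 ≠ 0 := by linarith
  rw [eq_comm, div_eq_zero_iff] at hc2
  rcases hc2 with hc2 | hc2
  · have h11 := h.2.2.1 1 ⟨by norm_num, le_rfl⟩
    norm_num [h11] at hc2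
    linarith
  · exact absurd hc2 hne

/-- exponential comparison -/
lemma exp_comp (h : IsDickman ρ) {c b : ℝ} (hc : 0 ≤ c)
    (hb : ∀ s, 1 < s → s ≤ b → ρ (s - 1) ≤ c * s * ρ s) {a : ℝ} (ha : 0 ≤ a) (hab : a ≤ b) :
    ρ a ≤ ρ b * exp (c * (b - a)) := by
  have key : ∀ a, 1 ≤ a → a ≤ b → ρ a ≤ ρ b * exp (c * (b - a)) := by
    intro a ha hab
    have hder : ∀ s, 1 < s → HasDerivAt (fun s => ρ s * exp (c * s))
        (-(ρ (s - 1)) / s * exp (c * s) + ρ s * (exp (c * s) * c)) s := by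
      intro s hs
      have := ((hasDerivAt_id s).const_mul c).exp
      simp only [id, mul_one] at this
      exact (h.2.2.2 s hs).mul this
    have mono : MonotoneOn (fun s => ρ s * exp (c * s)) (Icc 1 b) := by
      apply monotoneOn_of_deriv_nonneg (convex_Icc _ _)
      · apply ContinuousOn.mul
        · exact h.1.mono (fun z hz => by simp only [mem_Icc] at hz; simp only [mem_Ici]; linarith)
        · fun_prop
      · intro s hs
        rw [interior_Icc] at hs
        exact (hder s hs.1).differentiableAt.differentiableWithinAt
      · intro s hs
        rw [interior_Icc] at hs
        rw [(hder s hs.1).deriv]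
        have h1 := hb s hs.1 hs.2.le
        have h2 : 0 < s := by linarith [hs.1]
        have h3 : ρ (s-1) / s ≤ c * ρ s := by
          rw [div_le_iff₀ h2]; linarith
        have h4 := exp_pos (c * s)
        rw [neg_div]
        nlinarith
    have := mono ⟨ha, hab⟩ ⟨by linarith, le_rfl⟩ hab
    simp only at this
    have e : exp (c * b) = exp (c * (b - a)) * exp (c * a) := by
      rw [← exp_add]; ring_nf
    rw [e, ← mul_assoc] at this
    exact le_of_mul_le_mul_right this (exp_pos _)
  rcases le_total 1 a with h1 | h1
  · exact key a h1 hab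
  · have ea : ρ a = 1 := h.2.2.1 a ⟨ha, h1⟩
    have e1 : ρ 1 = 1 := h.2.2.1 1 ⟨by norm_num, le_rfl⟩
    rcases le_total 1 b with h2 | h2
    · have k1 := key 1 le_rfl h2
      rw [e1] at k1
      rw [ea]
      refine k1.trans ?_
      apply mul_le_mul_of_nonneg_left _ (h.2.1 b (by linarith)).le
      apply exp_le_exp.2
      nlinarith
    · rw [ea, h.2.2.1 b ⟨by linarith, h2⟩, one_mul]
      apply one_le_exp
      apply mul_nonneg hc; linarith

lemma log_ineq {t : ℝ} (ht : 1 ≤ t) :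
    log (t + 1/2) ≤ (1 - exp (-(8 * log (t + 1/2)) / 2)) * log (t + 1) := by
  have h0 : (0:ℝ) < t + 1/2 := by linarith
  have e : exp (-(8 * log (t + 1/2)) / 2) = ((t + 1/2)^4)⁻¹ := by
    rw [show -(8 * log (t + 1/2)) / 2 = -(log ((t+1/2)^4)) by rw [log_pow]; push_cast; ring]
    rw [exp_neg, exp_log (by positivity)]
  rw [e]
  have h1 : log (t + 1) ≤ t := by linarith [log_le_sub_one_of_pos (show 0 < t + 1 by linarith)]
  have h2 : log ((t+1/2)/(t+1)) ≤ (t+1/2)/(t+1) - 1 := log_le_sub_one_of_pos (by positivity)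
  rw [log_div (by linarith) (by linarith)] at h2
  have h3 : ((t + 1/2)^4)⁻¹ * log (t+1) ≤ ((t + 1/2)^4)⁻¹ * t :=
    mul_le_mul_of_nonneg_left h1 (by positivity)
  have h4 : ((t + 1/2)^4)⁻¹ * t ≤ 1 - (t+1/2)/(t+1) := by
    have : 1 - (t+1/2)/(t+1) = 1/2/(t+1) := by field_simp; ring
    rw [this, inv_mul_eq_div, div_le_div_iff₀ (by positivity) (by linarith)]
    have : (t+1/2)^4 = (t+1/2)^2 * (t+1/2)^2 := by ring
    rw [this]
    have a1 : t * (t+1) ≤ (t+1/2)^2 := by nlinarith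
    have a2 : 2 ≤ (t+1/2)^2 := by nlinarith
    nlinarith
  linarith

lemma R_aux (h : IsDickman ρ) (hcont : Continuous ρ) (j : ℕ) :
    ∀ s, 1 < s → s ≤ 1 + (j:ℝ)/2 → ρ (s - 1) ≤ 8 * log (s + 1) * s * ρ s := by
  induction j with
  | zero => intro s h1 h2; simp at h2; linarith
  | succ j ih =>
    intro t h1 h2
    push_cast at h2
    set c := 8 * log (t + 1/2) with hc
    have hlog : 0 < log (t + 1/2) := log_pos (by linarith)
    have hc0 : 0 < c := by positivity
    have hb : ∀ y, t - 1 ≤ y → y ≤ t - 1/2 → ρ (t-1) * exp (-c * (y - (t-1))) ≤ ρ y := by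
      intro y hy1 hy2
      have hy := exp_comp h (b := y) hc0.le (by
        intro s hs1 hs2
        refine (ih s hs1 (by linarith)).trans ?_
        have p1 : 0 < ρ s := h.2.1 s (by linarith)
        have p2 : log (s + 1) ≤ log (t + 1/2) := log_le_log (by linarith) (by linarith)
        have : 0 < s := by linarith
        gcongr
        rw [hc]; linarith) (a := t-1) (by linarith) hy1
      have : ρ (t-1) * exp (-c * (y - (t-1))) ≤
          ρ y * exp (c * (y - (t - 1))) * exp (-c * (y - (t-1))) :=
        mul_le_mul_of_nonneg_right hy (exp_pos _).le
      rw [mul_assoc, ← exp_add] at this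
      simpa using this
    have hI := integral_eq h hcont h1.le
    have hI2 : ∫ s in (t-1)..(t-1/2), ρ (t-1) * exp (-c * (s - (t-1))) ≤ ∫ s in (t-1)..(t-1/2), ρ s := by
      apply integral_mono_on (by linarith)
      · apply Continuous.intervalIntegrable; fun_prop
      · exact hcont.intervalIntegrable _ _
      · intro s hs; exact hb s hs.1 hs.2
    have hI3 : ∫ s in (t-1)..(t-1/2), ρ s ≤ ∫ s in (t-1)..t, ρ s := by
      rw [← integral_add_adjacent_intervals (b := t - 1/2) (c := t)
        (hcont.intervalIntegrable _ _) (hcont.intervalIntegrable _ _)]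
      have : 0 ≤ ∫ s in (t-1/2)..t, ρ s := by
        apply integral_nonneg (by linarith)
        intro s hs
        exact (h.2.1 s (by linarith [hs.1])).le
      linarith
    have hI4 : ∫ s in (t-1)..(t-1/2), ρ (t-1) * exp (-c * (s - (t-1))) =
        ρ (t-1) * ((1 - exp (-c/2)) / c) := by
      rw [integral_const_mul]
      congr 1
      have : ∀ s ∈ uIcc (t-1) (t-1/2), HasDerivAt (fun s => -exp (-c * (s - (t-1))) / c)
          (exp (-c * (s - (t-1)))) s := by
        intro s _
        have := (((((hasDerivAt_id s).sub_const (t-1)).const_mul (-c)).exp).neg).div_const c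
        refine this.congr_deriv ?_
        simp only [id]
        field_simp
      rw [integral_eq_sub_of_hasDerivAt this (by apply Continuous.intervalIntegrable; fun_prop)]
      have : -c * (t - 1/2 - (t - 1)) = -c/2 := by ring
      rw [this]
      simp
      ring
    have hli := log_ineq h1.le
    rw [← hc] at hli
    rw [hI4] at hI2
    have hr : 0 < ρ (t-1) := h.2.1 _ (by linarith)
    have f1 : ρ (t-1) * (1 - exp (-c/2)) ≤ c * (t * ρ t) := by
      have : ρ (t-1) * ((1 - exp (-c/2)) / c) ≤ t * ρ t := by linarith
      rw [← mul_div_assoc, div_le_iff₀ hc0] at this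
      linarith
    have hl2 : 0 < log (t+1) := log_pos (by linarith)
    have f2 : ρ (t-1) * log (t+1/2) ≤ 8 * log (t+1/2) * (t * ρ t) * log (t+1) := by
      calc ρ (t-1) * log (t+1/2) ≤ ρ (t-1) * ((1 - exp (-c/2)) * log (t+1)) :=
            mul_le_mul_of_nonneg_left hli hr.le
        _ = ρ (t-1) * (1 - exp (-c/2)) * log (t+1) := by ring
        _ ≤ c * (t * ρ t) * log (t+1) := mul_le_mul_of_nonneg_right f1 hl2.le
        _ = _ := by rw [hc]
    refine le_of_mul_le_mul_right (a := log (t+1/2)) ?_ hlog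
    linarith

lemma R_bound (h : IsDickman ρ) (hcont : Continuous ρ) {s : ℝ} (hs : 1 < s) :
    ρ (s - 1) ≤ 8 * log (s + 1) * s * ρ s := by
  apply R_aux h hcont (⌈2 * s⌉₊) s hs
  have := Nat.le_ceil (2 * s)
  linarith

lemma exp_bound (h : IsDickman ρ) (hcont : Continuous ρ) {L a b : ℝ} (hL : log (b + 1) ≤ L)
    (ha : 0 ≤ a) (hab : a ≤ b) : ρ a ≤ ρ b * exp (8 * L * (b - a)) := by
  have hL0 : 0 ≤ L := (log_nonneg (by linarith)).trans hL
  apply exp_comp h (by positivity) _ ha hab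
  intro s h1 h2
  refine (R_bound h hcont h1).trans ?_
  have p1 : 0 < ρ s := h.2.1 s (by linarith)
  have p2 : log (s + 1) ≤ L := (log_le_log (by linarith) (by linarith)).trans hL
  have : 0 < s := by linarith
  gcongr

end DK

namespace DK

open Set intervalIntegral

variable {ρ : ℝ → ℝ}

lemma trap (h : IsDickman ρ) (hcont : Continuous ρ) {x a : ℝ} (hx : 1 ≤ x) (ha : 0 ≤ a) :
    |a * (ρ x + ρ (x + a)) / 2 - ∫ s in x..(x+a), ρ s| ≤
      a ^ 2 / 4 * (ρ (x - 1) / x - ρ (x + a - 1) / (x + a)) := by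
  set D := ρ (x - 1) / x with hD
  set D' := ρ (x + a - 1) / (x + a) with hD'
  have lin : ∀ A B : ℝ, ∫ s in x..(x+a), (A + B * (s - x)) = a * A + B * a ^ 2 / 2 := by
    intro A B
    have : ∀ s ∈ uIcc x (x+a), HasDerivAt (fun s => A * (s - x) + B * (s - x)^2 / 2)
        (A + B * (s - x)) s := by
      intro s _
      have d := (hasDerivAt_id s).sub_const x
      refine ((d.const_mul A).add (((d.pow 2).const_mul B).div_const 2)).congr_deriv ?_
      simp only [id]
      push_cast
      ring
    rw [integral_eq_sub_of_hasDerivAt this (by apply Continuous.intervalIntegrable; fun_prop)]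
    ring
  have up : ∀ A B : ℝ, (∀ s, x ≤ s → s ≤ x + a → ρ s ≤ A + B * (s - x)) →
      ∫ s in x..(x+a), ρ s ≤ a * A + B * a ^ 2 / 2 := by
    intro A B hh
    rw [← lin]
    apply integral_mono_on (by linarith) (hcont.intervalIntegrable _ _)
      (by apply Continuous.intervalIntegrable; fun_prop)
    intro s hs; exact hh s hs.1 hs.2
  have lo : ∀ A B : ℝ, (∀ s, x ≤ s → s ≤ x + a → A + B * (s - x) ≤ ρ s) →
      a * A + B * a ^ 2 / 2 ≤ ∫ s in x..(x+a), ρ s := by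
    intro A B hh
    rw [← lin]
    apply integral_mono_on (by linarith)
      (by apply Continuous.intervalIntegrable; fun_prop) (hcont.intervalIntegrable _ _)
    intro s hs; exact hh s hs.1 hs.2
  have u1 := up (ρ x) (-D') (by
    intro s h1 h2
    have := le_slope h hx h1
    have h3 := D_anti h (by linarith : (1:ℝ) ≤ s) h2
    have : D' * (s - x) ≤ ρ (s-1)/s * (s - x) := mul_le_mul_of_nonneg_right h3 (by linarith)
    linarith)
  have u2 := up (ρ (x+a) + D * a) (-D) (by
    intro s h1 h2
    have := slope_le h (by linarith : (1:ℝ) ≤ s) h2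
    have h3 := D_anti h hx h1
    have : ρ (s-1)/s * (x + a - s) ≤ D * (x + a - s) := mul_le_mul_of_nonneg_right h3 (by linarith)
    nlinarith)
  have l1 := lo (ρ x) (-D) (by
    intro s h1 h2
    have := slope_le h hx h1
    linarith)
  have l2 := lo (ρ (x+a) + D' * a) (-D') (by
    intro s h1 h2
    have := le_slope h (by linarith : (1:ℝ) ≤ s) h2
    nlinarith)
  rw [abs_le]
  constructor <;> nlinarith

lemma adj (hcont : Continuous ρ) (T a : ℝ) (m : ℕ) :
    ∑ i ∈ Finset.range m, ∫ s in (T - (i+1)*a)..(T - (i+1)*a + a), ρ s = ∫ s in (T - m*a)..T, ρ s := by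
  induction m with
  | zero => simp
  | succ m ih =>
    rw [Finset.sum_range_succ, ih, add_comm]
    have : T - ((m:ℝ)+1)*a + a = T - m * a := by ring
    rw [this]
    push_cast
    exact integral_add_adjacent_intervals (hcont.intervalIntegrable _ _) (hcont.intervalIntegrable _ _)

/-- split off the short piece of the integral -/
lemma short (h : IsDickman ρ) (hcont : Continuous ρ) {T b : ℝ} (hT : 1 ≤ T) (hb : 0 ≤ b) :
    ∃ J, ∫ s in (T - 1 + b)..T, ρ s = T * ρ T - J ∧ b * ρ (T - 1 + b) ≤ J ∧ J ≤ b * ρ (T - 1) := by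
  refine ⟨∫ s in (T-1)..(T-1+b), ρ s, ?_, ?_, ?_⟩
  · rw [integral_eq h hcont hT, ← integral_add_adjacent_intervals (a := T - 1) (b := T - 1 + b) (c := T)
      (hcont.intervalIntegrable _ _) (hcont.intervalIntegrable _ _)]
    ring
  · have : ∫ s in (T-1)..(T-1+b), ρ (T - 1 + b) ≤ ∫ s in (T-1)..(T-1+b), ρ s := by
      apply integral_mono_on (by linarith) (by simp) (hcont.intervalIntegrable _ _)
      intro s hs; exact anti h (by linarith [hs.1]) hs.2
    simpa using this
  · have : ∫ s in (T-1)..(T-1+b), ρ s ≤ ∫ s in (T-1)..(T-1+b), ρ (T - 1) := by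
      apply integral_mono_on (by linarith) (hcont.intervalIntegrable _ _) (by simp)
      intro s hs; exact anti h (by linarith) hs.1
    simpa using this

set_option maxHeartbeats 1000000 in
/-- The main consistency estimate. -/
lemma consistency (h : IsDickman ρ) (hcont : Continuous ρ) {m k : ℕ} (hm : 1 ≤ m) (hk : m + 1 ≤ k)
    {a T L : ℝ} (ha : a = 1 / m - 1 / (2 * (m:ℝ)^2)) (hT : T = a * k) (hL : log (T + 1) ≤ L) :
    |∑ i ∈ Finset.range m, ρ (T - (i+1) * a) - k * ρ T| ≤ 200 * (1 + k * L^2 / m^2) * ρ T := by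
  have hm0 : (1:ℝ) ≤ m := by exact_mod_cast hm
  have hmp : (0:ℝ) < m := by linarith
  have hk0 : (m:ℝ) + 1 ≤ k := by exact_mod_cast hk
  set b : ℝ := 1 / (2 * m) with hb
  have hb0 : 0 < b := by positivity
  have hb1 : b ≤ 1/2 := by
    rw [hb]; apply one_div_le_one_div_of_le (by norm_num); linarith
  have hab : a = 2 * b * (1 - b) := by rw [ha, hb]; field_simp
  have ham : m * a = 1 - b := by rw [ha, hb]; field_simp
  have hba : b ≤ a := by rw [hab]; nlinarith
  have ha2 : a ≤ 2 * b := by rw [hab]; nlinarith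
  have ha0 : 0 < a := by linarith
  have hTk : T ≤ k / m := by
    rw [hT, le_div_iff₀ hmp]
    have : a * k * m = k * (m * a) := by ring
    rw [this, ham]; nlinarith
  have hT1 : 1 < T ∨ T = 1 := by
    rw [or_comm, eq_comm, ← le_iff_eq_or_lt]
    have h2 : a * (m + 1) ≤ T := by rw [hT]; exact mul_le_mul_of_nonneg_left hk0 ha0.le
    have h3 : a * (m + 1) = 1 - b + a := by rw [← ham]; ring
    linarith
  have hT1' : 1 ≤ T := by rcases hT1 with h | h <;> linarith
  have hL2 : log 2 ≤ L := (log_le_log (by norm_num) (by linarith)).trans hL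
  have hlog2 : (1/2 : ℝ) < log 2 := by linarith [log_two_gt_d9]
  have hL0 : 1/2 < L := by linarith
  have hTm : T - m * a = T - 1 + b := by rw [ham]; ring
  have hAdj := adj hcont T a m
  rw [hTm] at hAdj
  obtain ⟨J, hJ1, hJ2, hJ3⟩ := short h hcont hT1' hb0.le
  have hTp : 0 < ρ T := h.2.1 T (by linarith)
  have hT1p : 0 < ρ (T-1) := h.2.1 _ (by linarith)
  have hT1b : 0 < ρ (T-1+b) := h.2.1 _ (by linarith)
  have hmono1 : ρ (T-1+b) ≤ ρ (T-1) := anti h (by linarith) (by linarith)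
  have hRT : ρ (T - 1) ≤ 8 * L * T * ρ T := by
    rcases hT1 with h1 | h1
    · refine (R_bound h hcont h1).trans ?_
      gcongr
    · rw [h1, h.2.2.1 1 ⟨by norm_num, le_rfl⟩, h.2.2.1 (1-1) ⟨by norm_num, by norm_num⟩]
      linarith
  have hkT : a * k = T := hT.symm
  set S := ∑ i ∈ Finset.range m, ρ (T - (i+1) * a) with hS
  have hnn : 0 ≤ k * L^2 / (m:ℝ)^2 := by positivity
  have tel : ∀ n : ℕ, ∑ i ∈ Finset.range n, (ρ (T - (i+1)*a) - ρ (T - (i+1) * a + a)) =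
      ρ (T - n * a) - ρ T := by
    intro n
    induction n with
    | zero => simp
    | succ n ih =>
      rw [Finset.sum_range_succ, ih]
      have : T - ((n:ℝ)+1)*a + a = T - n * a := by ring
      rw [this]; push_cast; ring
  have arg0 : ∀ i ∈ Finset.range m, T - 1 + b ≤ T - ((i:ℝ)+1)*a := by
    intro i hi
    have : (i:ℝ) + 1 ≤ m := by exact_mod_cast Finset.mem_range.1 hi
    rw [← hTm]
    nlinarith
  rcases le_total T 2 with hT2 | hT2
  · -- bounded range
    have r1 : ρ (T-1) = 1 := h.2.2.1 _ ⟨by linarith, by linarith⟩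
    have lb : 1 ≤ 32 * ρ T := by
      rcases hT1 with h1 | h1
      · have := R_bound h hcont h1
        rw [r1] at this
        have l3 : log (T+1) ≤ 2 := by
          linarith [log_le_sub_one_of_pos (show 0 < T + 1 by linarith)]
        have : 8 * log (T+1) * T * ρ T ≤ 8 * 2 * 2 * ρ T := by
          have : 0 ≤ log (T+1) := log_nonneg (by linarith)
          gcongr
        linarith
      · rw [h1, h.2.2.1 1 ⟨by norm_num, le_rfl⟩]; norm_num
    have up : ∫ s in (T-1+b)..T, ρ s ≤ a * S := by
      rw [← hAdj, hS, Finset.mul_sum]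
      apply Finset.sum_le_sum
      intro i hi
      have h0 := arg0 i hi
      have : ∫ s in (T - (i+1)*a)..(T - (i+1)*a + a), ρ s ≤
          ∫ s in (T - (i+1)*a)..(T - (i+1)*a + a), ρ (T - (i+1)*a) := by
        apply integral_mono_on (by linarith) (hcont.intervalIntegrable _ _) (by simp)
        intro s hs; exact anti h (by linarith) hs.1
      simpa using this
    have lo : a * S - a * (ρ (T-1+b) - ρ T) ≤ ∫ s in (T-1+b)..T, ρ s := by
      rw [← hAdj, ← hTm, ← tel, hS, ← mul_sub, ← Finset.sum_sub_distrib, Finset.mul_sum]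
      apply Finset.sum_le_sum
      intro i hi
      have h0 := arg0 i hi
      have : ∫ s in (T - (i+1)*a)..(T - (i+1)*a + a), ρ (T - (i+1)*a + a) ≤
          ∫ s in (T - (i+1)*a)..(T - (i+1)*a + a), ρ s := by
        apply integral_mono_on (by linarith) (by simp) (hcont.intervalIntegrable _ _)
        intro s hs; exact anti h (by linarith [hs.1]) hs.2
      simpa using this
    rw [hJ1] at up lo
    have key : |a * (S - k * ρ T)| ≤ a * 1 := by
      have : a * (S - k * ρ T) = a * S - T * ρ T := by rw [← hkT]; ring
      rw [this, abs_le]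
      have : b * ρ (T-1+b) ≥ 0 := by positivity
      have : a * ρ T ≥ 0 := by positivity
      have q1 : a * ρ (T-1+b) ≤ a * ρ (T-1) := by gcongr
      rw [r1] at q1
      rw [r1] at hJ3
      constructor <;> linarith
    rw [abs_mul, abs_of_pos ha0] at key
    have := le_of_mul_le_mul_left key ha0
    nlinarith
  · -- large range
    have hsum : |a * S + a * (ρ T - ρ (T-1+b)) / 2 - ∫ s in (T-1+b)..T, ρ s| ≤
        a^2/4 * (ρ (T - 1 + b - 1) / (T - 1 + b) - ρ (T - 1) / T) := by
      have tel2 : ∀ n : ℕ, ∑ i ∈ Finset.range n, (ρ (T - (i+1)*a - 1) / (T - (i+1)*a)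
          - ρ (T - (i+1) * a + a - 1) / (T - (i+1) * a + a)) =
          ρ (T - n * a - 1) / (T - n * a) - ρ (T - 1) / T := by
        intro n
        induction n with
        | zero => simp
        | succ n ih =>
          rw [Finset.sum_range_succ, ih]
          have : T - ((n:ℝ)+1)*a + a = T - n * a := by ring
          rw [this]; push_cast; ring
      have e2 : a * S + a * (ρ T - ρ (T-1+b)) / 2 =
          ∑ i ∈ Finset.range m, a * (ρ (T - (i+1)*a) + ρ (T - (i+1)*a + a)) / 2 := by
        have : a * (ρ T - ρ (T-1+b)) / 2 = - (a / 2 * (ρ (T-1+b) - ρ T)) := by ring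
        rw [this, ← hTm, ← tel, hS, Finset.mul_sum, Finset.mul_sum, ← sub_eq_add_neg,
          ← Finset.sum_sub_distrib]
        apply Finset.sum_congr rfl
        intro i _; ring
      rw [e2, ← hAdj, ← Finset.sum_sub_distrib, ← hTm, ← tel2, Finset.mul_sum]
      refine (Finset.abs_sum_le_sum_abs _ _).trans ?_
      apply Finset.sum_le_sum
      intro i hi
      exact trap h hcont (by linarith [arg0 i hi]) ha0.le
    have Dle : ρ (T - 1 + b - 1) / (T - 1 + b) ≤ ρ (T - 1 - 1) / (T - 1) :=
      D_anti h (by linarith) (by linarith)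
    have Dpos : 0 ≤ ρ (T - 1) / T := by
      apply div_nonneg hT1p.le; linarith
    have Dval : ρ (T - 1 - 1) / (T - 1) ≤ 8 * L * ρ (T-1) := by
      rw [div_le_iff₀ (by linarith)]
      rcases hT2.eq_or_lt with h2 | h2
      · rw [← h2, show (2:ℝ) - 1 - 1 = 0 by norm_num, show (2:ℝ)-1 = 1 by norm_num,
          h.2.2.1 1 ⟨by norm_num, le_rfl⟩, h.2.2.1 0 ⟨by norm_num, by norm_num⟩]
        linarith
      · have := R_bound h hcont (show 1 < T - 1 by linarith)
        have l2 : log (T - 1 + 1) ≤ L := (log_le_log (by linarith) (by linarith)).trans hL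
        have : 8 * log (T - 1 + 1) * (T - 1) * ρ (T-1) ≤ 8 * L * (T - 1) * ρ (T-1) := by
          have : 0 ≤ T - 1 := by linarith
          gcongr
        linarith
    have Dd : ρ (T - 1) - ρ (T-1+b) ≤ 8 * L * ρ (T-1) * b := by
      have := slope_le h (show 1 ≤ T - 1 by linarith) (show T - 1 ≤ T - 1 + b by linarith)
      have e : T - 1 + b - (T - 1) = b := by ring
      rw [e] at this
      exact this.trans (mul_le_mul_of_nonneg_right Dval hb0.le)
    rw [hJ1] at hsum
    set X := 8 * L * ρ (T-1) with hX
    have hX0 : 0 ≤ X := by positivity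
    have hXr : ρ (T-1) ≤ X := by rw [hX]; nlinarith
    have hsum2 : |a * S + a * (ρ T - ρ (T-1+b)) / 2 - (T * ρ T - J)| ≤ a * b / 2 * X := by
      refine hsum.trans ?_
      have : a^2/4 * (ρ (T - 1 + b - 1) / (T - 1 + b) - ρ (T - 1) / T) ≤ a^2/4 * X := by
        apply mul_le_mul_of_nonneg_left _ (by positivity); linarith
      refine this.trans ?_
      apply mul_le_mul_of_nonneg_right _ hX0
      nlinarith
    have hJb : |J - a / 2 * ρ (T-1+b)| ≤ 2 * b^2 * X := by
      have e : a / 2 = b - b^2 := by rw [hab]; ring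
      rw [e, abs_le]
      have q1 : b * (ρ (T-1) - ρ (T-1+b)) ≤ b * (X * b) := mul_le_mul_of_nonneg_left Dd hb0.le
      have q2 : b^2 * ρ (T-1+b) ≤ b^2 * X :=
        mul_le_mul_of_nonneg_left (hmono1.trans hXr) (by positivity)
      have q3 : 0 ≤ b^2 * ρ (T-1+b) := by positivity
      have q4 : 0 ≤ b^2 * X := by positivity
      constructor <;> nlinarith
    have key : |a * (S - k * ρ T)| ≤ a * (3 * b * X + ρ T) := by
      have e : a * (S - k * ρ T) = a * S - T * ρ T := by rw [← hkT]; ring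
      rw [e]
      have q5 : b^2 * X ≤ a * b * X := by
        apply mul_le_mul_of_nonneg_right _ hX0; nlinarith
      have q6 : 0 ≤ a * ρ T := by positivity
      have q7 : 0 ≤ a * b * X := by positivity
      rw [abs_le] at hsum2 hJb ⊢
      constructor <;> linarith [hsum2.1, hsum2.2, hJb.1, hJb.2]
    rw [abs_mul, abs_of_pos ha0] at key
    have key2 := le_of_mul_le_mul_left key ha0
    refine key2.trans ?_
    have X2 : X ≤ 64 * L^2 * (k / m) * ρ T := by
      have : X ≤ 8 * L * (8 * L * T * ρ T) := by rw [hX]; gcongr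
      refine this.trans ?_
      have : 8 * L * (8 * L * T * ρ T) = 64 * L^2 * T * ρ T := by ring
      rw [this]
      gcongr
    have X3 : 3 * b * X ≤ 96 * (k * L^2 / m^2) * ρ T := by
      calc 3 * b * X ≤ 3 * b * (64 * L^2 * (k / m) * ρ T) := by gcongr
        _ = 96 * (k * L^2 / m^2) * ρ T := by rw [hb]; field_simp; ring
    have hZ := mul_nonneg hnn hTp.le
    have e3 : 200 * (1 + k * L^2 / (m:ℝ)^2) * ρ T = 200 * ρ T + 200 * (k * L^2 / (m:ℝ)^2 * ρ T) := by
      ring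
    rw [e3]
    rw [mul_assoc] at X3
    linarith

end DK

namespace FqP

open Polynomial UniqueFactorizationMonoid

section

variable (F : Type) [Field F] [Fintype F]

lemma monic_card (k : ℕ) : Nat.card {f : F[X] // f.Monic ∧ f.natDegree = k} = Fintype.card F ^ k := by
  rw [Nat.card_congr (monicEquivDegreeLT k), Nat.card_congr (degreeLTEquiv F k).toEquiv]
  simp

lemma monic_finite (k : ℕ) : {f : F[X] | f.Monic ∧ f.natDegree = k}.Finite :=
  Finite.of_equiv (Fin k → F) ((monicEquivDegreeLT (R := F) k).trans (degreeLTEquiv F k).toEquiv).symm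

/-- friable polynomials -/
def Fri (m k : ℕ) : Set F[X] := {f | f.Monic ∧ f.natDegree = k ∧
      ∀ p : Polynomial F, p.Monic → Irreducible p → p ∣ f → p.natDegree ≤ m}

lemma fri_finite (m k : ℕ) : (Fri F m k).Finite :=
  (monic_finite F k).subset (fun _ hf => ⟨hf.1, hf.2.1⟩)

noncomputable def FriF (m k : ℕ) : Finset F[X] := (fri_finite F m k).toFinset

lemma mem_FriF {m k : ℕ} {f : F[X]} : f ∈ FriF F m k ↔ f.Monic ∧ f.natDegree = k ∧
      ∀ p : Polynomial F, p.Monic → Irreducible p → p ∣ f → p.natDegree ≤ m := by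
  simp [FriF, Fri]

def Irr (m : ℕ) : Set F[X] := {p | p.Monic ∧ Irreducible p ∧ p.natDegree ≤ m}

lemma irr_finite (m : ℕ) : (Irr F m).Finite := by
  apply ((Set.finite_Iic m).biUnion (fun k _ => monic_finite F k)).subset
  intro p hp
  simp only [Set.mem_iUnion]
  exact ⟨p.natDegree, hp.2.2, hp.1, rfl⟩

noncomputable def IrrF (m : ℕ) : Finset F[X] := (irr_finite F m).toFinset

lemma mem_IrrF {m : ℕ} {p : F[X]} : p ∈ IrrF F m ↔ p.Monic ∧ Irreducible p ∧ p.natDegree ≤ m := by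
  simp [IrrF, Irr]

/-- number of friable polynomials -/
noncomputable def N (m k : ℕ) : ℕ := (FriF F m k).card

lemma N_eq (m k : ℕ) : Nat.card {f : Polynomial F // f.Monic ∧ f.natDegree = k ∧
      ∀ p : Polynomial F, p.Monic → Irreducible p → p ∣ f → p.natDegree ≤ m} = N F m k := by
  rw [N, FriF]
  exact Nat.card_eq_card_finite_toFinset (fri_finite F m k)

lemma N_le (m k : ℕ) : N F m k ≤ Fintype.card F ^ k := by
  rw [← monic_card, N]
  have : Nat.card {f : F[X] // f.Monic ∧ f.natDegree = k} = (monic_finite F k).toFinset.card :=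
    Nat.card_eq_card_finite_toFinset (monic_finite F k)
  rw [this]
  apply Finset.card_le_card
  intro f hf
  rw [mem_FriF] at hf
  simp [hf.1, hf.2.1]

lemma N_small {m k : ℕ} (hk : k ≤ m) : N F m k = Fintype.card F ^ k := by
  rw [← monic_card, ← N_eq]
  apply Nat.card_congr
  apply Equiv.subtypeEquivRight
  intro f
  constructor
  · rintro ⟨h1, h2, _⟩; exact ⟨h1, h2⟩
  · rintro ⟨h1, h2⟩
    refine ⟨h1, h2, fun p _ _ hd => ?_⟩
    exact (natDegree_le_of_dvd hd h1.ne_zero).trans (h2.le.trans hk)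

variable {F}

lemma deg_pos {m : ℕ} {P : F[X]} (hP : P ∈ IrrF F m) : 1 ≤ P.natDegree :=
  ((mem_IrrF F).1 hP).2.1.natDegree_pos

open scoped Classical in
lemma count_pow {m k : ℕ} {f P : F[X]} (hf : f ∈ FriF F m k) (hP : P ∈ IrrF F m) :
    (normalizedFactors f).count P = ∑ a ∈ Finset.Icc 1 k, if P ^ a ∣ f then 1 else 0 := by
  rw [mem_FriF] at hf
  have hP1 := deg_pos hP
  rw [mem_IrrF] at hP
  have hf0 : f ≠ 0 := hf.1.ne_zero
  have hn : normalize P = P := hP.1.normalize_eq_self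
  have key : ∀ a : ℕ, P ^ a ∣ f ↔ a ≤ (normalizedFactors f).count P := by
    intro a
    rw [pow_dvd_iff_le_emultiplicity, emultiplicity_eq_count_normalizedFactors hP.2.1 hf0, hn]
    norm_cast
  set c := (normalizedFactors f).count P with hc
  have hck : c ≤ k := by
    have h1 : P ^ c ∣ f := (key c).2 le_rfl
    have h2 := natDegree_le_of_dvd h1 hf0
    rw [natDegree_pow, hf.2.1] at h2
    nlinarith
  simp_rw [key]
  rw [Finset.sum_ite, Finset.sum_const_zero, add_zero, Finset.sum_const, smul_eq_mul, mul_one]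
  have : Finset.filter (fun a => a ≤ c) (Finset.Icc 1 k) = Finset.Icc 1 c := by
    ext a; simp; omega
  rw [this]; simp

open scoped Classical in
lemma deg_sum {m k : ℕ} {f : F[X]} (hf : f ∈ FriF F m k) :
    k = ∑ P ∈ IrrF F m, ∑ a ∈ Finset.Icc 1 k, if P ^ a ∣ f then P.natDegree else 0 := by
  have hf' := hf
  rw [mem_FriF] at hf'
  have hf0 : f ≠ 0 := hf'.1.ne_zero
  have h1 : k = ((normalizedFactors f).map natDegree).sum := by
    rw [← natDegree_multiset_prod _ (zero_notMem_normalizedFactors _),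
      natDegree_eq_of_degree_eq (degree_eq_degree_of_associated (prod_normalizedFactors hf0)), hf'.2.1]
  have h2 : ((normalizedFactors f).map natDegree).sum =
      ∑ P ∈ IrrF F m, (normalizedFactors f).count P * P.natDegree := by
    rw [Finset.sum_multiset_map_count]
    simp only [smul_eq_mul]
    apply Finset.sum_subset
    · intro P hP
      rw [Multiset.mem_toFinset] at hP
      have i1 := irreducible_of_normalized_factor P hP
      have i2 : P.Monic := by
        have := normalize_normalized_factor P hP
        rw [← this]
        exact monic_normalize i1.ne_zero
      rw [mem_IrrF]
      exact ⟨i2, i1, hf'.2.2 P i2 i1 (dvd_of_mem_normalizedFactors hP)⟩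
    · intro P _ hP
      rw [Multiset.mem_toFinset] at hP
      rw [Multiset.count_eq_zero_of_notMem hP, zero_mul]
  conv_lhs => rw [h1, h2]
  apply Finset.sum_congr rfl
  intro P hP
  rw [count_pow hf hP, Finset.sum_mul]
  apply Finset.sum_congr rfl
  intro a _
  split_ifs <;> simp

open scoped Classical in
lemma card_dvd {m k a : ℕ} {P : F[X]} (hP : P ∈ IrrF F m) :
    ((FriF F m k).filter (fun f => P ^ a ∣ f)).card =
      if a * P.natDegree ≤ k then N F m (k - a * P.natDegree) else 0 := by
  have hP' := hP
  rw [mem_IrrF] at hP'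
  have hPa : (P ^ a).Monic := hP'.1.pow a
  split_ifs with hle
  · rw [N]
    symm
    apply Finset.card_bij (fun g _ => P ^ a * g)
    · intro g hg
      rw [mem_FriF] at hg
      rw [Finset.mem_filter, mem_FriF]
      refine ⟨⟨hPa.mul hg.1, ?_, ?_⟩, dvd_mul_right _ _⟩
      · rw [hPa.natDegree_mul hg.1, natDegree_pow, hg.2.1]; omega
      · intro p p1 p2 p3
        rcases p2.prime.dvd_or_dvd p3 with p4 | p4
        · have := p2.prime.dvd_of_dvd_pow p4
          exact (natDegree_le_of_dvd this hP'.1.ne_zero).trans hP'.2.2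
        · exact hg.2.2 p p1 p2 p4
    · intro g _ g' _ h
      exact mul_left_cancel₀ hPa.ne_zero h
    · intro f hf
      rw [Finset.mem_filter, mem_FriF] at hf
      obtain ⟨⟨f1, f2, f3⟩, g, rfl⟩ := hf
      have hg : g.Monic := hPa.of_mul_monic_left f1
      refine ⟨g, ?_, rfl⟩
      rw [mem_FriF]
      refine ⟨hg, ?_, fun p p1 p2 p3 => f3 p p1 p2 (p3.mul_left _)⟩
      rw [hPa.natDegree_mul hg, natDegree_pow] at f2
      omega
  · rw [Finset.card_eq_zero, Finset.filter_eq_empty_iff]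
    intro f hf hd
    rw [mem_FriF] at hf
    have := natDegree_le_of_dvd hd hf.1.ne_zero
    rw [natDegree_pow, hf.2.1] at this
    exact hle this

variable (F) in
open scoped Classical in
/-- the coefficients of the recursion -/
noncomputable def b (m j : ℕ) : ℕ := ∑ P ∈ (IrrF F m).filter (fun P => P.natDegree ∣ j), P.natDegree

open scoped Classical in
lemma reindex {k d : ℕ} (hd : 1 ≤ d) (g : ℕ → ℕ) :
    (∑ a ∈ Finset.Icc 1 k, if a * d ≤ k then g (a * d) else 0) =
      ∑ j ∈ Finset.Icc 1 k, if d ∣ j then g j else 0 := by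
  rw [← Finset.sum_filter, ← Finset.sum_filter]
  apply Finset.sum_bij (fun a _ => a * d)
  · intro a ha
    simp only [Finset.mem_filter, Finset.mem_Icc] at ha ⊢
    refine ⟨⟨?_, ha.2⟩, dvd_mul_left _ _⟩
    nlinarith
  · intro a _ a' _ h
    exact Nat.eq_of_mul_eq_mul_right hd h
  · intro j hj
    simp only [Finset.mem_filter, Finset.mem_Icc] at hj
    obtain ⟨⟨h1, h2⟩, a, rfl⟩ := hj
    refine ⟨a, ?_, by ring⟩
    simp only [Finset.mem_filter, Finset.mem_Icc]
    have : a ≠ 0 := by rintro rfl; simp at h1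
    refine ⟨⟨by omega, ?_⟩, by linarith⟩
    nlinarith
  · intros; rfl

variable (F) in
lemma recursion (m k : ℕ) : k * N F m k = ∑ j ∈ Finset.Icc 1 k, b F m j * N F m (k - j) := by
  classical
  have h1 : k * N F m k = ∑ f ∈ FriF F m k, k := by rw [Finset.sum_const, N]; simp [mul_comm]
  rw [h1, Finset.sum_congr rfl (fun f hf => deg_sum hf), Finset.sum_comm]
  have h2 : ∀ P ∈ IrrF F m, (∑ f ∈ FriF F m k, ∑ a ∈ Finset.Icc 1 k,
      if P ^ a ∣ f then P.natDegree else 0) =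
      ∑ j ∈ Finset.Icc 1 k, if P.natDegree ∣ j then P.natDegree * N F m (k - j) else 0 := by
    intro P hP
    rw [Finset.sum_comm, ← reindex (deg_pos hP) (fun j => P.natDegree * N F m (k - j))]
    apply Finset.sum_congr rfl
    intro a _
    rw [← Finset.sum_filter, Finset.sum_const, card_dvd hP]
    split_ifs <;> simp [mul_comm]
  rw [Finset.sum_congr rfl h2, Finset.sum_comm]
  apply Finset.sum_congr rfl
  intro j _
  rw [b, Finset.sum_mul, Finset.sum_filter]

variable (F) in
lemma b_eq_self {m j : ℕ} (hj : 1 ≤ j) (hjm : j ≤ m) : b F m j = b F j j := by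
  classical
  rw [b, b]
  apply Finset.sum_congr _ (fun _ _ => rfl)
  ext P
  simp only [Finset.mem_filter, mem_IrrF]
  constructor
  · rintro ⟨⟨h1, h2, h3⟩, h4⟩
    exact ⟨⟨h1, h2, Nat.le_of_dvd hj h4⟩, h4⟩
  · rintro ⟨⟨h1, h2, h3⟩, h4⟩
    exact ⟨⟨h1, h2, h3.trans hjm⟩, h4⟩

variable (F) in
lemma b_diag (j : ℕ) (hj : 1 ≤ j) : b F j j = Fintype.card F ^ j := by
  induction j using Nat.strong_induction_on with
  | _ k ih =>
    have hr := recursion F k k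
    rw [N_small F le_rfl] at hr
    obtain ⟨l, rfl⟩ : ∃ l, k = l + 1 := ⟨k - 1, by omega⟩
    rw [Finset.sum_Icc_succ_top (by omega)] at hr
    have h2 : ∑ j ∈ Finset.Icc 1 l, b F (l+1) j * N F (l+1) (l + 1 - j) =
        ∑ j ∈ Finset.Icc 1 l, Fintype.card F ^ (l+1) := by
      apply Finset.sum_congr rfl
      intro j hj
      rw [Finset.mem_Icc] at hj
      rw [b_eq_self F hj.1 (by omega), ih j (by omega) hj.1, N_small F (by omega), ← pow_add]
      congr 1; omega
    rw [h2, N_small F (by omega)] at hr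
    simp at hr
    linarith

variable (F) in
lemma b_small {m j : ℕ} (hj : 1 ≤ j) (hjm : j ≤ m) : b F m j = Fintype.card F ^ j := by
  rw [b_eq_self F hj hjm, b_diag F j hj]

lemma geom {q : ℕ} (hq : 2 ≤ q) (n : ℕ) : ∑ d ∈ Finset.range (n+1), q ^ d ≤ 2 * q ^ n := by
  induction n with
  | zero => simp
  | succ n ih =>
    rw [Finset.sum_range_succ, pow_succ]
    nlinarith [pow_pos (show 0 < q by omega) n]

variable (F) in
lemma b_large {m j : ℕ} (hjm : m < j) : b F m j ≤ 2 * Fintype.card F ^ (j / 2) := by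
  classical
  have hq : 2 ≤ Fintype.card F := Fintype.one_lt_card
  refine le_trans ?_ (geom hq (j/2))
  rw [b, ← Finset.sum_fiberwise_of_maps_to (t := Finset.range (j/2+1)) (g := natDegree)]
  · apply Finset.sum_le_sum
    intro d _
    rcases Nat.eq_zero_or_pos d with rfl | hd
    · rw [Finset.sum_eq_zero]
      · simp
      · intro P hP
        simp only [Finset.mem_filter] at hP
        exact hP.2
    · rw [← b_diag F d hd, b]
      apply Finset.sum_le_sum_of_subset
      intro P hP
      simp only [Finset.mem_filter, mem_IrrF] at hP ⊢
      exact ⟨⟨hP.1.1.1, hP.1.1.2.1, hP.2.le⟩, hP.2 ▸ dvd_rfl⟩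
  · intro P hP
    simp only [Finset.mem_filter, mem_IrrF] at hP
    rw [Finset.mem_range]
    obtain ⟨c, hc⟩ := hP.2
    have h1 := hP.1.2.2
    have : 2 ≤ c := by
      by_contra h
      have : c = 0 ∨ c = 1 := by omega
      rcases this with rfl | rfl <;> omega
    have : P.natDegree * 2 ≤ j := by rw [hc]; exact Nat.mul_le_mul_left _ this
    omega

variable (F) in
lemma main (m : ℕ) : ∃ c : ℕ → ℝ, (∀ j, 0 ≤ c j) ∧ (∀ j, 1 ≤ j → j ≤ m → c j = 1) ∧
    (∀ j, m < j → c j ≤ 2 * exp (-(log 2 / 2) * j)) ∧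
    (∀ k : ℕ, k * polyProb F k m = ∑ j ∈ Finset.Icc 1 k, c j * polyProb F (k - j) m) ∧
    (∀ k ≤ m, polyProb F k m = 1) ∧ (∀ k, 0 ≤ polyProb F k m) ∧ (∀ k, polyProb F k m ≤ 1) := by
  have hq : 2 ≤ Fintype.card F := Fintype.one_lt_card
  set q : ℝ := (Fintype.card F : ℝ) with hqd
  have hq2 : 2 ≤ q := by rw [hqd]; exact_mod_cast hq
  have hq0 : 0 < q := by linarith
  have hp : ∀ k, polyProb F k m = N F m k / q ^ k := by
    intro k; rw [polyProb, N_eq]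
  refine ⟨fun j => b F m j / q ^ j, ?_, ?_, ?_, ?_, ?_, ?_, ?_⟩
  · intro j; positivity
  · intro j h1 h2
    simp only
    rw [b_small F h1 h2]; push_cast; rw [← hqd]; field_simp
  · intro j hj
    simp only
    have h1 : (b F m j : ℝ) ≤ 2 * q ^ (j/2) := by rw [hqd]; exact_mod_cast b_large F hj
    rw [div_le_iff₀ (by positivity)]
    refine h1.trans ?_
    rw [mul_assoc]
    apply mul_le_mul_of_nonneg_left _ (by norm_num)
    have e : q ^ j = q ^ (j/2) * q ^ (j - j/2) := by
      rw [← pow_add]; congr 1; omega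
    rw [e]
    have h2 : (2:ℝ) ^ (j - j/2) ≤ q ^ (j - j/2) := pow_le_pow_left₀ (by norm_num) hq2 _
    have h3 : exp ((log 2 / 2) * j) ≤ (2:ℝ)^(j - j/2) := by
      rw [← exp_log (show (0:ℝ) < 2^(j-j/2) by positivity), log_pow]
      apply exp_le_exp.2
      have h4 : (j:ℝ) ≤ 2 * ((j - j/2 : ℕ):ℝ) := by
        have : j ≤ 2 * (j - j/2) := by omega
        exact_mod_cast this
      have := log_pos (show (1:ℝ) < 2 by norm_num)
      nlinarith
    have h5 : exp (-(log 2/2) * j) * exp ((log 2/2) * j) = 1 := by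
      rw [← exp_add]; simp
    have h6 : 1 ≤ exp (-(log 2/2) * j) * q ^ (j - j/2) := by
      rw [← h5]
      exact mul_le_mul_of_nonneg_left (h3.trans h2) (exp_pos _).le
    have h7 : 0 < q ^ (j/2) := by positivity
    nlinarith
  · intro k
    simp only [hp]
    have hr : (k:ℝ) * N F m k = ∑ j ∈ Finset.Icc 1 k, (b F m j : ℝ) * N F m (k - j) := by
      exact_mod_cast recursion F m k
    rw [← mul_div_assoc, hr, Finset.sum_div]
    apply Finset.sum_congr rfl
    intro j hj
    rw [Finset.mem_Icc] at hj
    have e : q ^ k = q ^ j * q ^ (k - j) := by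
      rw [← pow_add]; congr 1; omega
    rw [e, div_mul_div_comm]
  · intro k hk
    rw [hp, N_small F hk]; push_cast; rw [← hqd]; field_simp
  · intro k; rw [hp]; positivity
  · intro k; rw [hp, div_le_one (by positivity), hqd]; exact_mod_cast N_le F m k

end

end FqP

namespace DK

open Set

variable {ρ : ℝ → ℝ}

lemma isDickman_max (h : IsDickman ρ) : IsDickman (fun t => ρ (max t 0)) ∧
    Continuous (fun t => ρ (max t 0)) := by
  have hc : Continuous (fun t => ρ (max t 0)) :=
    h.1.comp_continuous (by fun_prop) (fun t => Set.mem_Ici.2 (le_max_right _ _))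
  refine ⟨⟨hc.continuousOn, fun t _ => h.2.1 _ (le_max_right _ _), ?_, ?_⟩, hc⟩
  · intro t ht
    simp only [max_eq_left ht.1]
    exact h.2.2.1 t ht
  · intro t ht
    have h1 := h.2.2.2 t ht
    simp only [max_eq_left (show (0:ℝ) ≤ t - 1 by linarith)]
    apply h1.congr_of_eventuallyEq
    filter_upwards [lt_mem_nhds ht] with s hs
    rw [max_eq_left (by linarith)]

lemma tail_geom (s : Finset ℕ) : ∑ j ∈ s, exp (-(log 2 / 4) * j) ≤ 10 := by
  set x := exp (-(log 2 / 4)) with hx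
  have hx0 : 0 ≤ x := (exp_pos _).le
  have hy : (0.17:ℝ) ≤ log 2 / 4 := by linarith [log_two_gt_d9]
  have hx1 : x ≤ 9/10 := by
    have h1 : 1 + log 2 / 4 ≤ exp (log 2 / 4) := by linarith [add_one_le_exp (log 2 / 4)]
    rw [hx, exp_neg, inv_le_comm₀ (exp_pos _) (by norm_num)]
    linarith
  have e : ∀ j : ℕ, exp (-(log 2 / 4) * j) = x ^ j := by
    intro j; rw [hx, ← exp_nat_mul]; ring_nf
  simp_rw [e]
  refine ((summable_geometric_of_lt_one hx0 (by linarith)).sum_le_tsum s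
    (fun i _ => by positivity)).trans ?_
  rw [tsum_geometric_of_lt_one hx0 (by linarith), inv_le_comm₀ (by linarith) (by norm_num)]
  linarith

/-- Chebyshev -/
lemma cheb (h : IsDickman ρ) {T a : ℝ} {m : ℕ} (ha : 0 ≤ a) (hT : 0 ≤ T - m * a) :
    (∑ i ∈ Finset.range m, ρ (T - (i+1) * a)) * m / 2 ≤
      ∑ i ∈ Finset.range m, ρ (T - (i+1) * a) * (i+1) := by
  rcases Nat.eq_zero_or_pos m with rfl | hm
  · simp
  have mv : MonovaryOn (fun i : ℕ => ρ (T - (i+1) * a)) (fun i : ℕ => (i:ℝ)+1)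
      (Finset.range m : Set ℕ) := by
    intro i _ j hj hij
    simp only at hij ⊢
    have hj' : (j:ℝ) + 1 ≤ m := by exact_mod_cast Finset.mem_range.1 (by simpa using hj)
    apply anti h
    · nlinarith
    · nlinarith
  have := mv.sum_mul_sum_le_card_mul_sum
  have e : ∀ n : ℕ, ∑ i ∈ Finset.range n, ((i:ℝ)+1) = n * (n+1) / 2 := by
    intro n
    induction n with
    | zero => simp
    | succ n ih => rw [Finset.sum_range_succ, ih]; push_cast; ring
  rw [e, Finset.card_range] at this
  have hm' : (0:ℝ) < m := by exact_mod_cast hm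
  have hS : 0 ≤ ∑ i ∈ Finset.range m, ρ (T - (i+1) * a) := by
    apply Finset.sum_nonneg
    intro i hi
    have hj' : (i:ℝ) + 1 ≤ m := by exact_mod_cast Finset.mem_range.1 hi
    exact (h.2.1 _ (by nlinarith)).le
  refine le_of_mul_le_mul_left ?_ hm'
  refine le_trans ?_ this
  have : (m:ℝ) * (m / 2) ≤ m * (m+1) / 2 := by nlinarith
  have := mul_le_mul_of_nonneg_left this hS
  linarith

set_option maxHeartbeats 2000000 in
lemma core (h : IsDickman ρ) (hcont : Continuous ρ) {p c : ℕ → ℝ} {m n : ℕ} (hm : 1 ≤ m)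
    (hc0 : ∀ j, 0 ≤ c j) (hc1 : ∀ j, 1 ≤ j → j ≤ m → c j = 1)
    (hc2 : ∀ j, m < j → c j ≤ 2 * exp (-(log 2 / 2) * j))
    (hrec : ∀ k : ℕ, k * p k = ∑ j ∈ Finset.Icc 1 k, c j * p (k - j))
    (hp1 : ∀ k ≤ m, p k = 1)
    {a L : ℝ} (ha : a = 1 / m - 1 / (2 * (m:ℝ)^2)) (hL : L = log (n / m + 1))
    (hH : 1760 * (log (1 + n / m) / m + n * L^2 / m^3) ≤ 1)
    (hLm : 8 * L / m ≤ log 2 / 4) (k : ℕ) (hk : k ≤ n) :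
    |p k - ρ (a * k)| ≤ ρ (a * k) * (1760 * (log (1 + k / m) / m + k * L^2 / m^3)) := by
  have hm0 : (1:ℝ) ≤ m := by exact_mod_cast hm
  have hmp : (0:ℝ) < m := by linarith
  set H : ℕ → ℝ := fun k => 1760 * (log (1 + k / m) / m + k * L^2 / m^3) with hHd
  have hHmono : ∀ k, k ≤ n → H k ≤ 1 := by
    intro k hk
    refine le_trans ?_ hH
    simp only [hHd]
    have : (k:ℝ) ≤ n := by exact_mod_cast hk
    gcongr
  have hHnn : ∀ k, 0 ≤ H k := by
    intro k
    have : 0 ≤ log (1 + (k:ℝ)/m) := log_nonneg (by have : 0 ≤ (k:ℝ)/m := by positivity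
                                                   linarith)
    simp only [hHd]
    positivity
  have hL0 : 0 ≤ L := by
    rw [hL]; apply log_nonneg
    have : 0 ≤ (n:ℝ)/m := by positivity
    linarith
  have ham : a * m = 1 - 1 / (2 * m) := by rw [ha]; field_simp
  have hb1 : 1 / (2 * (m:ℝ)) ≤ 1/2 := by
    apply one_div_le_one_div_of_le (by norm_num); linarith
  have hb0 : 0 < 1 / (2 * (m:ℝ)) := by positivity
  have ha0 : 0 < a := by
    by_contra hcon
    have : a * m ≤ 0 := mul_nonpos_of_nonpos_of_nonneg (not_lt.1 hcon) hmp.le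
    linarith
  have ha1 : a ≤ 1 / m := by
    rw [ha]
    have : 0 ≤ 1 / (2 * (m:ℝ)^2) := by positivity
    linarith
  change |p k - ρ (a * k)| ≤ ρ (a * k) * H k
  induction k using Nat.strong_induction_on with
  | _ k ih =>
    rcases le_or_gt k m with hkm | hkm
    · have hk1 : (k:ℝ) ≤ m := by exact_mod_cast hkm
      have : ρ (a * k) = 1 := by
        apply h.2.2.1
        refine ⟨by positivity, ?_⟩
        have : a * k ≤ a * m := by gcongr
        linarith
      rw [this, hp1 k hkm]
      simpa using hHnn k
    set T := a * k with hT
    have hkn : (k:ℝ) ≤ n := by exact_mod_cast hk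
    have hkm' : (m:ℝ) + 1 ≤ k := by exact_mod_cast hkm
    have hkp : (0:ℝ) < k := by linarith
    have hT0 : 0 ≤ T := by positivity
    have hTu : T ≤ n / m := by
      rw [hT]
      calc a * k ≤ 1 / m * n := by gcongr
        _ = n / m := by ring
    have hTL : log (T + 1) ≤ L := by
      rw [hL]; apply log_le_log (by linarith); linarith
    have hcons := consistency h hcont hm hkm ha hT hTL
    have hfp : 0 < ρ T := h.2.1 T hT0
    have hTma : 0 ≤ T - m * a := by
      have : a * (m + 1) ≤ T := by rw [hT]; gcongr
      nlinarith
    set S := ∑ i ∈ Finset.range m, ρ (T - (i+1) * a) with hS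
    have hcheb := cheb h ha0.le hTma
    rw [← hS] at hcheb
    set W := ∑ i ∈ Finset.range m, ρ (T - (i+1) * a) * ((i:ℝ)+1) with hW
    set Z := k * L^2 / (m:ℝ)^2 with hZ
    have hZ0 : 0 ≤ Z := by positivity
    -- split recursion
    have hsplit : (k:ℝ) * p k = ∑ i ∈ Finset.range m, p (k - (i+1)) +
        ∑ j ∈ Finset.Icc (m+1) k, c j * p (k - j) := by
      rw [hrec]
      have e1 : Finset.Icc 1 k = Finset.Icc 1 m ∪ Finset.Icc (m+1) k := by
        ext j; simp only [Finset.mem_Icc, Finset.mem_union]; omega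
      rw [e1, Finset.sum_union (by
        rw [Finset.disjoint_left]; intro j; simp only [Finset.mem_Icc]; omega)]
      congr 1
      rw [Finset.range_eq_Ico, Finset.sum_Ico_add' (fun j => p (k - j)) 0 m 1]
      rw [show Finset.Icc 1 m = Finset.Ico (0+1) (m+1) by ext j; simp [Nat.lt_succ_iff]]
      apply Finset.sum_congr rfl
      intro j hj
      rw [Finset.mem_Ico] at hj
      rw [hc1 j (by omega) (by omega), one_mul]
    have hcast : ∀ j, j ≤ k → a * ((k - j : ℕ) : ℝ) = T - j * a := by
      intro j hj
      rw [Nat.cast_sub hj, hT]; ring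
    -- tail
    have htail : |∑ j ∈ Finset.Icc (m+1) k, c j * p (k - j)| ≤ 40 * ρ T := by
      refine (Finset.abs_sum_le_sum_abs _ _).trans ?_
      have : ∀ j ∈ Finset.Icc (m+1) k, |c j * p (k-j)| ≤ (4 * ρ T) * exp (-(log 2 / 4) * j) := by
        intro j hj
        rw [Finset.mem_Icc] at hj
        have i1 := ih (k - j) (by omega) (by omega)
        rw [hcast j hj.2] at i1
        have hjk : (j:ℝ) ≤ k := by exact_mod_cast hj.2
        have hTj : 0 ≤ T - j * a := by rw [hT]; nlinarith
        have i2 : 0 < ρ (T - j * a) := h.2.1 _ hTj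
        have i3 : |p (k-j)| ≤ 2 * ρ (T - j * a) := by
          have := hHmono (k-j) (by omega)
          have q1 : ρ (T - j * a) * H (k - j) ≤ ρ (T - j * a) * 1 := by gcongr
          have q2 := abs_add_le (p (k-j) - ρ (T - j * a)) (ρ (T - j*a))
          rw [sub_add_cancel, abs_of_pos i2] at q2
          linarith
        have i4 := exp_bound h hcont hTL hTj (show T - j * a ≤ T by
          have : 0 ≤ (j:ℝ) * a := by positivity
          linarith)
        have i5 : 8 * L * (T - (T - j * a)) ≤ log 2 / 4 * j := by
          calc 8 * L * (T - (T - j * a)) = 8 * L * a * j := by ring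
            _ ≤ 8 * L * (1 / m) * j := by gcongr
            _ = 8 * L / m * j := by ring
            _ ≤ _ := by gcongr
        rw [abs_mul, abs_of_nonneg (hc0 j)]
        calc c j * |p (k-j)| ≤ (2 * exp (-(log 2 / 2) * j)) * (2 * (ρ T * exp (log 2 / 4 * j))) := by
              apply mul_le_mul (hc2 j (by omega)) _ (abs_nonneg _) (by positivity)
              refine i3.trans ?_
              have : ρ T * exp (8 * L * (T - (T - j * a))) ≤ ρ T * exp (log 2 / 4 * j) := by gcongr
              linarith
          _ = 4 * ρ T * (exp (-(log 2 / 2) * j) * exp (log 2 / 4 * j)) := by ring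
          _ = _ := by rw [← exp_add]; congr 2; ring
      refine (Finset.sum_le_sum this).trans ?_
      rw [← Finset.mul_sum]
      have := tail_geom (Finset.Icc (m+1) k)
      nlinarith
    -- main sum
    set η := 1760 * (1 / ((m:ℝ) * (m + k)) + L^2 / m^3) with hη
    have hη0 : 0 ≤ η := by positivity
    have hHstep : ∀ j, 1 ≤ j → j ≤ m → H (k - j) ≤ H k - j * η := by
      intro j hj1 hj2
      have hjk : j ≤ k := by omega
      have hj2' : (j:ℝ) ≤ m := by exact_mod_cast hj2
      simp only [hHd, hη]
      rw [Nat.cast_sub hjk]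
      have l1 : log (1 + ((k:ℝ) - j) / m) ≤ log (1 + k / m) - j / (m + k) := by
        have e : 1 + ((k:ℝ) - j) / m = (1 + k / m) * (1 - j / (m + k)) := by
          field_simp; ring
        have pos : 0 < 1 - (j:ℝ) / (m + k) := by
          rw [sub_pos, div_lt_one (by linarith)]; linarith
        rw [e, log_mul (by positivity) pos.ne']
        linarith [log_le_sub_one_of_pos pos]
      have l2 : log (1 + ((k:ℝ) - j) / m) / m ≤ log (1 + k / m) / m - j * (1 / (m * (m + k))) := by
        calc log (1 + ((k:ℝ) - j) / m) / m ≤ (log (1 + k / m) - j / (m + k)) / m := by gcongr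
          _ = _ := by field_simp
      have l3 : ((k:ℝ) - j) * L^2 / m^3 = k * L^2 / m^3 - j * (L^2 / m^3) := by ring
      rw [l3]
      linarith
    have hmain : |∑ i ∈ Finset.range m, (p (k - (i+1)) - ρ (T - (i+1) * a))| ≤ S * H k - η * W := by
      refine (Finset.abs_sum_le_sum_abs _ _).trans ?_
      rw [hS, hW, Finset.sum_mul, Finset.mul_sum, ← Finset.sum_sub_distrib]
      apply Finset.sum_le_sum
      intro i hi
      rw [Finset.mem_range] at hi
      have i1 := ih (k - (i+1)) (by omega) (by omega)
      rw [hcast (i+1) (by omega)] at i1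
      push_cast at i1
      refine i1.trans ?_
      have i2 := hHstep (i+1) (by omega) (by omega)
      push_cast at i2
      have hij : (i:ℝ) + 1 ≤ m := by exact_mod_cast hi
      have i3 : 0 < ρ (T - ((i:ℝ)+1) * a) := h.2.1 _ (by nlinarith)
      have := mul_le_mul_of_nonneg_left i2 i3.le
      linarith
    -- combine
    have hcomb : (k:ℝ) * |p k - ρ T| ≤ S * H k - η * W + 40 * ρ T + 200 * (1 + Z) * ρ T := by
      have e : (k:ℝ) * (p k - ρ T) = ∑ i ∈ Finset.range m, (p (k - (i+1)) - ρ (T - (i+1) * a)) +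
          ∑ j ∈ Finset.Icc (m+1) k, c j * p (k - j) + (S - k * ρ T) := by
        rw [Finset.sum_sub_distrib, mul_sub, hsplit, ← hS]; ring
      have e2 : (k:ℝ) * |p k - ρ T| = |(k:ℝ) * (p k - ρ T)| := by rw [abs_mul, abs_of_pos hkp]
      rw [e2, e]
      refine (abs_add_le _ _).trans ?_
      have := abs_add_le (∑ i ∈ Finset.range m, (p (k - (i+1)) - ρ (T - (i+1) * a)))
        (∑ j ∈ Finset.Icc (m+1) k, c j * p (k - j))
      linarith
    have hSle : S ≤ k * ρ T + 200 * (1 + Z) * ρ T := by linarith [(abs_le.1 hcons).2]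
    set g := η * m / 2 with hg
    have hgH : g ≤ H k := by
      have := hHstep m hm le_rfl
      have h2 := hHnn (k - m)
      have : 0 ≤ m * η := by positivity
      rw [hg]; linarith
    have hg0 : 0 ≤ g := by positivity
    have hWg : S * g ≤ η * W := by
      have := mul_le_mul_of_nonneg_left hcheb hη0
      rw [hg]; linarith
    have hk1 := hHmono k hk
    have hgk : 440 * (1 + Z) ≤ k * g := by
      have e : k * g = 880 * (k / (m + k) + Z) := by
        rw [hg, hη, hZ]; field_simp; ring
      rw [e]
      have : (1:ℝ)/2 ≤ k / (m + k) := by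
        rw [div_le_div_iff₀ (by norm_num) (by linarith)]; linarith
      linarith
    set E := 200 * (1 + Z) * ρ T with hE
    have hE0 : 0 ≤ E := by positivity
    have f1 : S * (H k - g) ≤ (k * ρ T + E) * (H k - g) :=
      mul_le_mul_of_nonneg_right hSle (by linarith)
    have f2 : E * (H k - g) ≤ E * 1 := mul_le_mul_of_nonneg_left (by linarith) hE0
    have f3 : 440 * (1 + Z) * ρ T ≤ k * g * ρ T := mul_le_mul_of_nonneg_right hgk hfp.le
    have f4 : 0 ≤ Z * ρ T := by positivity
    have f5 : (k:ℝ) * |p k - ρ T| ≤ k * (ρ T * H k) := by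
      have x1 : S * (H k - g) = S * H k - S * g := by ring
      have x2 : (k * ρ T + E) * (H k - g) = k * (ρ T * H k) - k * g * ρ T + E * (H k - g) := by ring
      have x3 : 440 * (1 + Z) * ρ T = 2 * E + 40 * ρ T + 40 * (Z * ρ T) := by rw [hE]; ring
      linarith
    exact le_of_mul_le_mul_left f5 hkp

end DK

set_option maxHeartbeats 2000000 in
theorem stmt9_aux :
    ∀ ε : ℝ, 0 < ε → ∀ A : ℝ, 0 < A → ∃ C : ℝ, 0 < C ∧
      ∀ (F : Type) [Field F] [Fintype F], ∀ n m : ℕ, 1 ≤ m → m ≤ n →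
      (2 + ε) * Real.log n / Real.log (Fintype.card F) ≤ (m : ℝ) →
      Real.sqrt ((n : ℝ) * Real.log n) ≤ A * (m : ℝ) →
      ∀ ρ : ℝ → ℝ, IsDickman ρ → ∀ u : ℝ, u = (n : ℝ) / (m : ℝ) →
      |polyProb F n m / ρ ((n : ℝ) / (m : ℝ) - (n : ℝ) / (2 * (m : ℝ) ^ 2)) - 1| ≤
        C * Real.log (u + 1) / (m : ℝ) := by

  intro ε _ A hA
  have hlog2 : 0 < Real.log 2 := Real.log_pos (by norm_num)
  set B : ℝ := 1760 * (1 + 2 * A^2) with hB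
  have hB0 : 0 < B := by positivity
  set η : ℝ := min (1 / B) (Real.log 2 / 32) with hη
  have hη0 : 0 < η := lt_min (by positivity) (by positivity)
  set n0 : ℝ := (8 * A^2 / η^2)^2 with hn0
  have hn00 : 0 < n0 := by positivity
  refine ⟨B + Real.exp (8 * Real.log (n0 + 1) * n0) / η, by positivity, ?_⟩
  intro F _ _ n m hm hmn _ hsq ρ hρ0 u hu
  obtain ⟨hρ, hcont⟩ := DK.isDickman_max hρ0
  have hm0 : (1:ℝ) ≤ m := by exact_mod_cast hm
  have hmp : (0:ℝ) < m := by linarith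
  have hmn' : (m:ℝ) ≤ n := by exact_mod_cast hmn
  have hnp : (0:ℝ) < n := by linarith
  obtain ⟨c, hc0, hc1, hc2, hrec, hp1, hp0, hple⟩ := FqP.main F m
  set a : ℝ := 1 / m - 1 / (2 * (m:ℝ)^2) with ha
  have ea : (n : ℝ) / (m : ℝ) - (n : ℝ) / (2 * (m : ℝ) ^ 2) = a * n := by rw [ha]; ring
  have ham : a * m = 1 - 1 / (2 * m) := by rw [ha]; field_simp
  have hb1 : 1 / (2 * (m:ℝ)) ≤ 1/2 := by
    apply one_div_le_one_div_of_le (by norm_num); linarith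
  have hb0 : 0 < 1 / (2 * (m:ℝ)) := by positivity
  have ha0 : 0 < a := by
    by_contra hcon
    have : a * m ≤ 0 := mul_nonpos_of_nonpos_of_nonneg (not_lt.1 hcon) hmp.le
    linarith
  have han : 0 ≤ a * n := by positivity
  have hanu : a * n ≤ n / m := by
    have h1 : a ≤ 1 / m := by
      rw [ha]
      have : 0 ≤ 1 / (2 * (m:ℝ)^2) := by positivity
      linarith
    calc a * n ≤ 1 / m * n := by gcongr
      _ = n / m := by ring
  rw [ea]
  have hu1 : 1 ≤ u := by rw [hu, le_div_iff₀ hmp]; linarith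
  set L := Real.log (u + 1) with hL
  have hL0 : 0 < L := Real.log_pos (by linarith)
  set C2 := Real.exp (8 * Real.log (n0 + 1) * n0) with hC2
  have hC20 : 0 < C2 := Real.exp_pos _
  have hρpos : 0 < ρ (a * n) := hρ0.2.1 _ han
  rcases hmn.eq_or_lt with hEq | hlt
  · have e1 : polyProb F n m = 1 := hp1 n hEq.ge
    have e2 : ρ (a * n) = 1 := by
      apply hρ0.2.2.1
      refine ⟨han, ?_⟩
      rw [← hEq, ham]; linarith
    rw [e1, e2]
    simp only [div_one, sub_self, abs_zero]
    positivity
  have hn2 : (2:ℝ) ≤ n := by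
    have : 2 ≤ n := by omega
    exact_mod_cast this
  have hlogn : 0 < Real.log n := Real.log_pos (by linarith)
  have hLn : L ≤ 2 * Real.log n := by
    have : u ≤ n := by rw [hu, div_le_iff₀ hmp]; nlinarith
    have e : 2 * Real.log n = Real.log ((n:ℝ)^2) := by rw [Real.log_pow]; push_cast; ring
    rw [e]
    apply Real.log_le_log (by linarith)
    nlinarith
  have hsq2 : n * Real.log n ≤ A^2 * (m:ℝ)^2 := by
    have := (Real.sqrt_le_iff.1 hsq).2
    rwa [mul_pow] at this
  rcases le_or_gt (L / m) η with hcase | hcase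
  · have huL : n * L / (m:ℝ)^2 ≤ 2 * A^2 := by
      rw [div_le_iff₀ (by positivity)]
      have : n * L ≤ n * (2 * Real.log n) := by gcongr
      linarith
    have hHn : 1760 * (Real.log (1 + n / m) / m + n * L^2 / (m:ℝ)^3) ≤ B * L / m := by
      have e1 : Real.log (1 + n / m) = L := by rw [hL, hu, add_comm]
      rw [e1]
      have e2 : n * L^2 / (m:ℝ)^3 = L / m * (n * L / (m:ℝ)^2) := by field_simp
      rw [e2]
      have : L / m * (n * L / (m:ℝ)^2) ≤ L / m * (2 * A^2) := by gcongr
      have e3 : B * L / m = 1760 * (L / m + L / m * (2 * A^2)) := by rw [hB]; ring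
      rw [e3]; linarith
    have hH1 : B * L / m ≤ 1 := by
      rw [mul_div_assoc]
      calc B * (L / m) ≤ B * (1 / B) := by
            apply mul_le_mul_of_nonneg_left _ hB0.le
            exact hcase.trans (min_le_left _ _)
        _ = 1 := by field_simp
    have hLm : 8 * L / m ≤ Real.log 2 / 4 := by
      have := hcase.trans (min_le_right _ _)
      rw [mul_div_assoc]; linarith
    have := DK.core hρ hcont hm (p := fun k => polyProb F k m) hc0 hc1 hc2 hrec hp1 ha
      (by rw [hL, hu]) (hHn.trans hH1) hLm n le_rfl
    simp only [max_eq_left han] at this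
    have e : polyProb F n m / ρ (a * n) - 1 = (polyProb F n m - ρ (a * n)) / ρ (a * n) := by
      field_simp
    rw [e, abs_div, abs_of_pos hρpos, div_le_iff₀ hρpos]
    refine this.trans ?_
    rw [mul_comm]
    apply mul_le_mul_of_nonneg_right _ hρpos.le
    refine hHn.trans ?_
    have : 0 ≤ C2 / η := by positivity
    gcongr
    linarith
  · -- bounded range
    have hnb : (n:ℝ) ≤ n0 := by
      have h1 : η * m < L := by rwa [lt_div_iff₀ hmp] at hcase
      have h2 : η * m ≤ 2 * Real.log n := by linarith
      have h3 : η^2 * (n * Real.log n) ≤ A^2 * (4 * Real.log n ^2) := by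
        have : (η * m)^2 ≤ (2 * Real.log n)^2 := by gcongr
        calc η^2 * (n * Real.log n) ≤ η^2 * (A^2 * (m:ℝ)^2) := by gcongr
          _ = A^2 * (η * m)^2 := by ring
          _ ≤ A^2 * (2 * Real.log n)^2 := by gcongr
          _ = _ := by ring
      have h4 : η^2 * n ≤ A^2 * 4 * Real.log n := by
        refine le_of_mul_le_mul_right ?_ hlogn
        linarith
      have hs0 : 0 < Real.sqrt n := Real.sqrt_pos.2 hnp
      have h5 : Real.log n ≤ 2 * Real.sqrt n := by
        have := Real.log_le_sub_one_of_pos hs0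
        rw [Real.log_sqrt hnp.le] at this
        linarith
      have hss : Real.sqrt n * Real.sqrt n = n := Real.mul_self_sqrt hnp.le
      have h6 : η^2 * Real.sqrt n ≤ 8 * A^2 := by
        refine le_of_mul_le_mul_right ?_ hs0
        have : A^2 * 4 * Real.log n ≤ A^2 * 4 * (2 * Real.sqrt n) := by gcongr
        rw [mul_assoc, hss]
        linarith
      have h7 : Real.sqrt n ≤ 8 * A^2 / η^2 := by
        rw [le_div_iff₀ (by positivity)]; linarith
      rw [hn0, ← Real.sq_sqrt hnp.le]
      gcongr
    have hun : a * n ≤ n0 := by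
      refine hanu.trans (le_trans ?_ hnb)
      rw [div_le_iff₀ hmp]; nlinarith
    have hlow := DK.exp_bound hρ hcont (a := 0) (b := a * n) (L := Real.log (n0 + 1))
      (Real.log_le_log (by linarith) (by linarith)) le_rfl han
    simp only [max_eq_left han, max_self] at hlow
    rw [hρ0.2.2.1 0 ⟨le_rfl, by norm_num⟩] at hlow
    have hlow2 : 1 ≤ ρ (a * n) * C2 := by
      refine hlow.trans ?_
      rw [hC2]
      have : 0 ≤ Real.log (n0 + 1) := Real.log_nonneg (by linarith)
      gcongr
      linarith
    have hle1 : ρ (a * n) ≤ 1 := by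
      have := DK.anti hρ0 le_rfl han
      rwa [hρ0.2.2.1 0 ⟨le_rfl, by norm_num⟩] at this
    have hinv : 1 / ρ (a * n) ≤ C2 := by
      rw [div_le_iff₀ hρpos]; linarith
    have hinv1 : 1 ≤ 1 / ρ (a * n) := by rw [le_div_iff₀ hρpos]; linarith
    have hq1 : polyProb F n m / ρ (a * n) ≤ 1 / ρ (a * n) := by
      gcongr; exact hple n
    have hq0 : 0 ≤ polyProb F n m / ρ (a * n) := div_nonneg (hp0 n) hρpos.le
    have : |polyProb F n m / ρ (a * n) - 1| ≤ C2 := by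
      rw [abs_le]; constructor <;> linarith
    refine this.trans ?_
    rw [mul_div_assoc]
    calc C2 = C2 / η * η := by field_simp
      _ ≤ C2 / η * (L / m) := by gcongr
      _ ≤ (B + C2 / η) * (L / m) := by gcongr; linarith

/-- For every `ε > 0` and `A > 0` there exists `C > 0` such that for every
prime power `q` (the cardinality of a finite field `F`) and all `n ≥ m ≥ 1` with
`m ≥ (2+ε)·log_q n` and `√(n·log n) ≤ A·m`, writing `u = n/m`, one has
`|p_{n,m,q}/ρ(n/m − n/(2m²)) − 1| ≤ C·log(u+1)/m`. -/
theorem stmt9 :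
    ∀ ε : ℝ, 0 < ε → ∀ A : ℝ, 0 < A → ∃ C : ℝ, 0 < C ∧
      ∀ (F : Type) [Field F] [Fintype F], ∀ n m : ℕ, 1 ≤ m → m ≤ n →
      (2 + ε) * Real.log n / Real.log (Fintype.card F) ≤ (m : ℝ) →
      Real.sqrt ((n : ℝ) * Real.log n) ≤ A * (m : ℝ) →
      ∀ ρ : ℝ → ℝ, IsDickman ρ → ∀ u : ℝ, u = (n : ℝ) / (m : ℝ) →
      |polyProb F n m / ρ ((n : ℝ) / (m : ℝ) - (n : ℝ) / (2 * (m : ℝ) ^ 2)) - 1| ≤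
        C * Real.log (u + 1) / (m : ℝ) := by
  
  exact stmt9_aux
end
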